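/- arXiv:0809.1262 — 2 statements merged into one kernel-verified Lean document; each statement's English description precedes it below -/
import Mathlib

section
/- Let λ₀ be a non-trivial d-invariant rational lamination whose support is contained in the m_d-grand orbit of a finite set. Then λ₀ is not primitive: there exist distinct infinite λ₀-unlinked classes L ≠ L' and a λ₀-class A such that A intersects both closure(L) and closure(L'). -/
noncomputable section
open Set Function

/-- The circle `ℝ/ℤ`. -/
abbrev Circle1 := AddCircle (1 : ℝ)

/-- Multiplication by `d` on the circle. -/
def md (d : ℕ) (x : Circle1) : Circle1 := d • x

/-- The rational angles `ℚ/ℤ ⊆ ℝ/ℤ`. -/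
def ratC : Set Circle1 := {x | ∃ q : ℚ, x = ((q : ℝ) : Circle1)}

/-- `A` and `B` are unlinked: `B` is contained in a single connected
component of the complement of `A`. -/
def Unlinked (A B : Set Circle1) : Prop :=
  ∃ x ∈ Aᶜ, B ⊆ connectedComponentIn Aᶜ x

/-- `C` is a connected component of `S`. -/
def IsCompOf (C S : Set Circle1) : Prop :=
  ∃ x ∈ S, C = connectedComponentIn S x

/-- The class of `x` under a relation `r`. -/
def relClass (r : Circle1 → Circle1 → Prop) (x : Circle1) : Set Circle1 := {y | r x y}

/-- A rational lamination: a closed equivalence relation on `ℚ/ℤ` with finite,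
pairwise unlinked classes. -/
structure RatLam where
  rel : Circle1 → Circle1 → Prop
  rel_rat : ∀ x y, rel x y → x ∈ ratC ∧ y ∈ ratC
  refl : ∀ x ∈ ratC, rel x x
  symm : ∀ x y, rel x y → rel y x
  trans : ∀ x y z, rel x y → rel y z → rel x z
  closed' : ∀ x ∈ ratC, ∀ y ∈ ratC,
    (x, y) ∈ closure {p : Circle1 × Circle1 | rel p.1 p.2} → rel x y
  finiteClass : ∀ x, (relClass rel x).Finite
  unlinkedClass : ∀ x y, ¬ rel x y → Unlinked (relClass rel x) (relClass rel y)

/-- `m_d` maps `A` onto `B` in a consecutive-preserving way: the image of `A` is `B`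
and the connected components of the complement of `A` are sent to components of the
complement of `B` endpoint-wise. -/
def ConsecutiveImage (d : ℕ) (A B : Set Circle1) : Prop :=
  md d '' A = B ∧
    ∀ C, IsCompOf C Aᶜ → ∃ C', IsCompOf C' Bᶜ ∧ frontier C' = md d '' frontier C

/-- A `d`-invariant rational lamination. -/
structure InvRatLam (d : ℕ) extends RatLam where
  invariant : ∀ x ∈ ratC,
    ConsecutiveImage d (relClass rel x) (relClass rel (md d x))

/-- `m_d : A → m_d(A)` is `δ`-to-one. -/
def classDeg (d : ℕ) (A : Set Circle1) (δ : ℕ) : Prop :=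
  ∀ y ∈ md d '' A, Set.ncard {x | x ∈ A ∧ md d x = y} = δ

/-- The `λ`-unlinked relation on irrational angles: `θ ~ θ'` iff they lie in the same
connected component of the complement of every `λ`-class. -/
def UnlRel (r : Circle1 → Circle1 → Prop) (θ θ' : Circle1) : Prop :=
  θ ∉ ratC ∧ θ' ∉ ratC ∧
    (θ = θ' ∨ ∀ x ∈ ratC, θ' ∈ connectedComponentIn (relClass r x)ᶜ θ)

/-- `L` is a `λ`-unlinked class. -/
def IsUnlClass (r : Circle1 → Circle1 → Prop) (L : Set Circle1) : Prop :=
  ∃ θ, θ ∉ ratC ∧ L = {θ' | UnlRel r θ θ'}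

/-- The support of a relation: union of its nontrivial classes. -/
def suppRel (r : Circle1 → Circle1 → Prop) : Set Circle1 := {x | ∃ y, r x y ∧ y ≠ x}

/-- The `m_d`-grand orbit of a set `F`. -/
def grandOrbit (d : ℕ) (F : Set Circle1) : Set Circle1 :=
  {x | ∃ n m : ℕ, (md d)^[n] x ∈ (md d)^[m] '' F}

/-- A lamination (given by the relation `r`) is primitive if no `λ`-class meets the
closures of two distinct infinite `λ`-unlinked classes. -/
def PrimitiveLam (d : ℕ) (r : Circle1 → Circle1 → Prop) : Prop :=
  ¬ ∃ (L L' : Set Circle1) (x : Circle1),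
      IsUnlClass r L ∧ L.Infinite ∧ IsUnlClass r L' ∧ L'.Infinite ∧ L ≠ L' ∧
      x ∈ ratC ∧ (relClass r x ∩ closure L).Nonempty ∧
      (relClass r x ∩ closure L').Nonempty

/-- Rational real numbers. -/
def Rt (x : ℝ) : Prop := ∃ q : ℚ, (q : ℝ) = x

/-- Lifted properties of an invariant rational lamination. -/
structure RL (d : ℕ) (r : ℝ → ℝ → Prop) : Prop where
  rat : ∀ x y, r x y → Rt x ∧ Rt y
  refl : ∀ x, Rt x → r x x
  symm : ∀ x y, r x y → r y x
  trans : ∀ x y z, r x y → r y z → r x z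
  shift : ∀ x y (n : ℤ), r x y → r x (y + n)
  closed : ∀ x y, Rt x → Rt y →
    (∀ ε > 0, ∃ x' y', |x' - x| < ε ∧ |y' - y| < ε ∧ r x' y') → r x y
  fin : ∀ z a b, {w | a ≤ w ∧ w ≤ b ∧ r z w}.Finite
  cross : ∀ a x b y, a < x → x < b → b < y → y < a + 1 → r a b → r x y → r a x
  fwd : ∀ x y, r x y → r (d * x) (d * y)
  lift : ∀ x z, r (d * x) z → ∃ (y : ℝ) (n : ℤ), r x y ∧ d * y = z + n

theorem Rt.mul {x y : ℝ} (hx : Rt x) (hy : Rt y) : Rt (x * y) := by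
  obtain ⟨p, rfl⟩ := hx; obtain ⟨q, rfl⟩ := hy; exact ⟨p * q, by push_cast; rfl⟩
theorem Rt.add {x y : ℝ} (hx : Rt x) (hy : Rt y) : Rt (x + y) := by
  obtain ⟨p, rfl⟩ := hx; obtain ⟨q, rfl⟩ := hy; exact ⟨p + q, by push_cast; rfl⟩
theorem Rt.sub {x y : ℝ} (hx : Rt x) (hy : Rt y) : Rt (x - y) := by
  obtain ⟨p, rfl⟩ := hx; obtain ⟨q, rfl⟩ := hy; exact ⟨p - q, by push_cast; rfl⟩
theorem Rt.neg {x : ℝ} (hx : Rt x) : Rt (-x) := by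
  obtain ⟨p, rfl⟩ := hx; exact ⟨-p, by push_cast; rfl⟩
theorem Rt.div {x y : ℝ} (hx : Rt x) (hy : Rt y) : Rt (x / y) := by
  obtain ⟨p, rfl⟩ := hx; obtain ⟨q, rfl⟩ := hy; exact ⟨p / q, by push_cast; rfl⟩
theorem Rt.int (n : ℤ) : Rt n := ⟨n, by simp⟩
theorem Rt.nat (n : ℕ) : Rt n := ⟨n, by simp⟩

theorem Rt.of_mul {m x : ℝ} (hm : Rt m) (h0 : m ≠ 0) (h : Rt (m * x)) : Rt x := by
  have := h.div hm
  rwa [mul_div_cancel_left₀ _ h0] at this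

namespace RL
variable {d : ℕ} {r : ℝ → ℝ → Prop}

theorem shl (H : RL d r) {x y : ℝ} (n : ℤ) (h : r x y) : r (x + n) y :=
  H.symm _ _ (H.shift _ _ n (H.symm _ _ h))

theorem pow (H : RL d r) (k : ℕ) : RL (d ^ k) r := by
  refine { H with fwd := ?_, lift := ?_ }
  · induction k with
    | zero => simp
    | succ k ih =>
      intro x y h
      have := H.fwd _ _ (ih x y h)
      have e : ∀ z : ℝ, ((d ^ (k + 1) : ℕ) : ℝ) * z = d * ((d ^ k : ℕ) * z) := by
        intro z; push_cast; ring
      rw [e, e]; exact this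
  · induction k with
    | zero => intro x z h; exact ⟨z, 0, by simpa using h, by simp⟩
    | succ k ih =>
      intro x z h
      have e : ∀ z : ℝ, ((d ^ (k + 1) : ℕ) : ℝ) * z = d * ((d ^ k : ℕ) * z) := by
        intro z; push_cast; ring
      rw [e] at h
      obtain ⟨y1, n1, h1, e1⟩ := H.lift _ _ h
      obtain ⟨y, n, h2, e2⟩ := ih _ _ h1
      refine ⟨y, n1 + d * n, h2, ?_⟩
      rw [e, e2, mul_add, e1]; push_cast; ring

theorem neg (H : RL d r) : RL d (fun x y => r (-x) (-y)) where
  rat x y h := ⟨by simpa using (H.rat _ _ h).1.neg, by simpa using (H.rat _ _ h).2.neg⟩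
  refl x h := H.refl _ h.neg
  symm x y h := H.symm _ _ h
  trans x y z h h' := H.trans _ _ _ h h'
  shift x y n h := by
    have := H.shift _ _ (-n) h
    have e : -y + ((-n : ℤ) : ℝ) = -(y + n) := by push_cast; ring
    rwa [e] at this
  closed x y hx hy h := by
    refine H.closed _ _ hx.neg hy.neg fun ε hε => ?_
    obtain ⟨x', y', h1, h2, h3⟩ := h ε hε
    refine ⟨-x', -y', ?_, ?_, h3⟩
    · rw [abs_lt] at *; constructor <;> linarith
    · rw [abs_lt] at *; constructor <;> linarith
  fin z a b := by
    refine ((H.fin (-z) (-b) (-a)).image (fun w => -w)).subset ?_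
    rintro w ⟨h1, h2, h3⟩
    exact ⟨-w, ⟨by linarith, by linarith, h3⟩, by simp⟩
  cross a x b y h1 h2 h3 h4 h5 h6 := by
    -- order : -y < -b < -x < -a
    have := H.cross (-y) (-b) (-x) (-a) (by linarith) (by linarith) (by linarith) (by linarith)
      (H.symm _ _ h6) (H.symm _ _ h5)
    exact H.trans _ _ _ h5 (H.trans _ _ _ (H.symm _ _ this) (H.symm _ _ h6))
  fwd x y h := by
    have := H.fwd _ _ h
    simpa using this
  lift x z h := by
    have h' : r (d * (-x)) (-z) := by simpa using h
    obtain ⟨y, n, h1, h2⟩ := H.lift _ _ h'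
    exact ⟨-y, -n, by simpa using h1, by push_cast; linarith⟩

theorem free (H : RL d r) (z x : ℝ) : ∃ δ > 0, ∀ w, x < w → w < x + δ → ¬ r z w := by
  have hf := (H.fin z x (x + 1)).subset
    (show {w | (x ≤ w ∧ w ≤ x + 1 ∧ r z w) ∧ w ≠ x} ⊆ _ from fun w h => h.1)
  have ho := hf.isClosed.isOpen_compl
  have hx : x ∈ {w | (x ≤ w ∧ w ≤ x + 1 ∧ r z w) ∧ w ≠ x}ᶜ := by simp
  obtain ⟨δ, hδ, hb⟩ := Metric.isOpen_iff.1 ho x hx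
  refine ⟨min δ 1, by positivity, fun w h1 h2 h3 => ?_⟩
  have h4 := min_le_left δ 1
  have h5 := min_le_right δ 1
  have : w ∈ Metric.ball x δ := by
    rw [Metric.mem_ball, Real.dist_eq, abs_lt]; constructor <;> linarith
  exact hb this ⟨⟨h1.le, by linarith, h3⟩, h1.ne'⟩

theorem free' (H : RL d r) (z x : ℝ) : ∃ δ > 0, ∀ w, x - δ < w → w < x → ¬ r z w := by
  obtain ⟨δ, h, h'⟩ := H.neg.free (-z) (-x)
  exact ⟨δ, h, fun w h1 h2 h3 => h' (-w) (by linarith) (by linarith) (by simpa using h3)⟩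

/-- strict one-sided limit leaf -/
def Lim (r : ℝ → ℝ → Prop) (x Y : ℝ) : Prop :=
  ∀ ε > 0, ∃ s t, 0 < s ∧ s < ε ∧ 0 < t ∧ t < ε ∧ r (x + s) (Y - t)

theorem Lim.shift (H : RL d r) {x Y : ℝ} (h : Lim r x Y) (n m : ℤ) : Lim r (x + n) (Y + m) := by
  intro ε hε
  obtain ⟨s, t, h1, h2, h3, h4, h5⟩ := h ε hε
  refine ⟨s, t, h1, h2, h3, h4, ?_⟩
  have := H.shl n (H.shift _ _ m h5)
  convert this using 1 <;> ring

theorem Lim.fwd (H : RL d r) (hd : 1 ≤ d) {x Y : ℝ} (h : Lim r x Y) : Lim r (d * x) (d * Y) := by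
  intro ε hε
  have hd' : (0 : ℝ) < d := by exact_mod_cast hd
  obtain ⟨s, t, h1, h2, h3, h4, h5⟩ := h (ε / d) (by positivity)
  rw [lt_div_iff₀ hd'] at h2 h4
  refine ⟨d * s, d * t, by positivity, by linarith, by positivity, by linarith, ?_⟩
  have := H.fwd _ _ h5
  convert this using 1 <;> ring

theorem Lim.uniq (H : RL d r) {x Y1 Y2 : ℝ} (h1 : Lim r x Y1) (h2 : Lim r x Y2)
    (a1 : x < Y1) (a2 : Y1 < Y2) (a3 : Y2 < x + 1) : False := by
  obtain ⟨s, t, s0, s1, t0, t1, hst⟩ := h2 (min (Y1 - x) (Y2 - Y1)) (by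
    apply lt_min <;> linarith)
  have s2 := s1.trans_le (min_le_left _ _)
  have t2 := t1.trans_le (min_le_right _ _)
  obtain ⟨δ, δ0, hδ⟩ := H.free (x + s) x
  obtain ⟨u, v, u0, u1, v0, v1, huv⟩ := h1 (min δ (min s (Y1 - x - s))) (by
    refine lt_min δ0 (lt_min s0 ?_); linarith)
  rw [lt_min_iff, lt_min_iff] at u1 v1
  refine hδ (x + u) (by linarith) (by linarith) (H.symm _ _ ?_)
  exact H.cross (x + u) (x + s) (Y1 - v) (Y2 - t) (by linarith) (by linarith) (by linarith)
    (by linarith) huv hst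

/-- every rational is preperiodic -/
theorem preper (d : ℕ) {x : ℝ} (hx : Rt x) :
    ∃ K N : ℕ, 1 ≤ N ∧ ∃ n : ℤ, (d : ℝ) ^ (K + N) * x = (d : ℝ) ^ K * x + n := by
  obtain ⟨q, rfl⟩ := hx
  have hden : (q.den : ℤ) ≠ 0 := by exact_mod_cast q.den_nz
  haveI : NeZero q.den := ⟨q.den_nz⟩
  obtain ⟨i, j, hij, he⟩ := Finite.exists_ne_map_eq_of_infinite
    (fun k : ℕ => ((d : ZMod q.den) ^ k))
  have key : ∀ i j : ℕ, i < j → ((d : ZMod q.den) ^ i) = ((d : ZMod q.den) ^ j) →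
      ∃ K N : ℕ, 1 ≤ N ∧ ∃ n : ℤ, (d : ℝ) ^ (K + N) * q = (d : ℝ) ^ K * q + n := by
    intro i j hij he
    refine ⟨i, j - i, by omega, ?_⟩
    have : i + (j - i) = j := by omega
    rw [this]
    have h2 : (((d : ℤ) ^ i : ℤ) : ZMod q.den) = (((d : ℤ) ^ j : ℤ) : ZMod q.den) := by
      push_cast; exact he
    rw [ZMod.intCast_eq_intCast_iff_dvd_sub] at h2
    obtain ⟨c, hc⟩ := h2
    refine ⟨c * q.num, ?_⟩
    have hc' : (d : ℝ) ^ j - (d : ℝ) ^ i = q.den * c := by exact_mod_cast hc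
    have hq : (q : ℝ) * q.den = q.num := by exact_mod_cast q.mul_den_eq_num
    push_cast
    rw [← hq]
    linear_combination (q : ℝ) * hc'
  rcases lt_or_gt_of_ne hij with h | h
  · exact key i j h he
  · exact key j i h he.symm

theorem norm_rep (x Y : ℝ) : ∃ n : ℤ, x < Y + n ∧ Y + n ≤ x + 1 := by
  refine ⟨⌊x - Y⌋ + 1, ?_, ?_⟩
  · have := Int.lt_floor_add_one (x - Y); push_cast; linarith
  · have := Int.floor_le (x - Y); push_cast; linarith

theorem Lim.rat (H : RL d r) (hd : 2 ≤ d) {x Y : ℝ} (hx : Rt x) (h : Lim r x Y) : Rt Y := by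
  obtain ⟨K, N, hN, n, hn⟩ := preper d hx
  have hd0 : (d : ℝ) ≠ 0 := by positivity
  have h1 : Lim r ((d : ℝ) ^ K * x) ((d : ℝ) ^ K * Y) := by
    have := Lim.fwd (H.pow K) (Nat.one_le_pow _ _ (by omega)) h
    push_cast at this; exact this
  have h2 : Lim r ((d : ℝ) ^ K * x) ((d : ℝ) ^ (K + N) * Y) := by
    have := Lim.fwd (H.pow (K + N)) (Nat.one_le_pow _ _ (by omega)) h
    push_cast at this
    rw [hn] at this
    have := Lim.shift H this (-n) 0
    convert this using 1 <;> push_cast <;> ring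
  have hdR : Rt ((d : ℝ)) := Rt.nat d
  have hpow : ∀ k : ℕ, Rt ((d : ℝ) ^ k) := fun k => by
    have := Rt.nat (d ^ k); push_cast at this; exact this
  set X := (d : ℝ) ^ K * x with hX
  have hXr : Rt X := (hpow K).mul hx
  obtain ⟨n1, a1, b1⟩ := norm_rep X ((d : ℝ) ^ K * Y)
  obtain ⟨n2, a2, b2⟩ := norm_rep X ((d : ℝ) ^ (K + N) * Y)
  have h1' := Lim.shift H h1 0 n1
  have h2' := Lim.shift H h2 0 n2
  simp only [Int.cast_zero, add_zero] at h1' h2'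
  have fin1 : ∀ (k : ℕ) (m : ℤ), Rt ((d : ℝ) ^ k * Y + m) → Rt Y := by
    intro k m hh
    refine Rt.of_mul (hpow k) (by positivity) ?_
    have := hh.sub (Rt.int m); simpa using this
  have hX1 : Rt (X + 1) := by have := hXr.add (Rt.int 1); simpa using this
  rcases b1.eq_or_lt with e1 | b1
  · exact fin1 K n1 (by rw [e1]; exact hX1)
  rcases b2.eq_or_lt with e2 | b2
  · exact fin1 (K + N) n2 (by rw [e2]; exact hX1)
  rcases lt_trichotomy ((d : ℝ) ^ K * Y + n1) ((d : ℝ) ^ (K + N) * Y + n2) with hh | hh | hh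
  · exact (Lim.uniq H h1' h2' a1 hh b2).elim
  · have e : ((d : ℝ) ^ (K + N) - (d : ℝ) ^ K) * Y = ((n1 - n2 : ℤ) : ℝ) := by
      push_cast; linarith
    refine Rt.of_mul ((hpow (K + N)).sub (hpow K)) ?_ (by rw [e]; exact Rt.int _)
    have : (d : ℝ) ^ K < (d : ℝ) ^ (K + N) := by
      apply pow_lt_pow_right₀
      · exact_mod_cast hd
      · omega
    linarith
  · exact (Lim.uniq H h2' h1' a2 hh b1).elim

/-- nonstrict version -/
theorem lim_le_rat (H : RL d r) (hd : 2 ≤ d) {x Y : ℝ} (hx : Rt x)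
    (h : ∀ ε > 0, ∃ x' y', x ≤ x' ∧ x' < x + ε ∧ Y - ε < y' ∧ y' ≤ Y ∧ r x' y') :
    r x Y := by
  have hY : Rt Y := by
    by_contra hY
    refine hY (Lim.rat H hd hx ?_)
    intro ε hε
    obtain ⟨δ, δ0, hδ⟩ := H.free' x Y
    obtain ⟨x', y', h1, h2, h3, h4, h5⟩ := h (min ε δ) (lt_min hε δ0)
    have m1 := min_le_left ε δ
    have m2 := min_le_right ε δ
    have hy' : y' < Y := by
      rcases h4.lt_or_eq with h | h
      · exact h
      · exact (hY (h ▸ (H.rat _ _ h5).2)).elim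
    have hx' : x < x' := by
      rcases h1.lt_or_eq with h | h
      · exact h
      · exact (hδ y' (by linarith) hy' (h ▸ h5)).elim
    exact ⟨x' - x, Y - y', by linarith, by linarith, by linarith, by linarith, by
      simpa using h5⟩
  refine H.closed _ _ hx hY fun ε hε => ?_
  obtain ⟨x', y', h1, h2, h3, h4, h5⟩ := h ε hε
  exact ⟨x', y', by rw [abs_lt]; constructor <;> linarith,
    by rw [abs_lt]; constructor <;> linarith, h5⟩

end RL
namespace RL
variable {d : ℕ} {r : ℝ → ℝ → Prop}

def Enc (r : ℝ → ℝ → Prop) (a b θ : ℝ) : Prop := ∃ x y, a < x ∧ x < θ ∧ θ < y ∧ y < b ∧ r x y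

theorem isOpen_enc (a b : ℝ) : IsOpen {θ | Enc r a b θ} := by
  rw [isOpen_iff_forall_mem_open]
  rintro θ ⟨x, y, h1, h2, h3, h4, h5⟩
  exact ⟨Ioo x y, fun w hw => ⟨x, y, h1, hw.1, hw.2, h4, h5⟩, isOpen_Ioo, ⟨h2, h3⟩⟩

theorem union (H : RL d r) {a b : ℝ} (hab : b ≤ a + 1) {x y x' y' θ : ℝ}
    (h1 : a < x) (h2 : x < θ) (h3 : θ < y) (h4 : y < b) (h5 : r x y)
    (h1' : a < x') (h2' : x' < θ) (h3' : θ < y') (h4' : y' < b) (h5' : r x' y') :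
    r (min x x') (max y y') := by
  rcases lt_trichotomy x x' with h | h | h
  · rw [min_eq_left h.le]
    rcases le_total y' y with g | g
    · rwa [max_eq_left g]
    · rw [max_eq_right g]
      rcases g.eq_or_lt with g | g
      · rwa [← g]
      · exact H.trans _ _ _ (H.cross x x' y y' h (by linarith) g (by linarith) h5 h5') h5'
  · subst h
    rw [min_self]
    rcases max_choice y y' with g | g <;> rw [g] <;> assumption
  · rw [min_eq_right h.le]
    rcases le_total y y' with g | g
    · rwa [max_eq_right g]
    · rw [max_eq_left g]
      rcases g.eq_or_lt with g | g
      · rwa [← g]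
      · exact H.trans _ _ _ (H.cross x' x y' y h (by linarith) g (by linarith) h5' h5) h5

theorem enc_conn (H : RL d r) {a b : ℝ} (hab : b ≤ a + 1) {u v θ1 θ2 : ℝ}
    (hO : ∀ θ, u < θ → θ < v → Enc r a b θ) (h1 : θ1 ∈ Ioo u v) (h2 : θ2 ∈ Ioo u v) :
    ∃ x y, a < x ∧ x < θ1 ∧ x < θ2 ∧ θ1 < y ∧ θ2 < y ∧ y < b ∧ r x y := by
  refine (isPreconnected_Ioo (a := u) (b := v)).induction₂
    (fun θ1 θ2 => ∃ x y, a < x ∧ x < θ1 ∧ x < θ2 ∧ θ1 < y ∧ θ2 < y ∧ y < b ∧ r x y)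
    ?_ ?_ ?_ h1 h2
  · intro θ hθ
    obtain ⟨x, y, h1, h2, h3, h4, h5⟩ := hO θ hθ.1 hθ.2
    refine mem_nhdsWithin_of_mem_nhds ?_
    filter_upwards [Ioo_mem_nhds h2 h3] with w hw
    exact ⟨x, y, h1, h2, hw.1, h3, hw.2, h4, h5⟩
  · rintro p q s - - - ⟨x, y, h1, h2, h3, h4, h5, h6, h7⟩ ⟨x', y', h1', h2', h3', h4', h5', h6', h7'⟩
    refine ⟨min x x', max y y', lt_min h1 h1', ?_, ?_, ?_, ?_, max_lt h6 h6', ?_⟩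
    · exact (min_le_left _ _).trans_lt h2
    · exact (min_le_right _ _).trans_lt h3'
    · exact h4.trans_le (le_max_left _ _)
    · exact h5'.trans_le (le_max_right _ _)
    · exact H.union hab h1 h3 h5 h6 h7 h1' h2' h4' h6' h7'
  · rintro p q - - ⟨x, y, h1, h2, h3, h4, h5, h6, h7⟩
    exact ⟨x, y, h1, h3, h2, h5, h4, h6, h7⟩

theorem comp_right (H : RL d r) {a b x δ : ℝ} (hab : b ≤ a + 1) (hax : a ≤ x) (hxb : x < b)
    (hx : ¬ Enc r a b x) (hδ : 0 < δ) (hO : ∀ θ, x < θ → θ < x + δ → Enc r a b θ) :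
    ∃ Y, x < Y ∧ Y ≤ b ∧ ∀ ε > 0, ∃ x' y', a < x' ∧ y' < b ∧ x ≤ x' ∧ x' < x + ε ∧
      Y - ε < y' ∧ y' ≤ Y ∧ r x' y' := by
  have hb : ¬ Enc r a b b := by rintro ⟨_, _, _, _, h, h', _⟩; linarith
  set S := {θ | x < θ ∧ ¬ Enc r a b θ} with hS
  have hSl : ∀ θ ∈ S, x + δ ≤ θ := by
    intro θ hθ; by_contra h; push Not at h; exact hθ.2 (hO θ hθ.1 h)
  have hSe : S = Ici (x + δ) ∩ {θ | Enc r a b θ}ᶜ := by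
    ext θ; constructor
    · intro h; exact ⟨hSl θ h, h.2⟩
    · rintro ⟨h1, h2⟩; exact ⟨lt_of_lt_of_le (by linarith) h1, h2⟩
  have hSc : IsClosed S := by
    rw [hSe]; exact isClosed_Ici.inter (isOpen_enc a b).isClosed_compl
  have hbS : b ∈ S := ⟨hxb, hb⟩
  have hbd : BddBelow S := ⟨x + δ, fun θ h => hSl θ h⟩
  have hY := hSc.csInf_mem ⟨b, hbS⟩ hbd
  set Y := sInf S with hYdef
  have hYb : Y ≤ b := csInf_le hbd hbS
  have hin : ∀ θ, x < θ → θ < Y → Enc r a b θ := by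
    intro θ h1 h2; by_contra h
    exact absurd (csInf_le hbd (show θ ∈ S from ⟨h1, h⟩)) (not_le.2 h2)
  refine ⟨Y, hY.1, hYb, fun ε hε => ?_⟩
  set η := min (ε / 2) ((Y - x) / 2) with hη
  have hη0 : 0 < η := lt_min (by linarith) (by linarith [hY.1])
  have e1 : η ≤ ε / 2 := min_le_left _ _
  have e2 : η ≤ (Y - x) / 2 := min_le_right _ _
  have hYx := hY.1
  obtain ⟨x', y', g1, g2, g3, g4, g5, g6, g7⟩ := H.enc_conn hab hin
    (θ1 := x + η) (θ2 := Y - η) ⟨by linarith, by linarith⟩ ⟨by linarith, by linarith⟩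
  refine ⟨x', y', g1, g6, ?_, by linarith, by linarith, ?_, g7⟩
  · by_contra h; push Not at h
    exact hx ⟨x', y', g1, h, by linarith, g6, g7⟩
  · by_contra h; push Not at h
    exact hY.2 ⟨x', y', g1, by linarith, h, g6, g7⟩

theorem right_leaf (H : RL d r) (hd : 2 ≤ d) {a b x δ : ℝ} (hab : b ≤ a + 1) (hax : a ≤ x)
    (hxb : x < b) (hxr : Rt x)
    (hx : ¬ Enc r a b x) (hδ : 0 < δ) (hO : ∀ θ, x < θ → θ < x + δ → Enc r a b θ) :
    ∃ Y, x < Y ∧ Y ≤ b ∧ r x Y := by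
  obtain ⟨Y, h1, h2, h3⟩ := H.comp_right hab hax hxb hx hδ hO
  refine ⟨Y, h1, h2, H.lim_le_rat hd hxr fun ε hε => ?_⟩
  obtain ⟨x', y', -, -, h⟩ := h3 ε hε
  exact ⟨x', y', h⟩

theorem enc_neg (H : RL d r) {a b θ : ℝ} :
    Enc (fun x y => r (-x) (-y)) (-b) (-a) θ ↔ Enc r a b (-θ) := by
  constructor
  · rintro ⟨x, y, h1, h2, h3, h4, h5⟩
    exact ⟨-y, -x, by linarith, by linarith, by linarith, by linarith, H.symm _ _ h5⟩
  · rintro ⟨x, y, h1, h2, h3, h4, h5⟩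
    exact ⟨-y, -x, by linarith, by linarith, by linarith, by linarith, by
      simpa using H.symm _ _ h5⟩

theorem left_leaf (H : RL d r) (hd : 2 ≤ d) {a b x δ : ℝ} (hab : b ≤ a + 1) (hax : a < x)
    (hxb : x ≤ b) (hxr : Rt x)
    (hx : ¬ Enc r a b x) (hδ : 0 < δ) (hO : ∀ θ, x - δ < θ → θ < x → Enc r a b θ) :
    ∃ W, a ≤ W ∧ W < x ∧ r W x := by
  obtain ⟨Y, h1, h2, h3⟩ := H.neg.right_leaf hd (a := -b) (b := -a) (x := -x) (δ := δ)
    (by linarith) (by linarith) (by linarith) hxr.neg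
    (by rw [H.enc_neg]; simpa using hx) hδ
    (fun θ h1 h2 => by rw [H.enc_neg]; exact hO _ (by linarith) (by linarith))
  exact ⟨-Y, by linarith, by linarith, H.symm _ _ (by simpa using h3)⟩

theorem gap (H : RL d r) (hd : 2 ≤ d) {a b : ℝ} (hlt : a < b) (hab : b ≤ a + 1) (hr : r a b)
    (hfree : ∀ w, a < w → w < b → ¬ r a w) (hacc : ¬ Lim r a b) {ε : ℝ} (hε : 0 < ε) :
    ∃ θ, a < θ ∧ θ < a + ε ∧ θ < b ∧ ¬ Rt θ ∧ ¬ Enc r a b θ := by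
  by_contra hcon
  push Not at hcon
  set c := min (a + ε) b with hc
  have hac : a < c := lt_min (by linarith) hlt
  have hcb : c ≤ b := min_le_right _ _
  have hcr : ∀ θ, a < θ → θ < c → ¬ Enc r a b θ → Rt θ := by
    intro θ h1 h2 h3
    by_contra h4
    exact h3 (hcon θ h1 (h2.trans_le (min_le_left _ _)) (h2.trans_le hcb) h4)
  have har := (H.rat _ _ hr).1
  have haE : ¬ Enc r a b a := by rintro ⟨x, y, h1, h2, _⟩; linarith
  -- `a` is not isolated
  have hA : ∀ δ > 0, ∃ θ, a < θ ∧ θ < a + δ ∧ ¬ Enc r a b θ := by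
    intro δ hδ
    by_contra h
    push Not at h
    obtain ⟨Y, h1, h2, h3⟩ := H.comp_right hab le_rfl hlt haE hδ h
    rcases h2.eq_or_lt with e | h2
    · subst e
      refine hacc fun ε hε => ?_
      obtain ⟨x', y', g1, g2, g3, g4, g5, g6, g7⟩ := h3 ε hε
      exact ⟨x' - a, Y - y', by linarith, by linarith, by linarith, by linarith, by simpa using g7⟩
    · refine hfree Y h1 h2 (H.lim_le_rat hd har fun ε hε => ?_)
      obtain ⟨x', y', -, -, h⟩ := h3 ε hε
      exact ⟨x', y', h⟩
  -- rational points of the complement are not isolated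
  have hP : Preperfect (Ioo a c ∩ {θ | ¬ Enc r a b θ}) := by
    rw [preperfect_iff_nhds]
    rintro x ⟨⟨hx1, hx2⟩, hx3⟩ U hU
    have hxr := hcr x hx1 hx2 hx3
    by_contra hno
    push Not at hno
    obtain ⟨δ0, hδ0, hball⟩ := Metric.mem_nhds_iff.1 (Filter.inter_mem hU (Ioo_mem_nhds hx1 hx2))
    have hall : ∀ θ, x - δ0 < θ → θ < x + δ0 → θ ≠ x → Enc r a b θ := by
      intro θ g1 g2 g3
      by_contra g4
      have : θ ∈ Metric.ball x δ0 := by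
        rw [Metric.mem_ball, Real.dist_eq, abs_lt]; constructor <;> linarith
      have := hball this
      exact g3 (hno θ ⟨this.1, this.2, g4⟩)
    obtain ⟨Y, y1, y2, y3⟩ := H.right_leaf hd hab hx1.le (hx2.trans_le hcb) hxr hx3 hδ0
      (fun θ g1 g2 => hall θ (by linarith) g2 g1.ne')
    obtain ⟨W, w1, w2, w3⟩ := H.left_leaf hd hab hx1 (hx2.le.trans hcb) hxr hx3 hδ0
      (fun θ g1 g2 => hall θ g1 (by linarith) g2.ne)
    have hxb : x < b := hx2.trans_le hcb
    rcases w1.eq_or_lt with e | w1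
    · subst e; exact hfree x hx1 hxb w3
    rcases y2.eq_or_lt with e | y2
    · subst e; exact hfree x hx1 hxb (H.trans _ _ _ hr (H.symm _ _ y3))
    exact hx3 ⟨W, Y, w1, w2, y1, y2, H.trans _ _ _ w3 y3⟩
  set m := (a + c) / 2 with hm
  have hP2 := (hP.open_inter (isOpen_Iio (a := m))).perfect_closure
  obtain ⟨θ, t1, t2, t3⟩ := hA (m - a) (by linarith)
  obtain ⟨f, f1, -, f3⟩ := hP2.exists_nat_bool_injection
    ⟨θ, subset_closure ⟨by simp; linarith, ⟨t1, by linarith⟩, t3⟩⟩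
  have hsub : closure (Iio m ∩ (Ioo a c ∩ {θ | ¬ Enc r a b θ})) ⊆
      range ((↑) : ℚ → ℝ) := by
    have h1 : closure (Iio m ∩ (Ioo a c ∩ {θ | ¬ Enc r a b θ})) ⊆
        Icc a m ∩ {θ | Enc r a b θ}ᶜ := by
      refine closure_minimal ?_ (isClosed_Icc.inter (isOpen_enc a b).isClosed_compl)
      rintro x ⟨h1, h2, h3⟩
      exact ⟨⟨h2.1.le, le_of_lt h1⟩, h3⟩
    intro x hx
    obtain ⟨⟨g1, g2⟩, g3⟩ := h1 hx
    rcases g1.eq_or_lt with e | g1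
    · subst e; exact har
    · exact hcr x g1 (by linarith) g3
  have hcount : (range f).Countable := ((countable_range _).mono hsub).mono f1
  have : Countable (ℕ → Bool) := by
    rw [← Set.countable_univ_iff]
    refine (Set.countable_of_injective_of_countable_image (f := f) f3.injOn ?_)
    rwa [image_univ]
  obtain ⟨g, hg⟩ := exists_injective_nat (ℕ → Bool)
  classical
  refine Function.cantor_injective (fun s : Set ℕ => g (fun n => decide (n ∈ s))) ?_
  intro s t hst
  have := hg hst
  ext n
  have := congrFun this n
  simpa using this

end RL
namespace RL
variable {d : ℕ} {r : ℝ → ℝ → Prop}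

def Acc (r : ℝ → ℝ → Prop) (η x y : ℝ) : Prop :=
  r x y ∧ ∀ ε > 0, ∃ s t, 0 < s ∧ s < ε ∧ 0 < t ∧ t < ε ∧ r (x + η * s) (y - η * t)

theorem acc_one {x y : ℝ} : Acc r 1 x y ↔ r x y ∧ Lim r x y := by
  simp [Acc, Lim]

theorem Acc.swap (H : RL d r) {η x y : ℝ} (h : Acc r η x y) : Acc r (-η) y x := by
  refine ⟨H.symm _ _ h.1, fun ε hε => ?_⟩
  obtain ⟨s, t, h1, h2, h3, h4, h5⟩ := h.2 ε hε
  refine ⟨t, s, h3, h4, h1, h2, H.symm _ _ ?_⟩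
  convert h5 using 1 <;> ring

theorem Acc.shift (H : RL d r) {η x y : ℝ} (h : Acc r η x y) (n m : ℤ) :
    Acc r η (x + n) (y + m) := by
  refine ⟨H.shl n (H.shift _ _ m h.1), fun ε hε => ?_⟩
  obtain ⟨s, t, h1, h2, h3, h4, h5⟩ := h.2 ε hε
  refine ⟨s, t, h1, h2, h3, h4, ?_⟩
  have := H.shl n (H.shift _ _ m h5)
  convert this using 1 <;> ring

theorem Acc.fwd (H : RL d r) (hd : 1 ≤ d) {η x y : ℝ} (h : Acc r η x y) :
    Acc r η (d * x) (d * y) := by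
  refine ⟨H.fwd _ _ h.1, fun ε hε => ?_⟩
  have hd' : (0 : ℝ) < d := by exact_mod_cast hd
  obtain ⟨s, t, h1, h2, h3, h4, h5⟩ := h.2 (ε / d) (by positivity)
  rw [lt_div_iff₀ hd'] at h2 h4
  refine ⟨d * s, d * t, by positivity, by linarith, by positivity, by linarith, ?_⟩
  have := H.fwd _ _ h5
  convert this using 1 <;> ring

theorem frac_avoid (g : ℝ) : ∃ γ > 0, γ ≤ 1 ∧ ∀ h : ℝ, 0 < h → h < γ → ∀ n : ℤ, h ≠ g + n := by
  refine ⟨1 - Int.fract (-g), by linarith [Int.fract_lt_one (-g)],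
    by linarith [Int.fract_nonneg (-g)], ?_⟩
  intro h h0 h1 n e
  have e1 : Int.fract (-g) = 1 - h := by
    rw [Int.fract_eq_iff]
    refine ⟨by linarith [Int.fract_nonneg (-g)], by linarith, n - 1, ?_⟩
    push_cast; linarith
  rw [e1] at h1; linarith

theorem lift_one (H : RL d r) (hd : 1 ≤ d) {x y : ℝ} (h : r x y) (hL : Lim r x y) :
    ∃ δ > 0, ∀ σ τ, 0 < σ → σ < δ → 0 < τ → τ < δ →
      r (d * x + σ) (d * y - τ) → r (x + σ / d) (y - τ / d) := by
  -- normalise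
  suffices key : ∀ y, x < y → y ≤ x + 1 → r x y → Lim r x y →
      ∃ δ > 0, ∀ σ τ, 0 < σ → σ < δ → 0 < τ → τ < δ →
      r (d * x + σ) (d * y - τ) → r (x + σ / d) (y - τ / d) by
    obtain ⟨n, h1, h2⟩ := norm_rep x y
    have hL' := Lim.shift H hL 0 n
    rw [Int.cast_zero, add_zero] at hL'
    obtain ⟨δ, δ0, hδ⟩ := key (y + n) h1 h2 (H.shift _ _ n h) hL'
    refine ⟨δ, δ0, fun σ τ a1 a2 a3 a4 a5 => ?_⟩
    have e := hδ σ τ a1 a2 a3 a4 (by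
      have := H.shift _ _ (d * n) a5
      convert this using 1; push_cast; ring)
    have := H.shift _ _ (-n) e
    convert this using 1; push_cast; ring
  clear h hL y
  intro y hxy hyx h hL
  have hd' : (0 : ℝ) < d := by exact_mod_cast hd
  have hd1 : (1 : ℝ) ≤ d := by exact_mod_cast hd
  obtain ⟨γ, γ0, γ1, hγ⟩ := frac_avoid (d * y - d * x)
  obtain ⟨u, v, u0, u1, v0, v1, huv⟩ := hL (min (γ / (4 * d)) ((y - x) / 4))
    (lt_min (by positivity) (by linarith))
  rw [lt_min_iff, lt_div_iff₀ (by positivity)] at u1 v1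
  obtain ⟨δ1, δ10, hδ1⟩ := H.free x x
  obtain ⟨δ2, δ20, hδ2⟩ := H.free (x + u) x
  refine ⟨min (min δ1 δ2) (min u v), lt_min (lt_min δ10 δ20) (lt_min u0 v0), ?_⟩
  intro σ τ σ0 σ1 τ0 τ1 hr
  rw [lt_min_iff, lt_min_iff, lt_min_iff] at σ1 τ1
  obtain ⟨⟨σ1, σ2⟩, σ3, σ4⟩ := σ1
  obtain ⟨⟨τ1, τ2⟩, τ3, τ4⟩ := τ1
  set s := σ / d with hs
  have hs0 : 0 < s := by positivity
  have hsσ : s ≤ σ := div_le_self σ0.le hd1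
  have hds : d * s = σ := by rw [hs]; field_simp
  have hdu : d * u < γ / 4 := by linarith
  have hdv : d * v < γ / 4 := by linarith
  have huu : u ≤ d * u := by nlinarith
  have hvv : v ≤ d * v := by nlinarith
  have n1 : ¬ r x (x + s) := hδ1 _ (by linarith) (by linarith)
  have n2 : ¬ r (x + u) (x + s) := hδ2 _ (by linarith) (by linarith)
  have hr' : r (d * (x + s)) (d * y - τ) := by rw [mul_add, hds]; exact hr
  obtain ⟨Y0, n0, hY0, eY0⟩ := H.lift _ _ hr'
  obtain ⟨m, m1, m2⟩ := norm_rep x Y0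
  have hY := H.shift _ _ m hY0
  have eY : d * (Y0 + m) = d * y - τ + ((n0 + d * m : ℤ) : ℝ) := by
    push_cast; linarith
  generalize Y0 + m = Y at hY eY m1 m2
  generalize n0 + d * m = n at eY
  clear hY0 eY0
  rcases m2.eq_or_lt with e | m2
  · exfalso
    apply n1
    have := H.shift _ _ (-1) hY
    rw [e] at this
    apply H.symm
    convert this using 1; push_cast; ring
  rcases lt_trichotomy Y (x + u) with c | c | c
  · exfalso
    refine hγ (d * (Y - x) + τ) (by nlinarith) ?_ n (by linarith)
    have : d * (Y - x) < d * u := by apply mul_lt_mul_of_pos_left _ hd'; linarith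
    linarith
  · rw [c] at hY; exact (n2 (H.symm _ _ hY)).elim
  rcases lt_trichotomy Y (y - v) with c2 | c2 | c2
  · exfalso
    apply n2
    apply H.symm
    exact H.cross (x + s) (x + u) Y (y - v) (by linarith) c c2 (by linarith) hY huv
  · rw [c2] at hY
    exact (n2 (H.trans _ _ _ huv (H.symm _ _ hY))).elim
  rcases lt_trichotomy Y y with c3 | c3 | c3
  · have e : d * (y - Y) = τ - n := by linarith
    have b1 : 0 < d * (y - Y) := by apply mul_pos hd'; linarith
    have b2 : d * (y - Y) < d * v := by apply mul_lt_mul_of_pos_left _ hd'; linarith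
    have hn : n = 0 := by
      have h1 : (n : ℝ) < 1 := by linarith
      have h2 : (-1 : ℝ) < n := by linarith
      have h1' : n < 1 := by exact_mod_cast h1
      have h2' : -1 < n := by exact_mod_cast h2
      omega
    have : Y = y - τ / d := by
      rw [hn] at e; field_simp; push_cast at e; linarith
    rwa [← this]
  · rw [c3] at hY
    exact (n1 (H.trans _ _ _ h (H.symm _ _ hY))).elim
  · exfalso
    exact n1 (H.cross x (x + s) y Y (by linarith) (by linarith) c3 m2 h hY)

theorem lift_eta (H : RL d r) (hd : 1 ≤ d) {η x y : ℝ} (hη : η = 1 ∨ η = -1)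
    (h : Acc r η x y) :
    ∃ δ > 0, ∀ σ τ, 0 < σ → σ < δ → 0 < τ → τ < δ →
      r (d * x + η * σ) (d * y - η * τ) → r (x + η * (σ / d)) (y - η * (τ / d)) := by
  rcases hη with rfl | rfl
  · obtain ⟨h1, h2⟩ := acc_one.1 h
    simpa using H.lift_one hd h1 h2
  · have := h.swap H
    rw [neg_neg] at this
    obtain ⟨h1, h2⟩ := acc_one.1 this
    obtain ⟨δ, δ0, hδ⟩ := H.lift_one hd h1 h2
    refine ⟨δ, δ0, fun σ τ a1 a2 a3 a4 a5 => ?_⟩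
    have := hδ τ σ a3 a4 a1 a2 (H.symm _ _ (by convert a5 using 1 <;> ring))
    apply H.symm
    convert this using 1 <;> ring

/-- Primitivity, on the line. -/
def PH (r : ℝ → ℝ → Prop) : Prop :=
  ∀ a b a' b', a < b → b ≤ a' → a' < b' → b' ≤ a + 1 → b < a + 1 → r a b → r a a' → r a b' →
    (∀ w, a < w → w < b → ¬ r a w) → (∀ w, a' < w → w < b' → ¬ r a w) →
    Lim r a b ∨ Lim r a' b'

theorem edge_one (H : RL d r) (P : PH r) {p q : ℝ} (h : r p q) (hL : Lim r p q) {ε : ℝ}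
    (hε : 0 < ε) :
    ∃ s t η, 0 < s ∧ s < ε ∧ 0 < t ∧ t < ε ∧ (η = 1 ∨ η = -1) ∧ Acc r η (p + s) (q - t) ∧
      ∀ n : ℤ, q - t ≠ p + s + n := by
  suffices key : ∀ q, p < q → q ≤ p + 1 → r p q → Lim r p q →
      ∃ s t η, 0 < s ∧ s < ε ∧ 0 < t ∧ t < ε ∧ (η = 1 ∨ η = -1) ∧ Acc r η (p + s) (q - t) ∧
      ∀ n : ℤ, q - t ≠ p + s + n by
    obtain ⟨n, h1, h2⟩ := norm_rep p q
    have hL' := Lim.shift H hL 0 n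
    rw [Int.cast_zero, add_zero] at hL'
    obtain ⟨s, t, η, a1, a2, a3, a4, a5, a6, a7⟩ := key (q + n) h1 h2 (H.shift _ _ n h) hL'
    refine ⟨s, t, η, a1, a2, a3, a4, a5, ?_, fun m hm => a7 (m + n) ?_⟩
    · have := a6.shift H 0 (-n)
      convert this using 1 <;> push_cast <;> ring
    · push_cast; linarith
  clear h hL q
  intro q hpq hqp h hL
  obtain ⟨s1, t1, s10, s11, t10, t11, h1⟩ := hL (min ε ((q - p) / 4)) (lt_min hε (by linarith))
  rw [lt_min_iff] at s11 t11
  obtain ⟨δ1, δ10, hδ1⟩ := H.free p p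
  obtain ⟨δ2, δ20, hδ2⟩ := H.free (p + s1) p
  obtain ⟨s2, t2, s20, s21, t20, t21, h2⟩ := hL (min (min δ1 δ2) (min s1 t1))
    (lt_min (lt_min δ10 δ20) (lt_min s10 t10))
  rw [lt_min_iff, lt_min_iff, lt_min_iff] at s21 t21
  obtain ⟨⟨s21, s22⟩, s23, s24⟩ := s21
  obtain ⟨⟨t21, t22⟩, t23, t24⟩ := t21
  have n1 : ¬ r p (p + s2) := hδ1 _ (by linarith) (by linarith)
  have n2 : ¬ r (p + s1) (p + s2) := hδ2 _ (by linarith) (by linarith)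
  set A := p + s2 with hA
  have hAr : r A A := H.trans _ _ _ h2 (H.symm _ _ h2)
  have np : ¬ r A p := fun hh => n1 (H.symm _ _ hh)
  have nq : ¬ r A q := fun hh => n1 (H.trans _ _ _ h (H.symm _ _ hh))
  have nmid : ∀ w, p + s1 ≤ w → w ≤ q - t1 → ¬ r A w := by
    intro w w1 w2 hw
    apply n2
    rcases w1.eq_or_lt with e | w1
    · rw [e]; exact H.symm _ _ hw
    rcases w2.eq_or_lt with e | w2
    · rw [e] at hw; exact H.trans _ _ _ h1 (H.symm _ _ hw)
    · exact H.symm _ _ (H.cross A (p + s1) w (q - t1) (by linarith) w1 w2 (by linarith) hw h1)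
  have hSL := H.fin A p (p + s1)
  have hSLn : {w | p ≤ w ∧ w ≤ p + s1 ∧ r A w}.Nonempty := ⟨A, by linarith, by linarith, hAr⟩
  have hSR := H.fin A (q - t1) q
  have hSRn : {w | q - t1 ≤ w ∧ w ≤ q ∧ r A w}.Nonempty :=
    ⟨q - t2, by linarith, by linarith, h2⟩
  obtain ⟨α, ⟨α1, α2, α3⟩, hα⟩ := Set.exists_max_image _ id hSL hSLn
  obtain ⟨α0, ⟨α01, α02, α03⟩, hα0⟩ := Set.exists_min_image _ id hSL hSLn
  obtain ⟨β, ⟨β1, β2, β3⟩, hβ⟩ := Set.exists_min_image _ id hSR hSRn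
  obtain ⟨β0, ⟨β01, β02, β03⟩, hβ0⟩ := Set.exists_max_image _ id hSR hSRn
  simp only [id, mem_setOf_eq, and_imp] at hα hα0 hβ hβ0
  have hαβ0 := hα α0 α01 α02 α03
  have hββ0 := hβ β0 β01 β02 β03
  have ne : ∀ {w}, w = p → ¬ r A w := fun e => e ▸ np
  have α1' : p < α := lt_of_le_of_ne α1 (fun e => ne e.symm α3)
  have α01' : p < α0 := lt_of_le_of_ne α01 (fun e => ne e.symm α03)
  have β2' : β < q := lt_of_le_of_ne β2 (fun e => nq (e ▸ β3))
  have β02' : β0 < q := lt_of_le_of_ne β02 (fun e => nq (e ▸ β03))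
  have α03' : r A (α0 + 1) := by have := H.shift _ _ 1 α03; simpa using this
  have hmod : ∀ x y : ℝ, p < x → x ≤ p + s1 → q - t1 ≤ y → y < q → ∀ n : ℤ, y ≠ x + n := by
    intro x y g1 g2 g3 g4 n e
    have e1 : (0 : ℝ) < n := by linarith
    have e2 : (n : ℝ) < 1 := by linarith
    have e1' : 0 < n := by exact_mod_cast e1
    have e2' : n < 1 := by exact_mod_cast e2
    omega
  have hsym := H.symm _ _ α3
  rcases P α β β0 (α0 + 1) (by linarith) hββ0 (by linarith) (by linarith) (by linarith)
    (H.trans _ _ _ hsym β3) (H.trans _ _ _ hsym β03) (H.trans _ _ _ hsym α03')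
    (by
      intro w w1 w2 hw
      have hw := H.trans _ _ _ α3 hw
      rcases le_total w (p + s1) with g | g
      · have := hα w (by linarith) g hw; linarith
      rcases le_total w (q - t1) with g2 | g2
      · exact nmid w g g2 hw
      · have := hβ w g2 (by linarith) hw; linarith)
    (by
      intro w w1 w2 hw
      have hw := H.trans _ _ _ α3 hw
      rcases le_total w q with g | g
      · have := hβ0 w (by linarith) g hw; linarith
      rcases g.eq_or_lt with e | g
      · rw [← e] at hw; exact nq hw
      rcases lt_trichotomy w (p + 1) with g2 | g2 | g2
      · exact n1 (H.cross p A q w (by linarith) (by linarith) g g2 h hw)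
      · have := H.shift _ _ (-1) hw
        rw [g2] at this
        exact np (by convert this using 1; push_cast; ring)
      · have := H.shift _ _ (-1) hw
        have := hα0 _ (by push_cast; linarith) (by push_cast; linarith) this
        push_cast at this; linarith) with hh | hh
  · refine ⟨α - p, q - β, 1, by linarith, by linarith, by linarith, by linarith, Or.inl rfl, ?_, ?_⟩
    · rw [acc_one]
      have e1 : p + (α - p) = α := by ring
      have e2 : q - (q - β) = β := by ring
      rw [e1, e2]
      exact ⟨H.trans _ _ _ hsym β3, hh⟩
    · intro n
      have := hmod α β α1' α2 β1 β2' n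
      intro e; apply this; linarith
  · refine ⟨α0 - p, q - β0, -1, by linarith, by linarith, by linarith, by linarith, Or.inr rfl, ?_, ?_⟩
    · have e1 : p + (α0 - p) = α0 := by ring
      have e2 : q - (q - β0) = β0 := by ring
      rw [e1, e2]
      apply Acc.swap H
      rw [acc_one]
      have := Lim.shift H hh 0 (-1)
      refine ⟨H.trans _ _ _ (H.symm _ _ β03) α03, ?_⟩
      convert this using 1 <;> push_cast <;> ring
    · intro n
      have := hmod α0 β0 α01' α02 β01 β02' n
      intro e; apply this; linarith

theorem edge_eta (H : RL d r) (P : PH r) {p q η : ℝ} (hη : η = 1 ∨ η = -1) (h : Acc r η p q)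
    {ε : ℝ} (hε : 0 < ε) :
    ∃ s t η', 0 < s ∧ s < ε ∧ 0 < t ∧ t < ε ∧ (η' = 1 ∨ η' = -1) ∧
      Acc r η' (p + η * s) (q - η * t) ∧ ∀ n : ℤ, q - η * t ≠ p + η * s + n := by
  rcases hη with rfl | rfl
  · obtain ⟨h1, h2⟩ := acc_one.1 h
    simpa using H.edge_one P h1 h2 hε
  · have := h.swap H
    rw [neg_neg] at this
    obtain ⟨h1, h2⟩ := acc_one.1 this
    obtain ⟨s, t, η', a1, a2, a3, a4, a5, a6, a7⟩ := H.edge_one P h1 h2 hε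
    refine ⟨t, s, -η', a3, a4, a1, a2, by rcases a5 with rfl | rfl <;> simp, ?_, ?_⟩
    · have := a6.swap H
      convert this using 1 <;> ring
    · intro n e
      apply a7 (-n); push_cast; linarith

theorem next (H : RL d r) {z u v : ℝ} (huv : u < v) (h : r z v) :
    ∃ b, u < b ∧ b ≤ v ∧ r z b ∧ ∀ w, u < w → w < b → ¬ r z w := by
  obtain ⟨δ, δ0, hδ⟩ := H.free z u
  have hδv : u + δ ≤ v := by by_contra hh; push Not at hh; exact hδ v huv hh h
  obtain ⟨b, ⟨b1, b2, b3⟩, hb⟩ := Set.exists_min_image _ id (H.fin z (u + δ) v)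
    ⟨v, hδv, le_rfl, h⟩
  simp only [id, mem_setOf_eq, and_imp] at hb
  refine ⟨b, by linarith, b2, b3, fun w w1 w2 w3 => ?_⟩
  rcases lt_or_ge w (u + δ) with g | g
  · exact hδ w w1 g w3
  · have := hb w g (by linarith) w3; linarith

theorem exists_acc (H : RL d r) (P : PH r) {x y : ℝ} (h : r x y) (hn : ∀ n : ℤ, y ≠ x + n) :
    ∃ x y, r x y ∧ Lim r x y ∧ ∀ n : ℤ, y ≠ x + n := by
  obtain ⟨n, a1, a2⟩ := norm_rep x y
  have a3 : y + n < x + 1 := lt_of_le_of_ne a2 (fun e => hn (1 - n) (by push_cast; linarith))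
  obtain ⟨b, b1, b2, b3, b4⟩ := H.next a1 (H.shift _ _ n h)
  have hx1 : r x (x + 1) := by
    have := H.shift _ _ 1 (H.refl x (H.rat _ _ h).1); simpa using this
  obtain ⟨b', c1, c2, c3, c4⟩ := H.next (show b < x + 1 by linarith) hx1
  have hmod : ∀ x y : ℝ, x < y → y < x + 1 → ∀ n : ℤ, y ≠ x + n := by
    intro x y g1 g2 n e
    have e1 : (0 : ℝ) < n := by linarith
    have e2 : (n : ℝ) < 1 := by linarith
    have e1' : 0 < n := by exact_mod_cast e1
    have e2' : n < 1 := by exact_mod_cast e2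
    omega
  rcases P x b b b' b1 le_rfl c1 c2 (by linarith) b3 b3 c3 b4 c4 with hh | hh
  · exact ⟨x, b, b3, hh, hmod _ _ b1 (by linarith)⟩
  · exact ⟨b, b', H.trans _ _ _ (H.symm _ _ b3) c3, hh, hmod _ _ c1 (by linarith)⟩

end RL
namespace RL
variable {d : ℕ} {r : ℝ → ℝ → Prop}

/-- fixed points of multiplication by `d` -/
def Fx (d : ℕ) (x : ℝ) : Prop := ∃ n : ℤ, (d : ℝ) * x = x + n

theorem Fx.shift {x : ℝ} (h : Fx d x) (m : ℤ) : Fx d (x + m) := by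
  obtain ⟨n, hn⟩ := h
  exact ⟨n + d * m - m, by push_cast; rw [mul_add, hn]; ring⟩

theorem Fx.fwd {x : ℝ} (h : Fx d x) (j : ℕ) : ∃ n : ℤ, (d : ℝ) ^ j * x = x + n := by
  induction j with
  | zero => exact ⟨0, by simp⟩
  | succ j ih =>
    obtain ⟨n, hn⟩ := ih
    obtain ⟨m, hm⟩ := h
    exact ⟨m + d * n, by push_cast; rw [pow_succ', mul_assoc, hn, mul_add, hm]; ring⟩

theorem Fx.later {x : ℝ} {k : ℕ} (h : Fx d ((d : ℝ) ^ k * x)) (j : ℕ) :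
    Fx d ((d : ℝ) ^ (k + j) * x) := by
  obtain ⟨n, hn⟩ := h.fwd j
  have : (d : ℝ) ^ (k + j) * x = (d : ℝ) ^ k * x + n := by rw [← hn]; ring
  rw [this]; exact h.shift n

/-- no two fixed points are close -/
theorem Fx.close (hd : 2 ≤ d) {x y : ℝ} (hx : Fx d x) (hy : Fx d y) (h1 : x < y)
    (h2 : y < x + 1 / d) : False := by
  obtain ⟨n, hn⟩ := hx
  obtain ⟨m, hm⟩ := hy
  have hd' : (2 : ℝ) ≤ d := by exact_mod_cast hd
  have h3 : d * (y - x) < 1 := by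
    have : y - x < 1 / d := by linarith
    rw [lt_div_iff₀ (by linarith)] at this; linarith
  have e : (d - 1) * (y - x) = ((m - n : ℤ) : ℝ) := by push_cast; linarith
  have e1 : (0 : ℝ) < ((m - n : ℤ) : ℝ) := by rw [← e]; apply mul_pos <;> linarith
  have e2 : ((m - n : ℤ) : ℝ) < 1 := by rw [← e]; nlinarith
  have e1' : 0 < m - n := by exact_mod_cast e1
  have e2' : m - n < 1 := by exact_mod_cast e2
  omega

def VE (d : ℕ) (r : ℝ → ℝ → Prop) : Set (ℝ × ℝ × ℝ) :=
  {e | 0 ≤ e.1 ∧ e.1 < 1 ∧ Fx d e.1 ∧ 0 ≤ e.2.1 ∧ e.2.1 < 1 ∧ Fx d e.2.1 ∧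
    (e.2.2 = 1 ∨ e.2.2 = -1) ∧ Acc r e.2.2 e.1 e.2.1}

theorem fx_finite (hd : 2 ≤ d) : {x : ℝ | 0 ≤ x ∧ x < 1 ∧ Fx d x}.Finite := by
  have hd' : (2 : ℝ) ≤ d := by exact_mod_cast hd
  refine ((Set.finite_Icc (0 : ℤ) d).image (fun n : ℤ => (n : ℝ) / (d - 1))).subset ?_
  rintro x ⟨h0, h1, n, hn⟩
  have e : (d - 1) * x = n := by linarith
  refine ⟨n, ⟨?_, ?_⟩, ?_⟩
  · have : (0 : ℝ) ≤ n := by rw [← e]; apply mul_nonneg <;> linarith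
    exact_mod_cast this
  · have : (n : ℝ) ≤ d := by rw [← e]; nlinarith
    exact_mod_cast this
  · have : (d : ℝ) - 1 ≠ 0 := by linarith
    simp only
    field_simp
    linarith

theorem VE_finite (hd : 2 ≤ d) : (VE d r).Finite := by
  refine ((fx_finite hd).prod ((fx_finite hd).prod (Set.toFinite {(1 : ℝ), -1}))).subset ?_
  rintro ⟨p, q, η⟩ ⟨h1, h2, h3, h4, h5, h6, h7, h8⟩
  exact ⟨⟨h1, h2, h3⟩, ⟨h4, h5, h6⟩, h7⟩

def Rε (d : ℕ) (r : ℝ → ℝ → Prop) (e e' : ℝ × ℝ × ℝ) (ε : ℝ) : Prop :=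
  ∃ (s t : ℝ) (k : ℕ) (n m : ℤ), 0 < s ∧ s < ε ∧ 0 < t ∧ t < ε ∧
    Acc r e'.2.2 (e.1 + e.2.2 * s) (e.2.1 - e.2.2 * t) ∧
    (d : ℝ) ^ k * (e.1 + e.2.2 * s) = e'.1 + n ∧ (d : ℝ) ^ k * (e.2.1 - e.2.2 * t) = e'.2.1 + m

def HF (d : ℕ) (r : ℝ → ℝ → Prop) : Prop :=
  ∀ x y, r x y → (∀ n : ℤ, y ≠ x + n) → ∃ k : ℕ, Fx d ((d : ℝ) ^ k * x)

/-- push an accumulated leaf to a vertex -/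
theorem to_vertex (H : RL d r) (hd : 2 ≤ d) (F : HF d r) {x y η : ℝ} (hη : η = 1 ∨ η = -1)
    (h : Acc r η x y) (hn : ∀ n : ℤ, y ≠ x + n) :
    ∃ e ∈ VE d r, ∃ (k : ℕ) (n m : ℤ), e.2.2 = η ∧ (d : ℝ) ^ k * x = e.1 + n ∧
      (d : ℝ) ^ k * y = e.2.1 + m := by
  obtain ⟨k1, h1⟩ := F x y h.1 hn
  obtain ⟨k2, h2⟩ := F y x (H.symm _ _ h.1) (fun n e => hn (-n) (by push_cast; linarith))
  have h1 := h1.later k2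
  have h2 := h2.later k1
  rw [add_comm k2 k1] at h2
  have ha := Acc.fwd (H.pow (k1 + k2)) (Nat.one_le_pow _ _ (by omega)) h
  push_cast at ha
  refine ⟨(Int.fract ((d : ℝ) ^ (k1 + k2) * x), Int.fract ((d : ℝ) ^ (k1 + k2) * y), η),
    ⟨Int.fract_nonneg _, Int.fract_lt_one _, ?_, Int.fract_nonneg _, Int.fract_lt_one _, ?_, hη, ?_⟩,
    k1 + k2, ⌊(d : ℝ) ^ (k1 + k2) * x⌋, ⌊(d : ℝ) ^ (k1 + k2) * y⌋, rfl, ?_, ?_⟩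
  · have := h1.shift (-⌊(d : ℝ) ^ (k1 + k2) * x⌋)
    rw [Int.cast_neg, ← sub_eq_add_neg] at this
    exact this
  · have := h2.shift (-⌊(d : ℝ) ^ (k1 + k2) * y⌋)
    rw [Int.cast_neg, ← sub_eq_add_neg] at this
    exact this
  · have := ha.shift H (-⌊(d : ℝ) ^ (k1 + k2) * x⌋) (-⌊(d : ℝ) ^ (k1 + k2) * y⌋)
    rw [Int.cast_neg, ← sub_eq_add_neg, Int.cast_neg, ← sub_eq_add_neg] at this
    exact this
  · simp only; rw [Int.fract_add_floor]
  · simp only; rw [Int.fract_add_floor]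

theorem R_trans (H : RL d r) (hd : 2 ≤ d) {e e' e'' : ℝ × ℝ × ℝ} (he : e ∈ VE d r)
    (he' : e' ∈ VE d r) (he'' : e'' ∈ VE d r)
    (h : ∀ ε > 0, Rε d r e e' ε) (h' : ∀ ε > 0, Rε d r e' e'' ε) :
    ∀ ε > 0, Rε d r e e'' ε := by
  intro ε hε
  obtain ⟨p, q, η⟩ := e
  obtain ⟨p', q', η'⟩ := e'
  obtain ⟨p'', q'', η''⟩ := e''
  have hη : η = 1 ∨ η = -1 := he.2.2.2.2.2.2.1
  have hη' : η' = 1 ∨ η' = -1 := he'.2.2.2.2.2.2.1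
  have hη'' : η'' = 1 ∨ η'' = -1 := he''.2.2.2.2.2.2.1
  obtain ⟨s, t, k, n, m, s0, s1, t0, t1, hA, e1, e2⟩ := h (ε / 2) (by linarith)
  simp only at hA e1 e2
  have hD : (1 : ℝ) ≤ (d : ℝ) ^ k := one_le_pow₀ (by exact_mod_cast (by omega : 1 ≤ d))
  obtain ⟨δ, δ0, hδ⟩ := lift_eta (H.pow k) (Nat.one_le_pow _ _ (by omega)) hη' hA
  push_cast at hδ
  rw [e1, e2] at hδ
  obtain ⟨s', t', k', n', m', s0', s1', t0', t1', hA', e1', e2'⟩ :=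
    h' (min (min (δ / 2) (ε / 2)) (min s t))
      (lt_min (lt_min (by linarith) (by linarith)) (lt_min s0 t0))
  simp only at hA' e1' e2'
  rw [lt_min_iff, lt_min_iff, lt_min_iff] at s1' t1'
  obtain ⟨⟨s11, s12⟩, s13, s14⟩ := s1'
  obtain ⟨⟨t11, t12⟩, t13, t14⟩ := t1'
  generalize hM : (d : ℝ) ^ k = M at *
  have hM0 : 0 < M := by linarith
  have sM : s' / M ≤ s' := div_le_self s0'.le hD
  have tM : t' / M ≤ t' := div_le_self t0'.le hD
  have sM0 : 0 < s' / M := by positivity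
  have tM0 : 0 < t' / M := by positivity
  have ηη : η * η = 1 := by rcases hη with rfl | rfl <;> norm_num
  have ηη' : η' * η' = 1 := by rcases hη' with rfl | rfl <;> norm_num
  have hlift : ∀ σ τ, 0 < σ → σ < δ → 0 < τ → τ < δ → r (p' + η' * σ) (q' - η' * τ) →
      r (p + η * s + η' * (σ / M)) (q - η * t - η' * (τ / M)) := by
    intro σ τ a1 a2 a3 a4 a5
    refine hδ σ τ a1 a2 a3 a4 ?_
    have := H.shl n (H.shift _ _ m a5)
    convert this using 1 <;> ring
  have c1 : η * η' = 1 ∨ η * η' = -1 := by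
    rcases hη with rfl | rfl <;> rcases hη' with rfl | rfl <;> norm_num
  have c2 : η' * η'' = 1 ∨ η' * η'' = -1 := by
    rcases hη' with rfl | rfl <;> rcases hη'' with rfl | rfl <;> norm_num
  have x1 : p + η * (s + η * η' * (s' / M)) = p + η * s + η' * (s' / M) := by
    linear_combination (η' * (s' / M)) * ηη
  have x2 : q - η * (t + η * η' * (t' / M)) = q - η * t - η' * (t' / M) := by
    linear_combination -(η' * (t' / M)) * ηη
  refine ⟨s + η * η' * (s' / M), t + η * η' * (t' / M), k + k', n' + d ^ k' * n, m' + d ^ k' * m,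
    ?_, ?_, ?_, ?_, ?_, ?_, ?_⟩
  · rcases c1 with c | c <;> rw [c] <;> linarith
  · rcases c1 with c | c <;> rw [c] <;> linarith
  · rcases c1 with c | c <;> rw [c] <;> linarith
  · rcases c1 with c | c <;> rw [c] <;> linarith
  · simp only
    rw [x1, x2]
    refine ⟨hlift s' t' s0' (by linarith) t0' (by linarith) hA'.1, fun ε3 hε3 => ?_⟩
    obtain ⟨u, v, u0, u1, v0, v1, huv⟩ := hA'.2 (min (min ε3 (δ / 2)) (min s' t'))
      (lt_min (lt_min hε3 (by linarith)) (lt_min s0' t0'))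
    rw [lt_min_iff, lt_min_iff, lt_min_iff] at u1 v1
    obtain ⟨⟨u11, u12⟩, u13, u14⟩ := u1
    obtain ⟨⟨v11, v12⟩, v13, v14⟩ := v1
    refine ⟨u / M, v / M, by positivity, (div_le_self u0.le hD).trans_lt u11, by positivity,
      (div_le_self v0.le hD).trans_lt v11, ?_⟩
    have := hlift (s' + η' * η'' * u) (t' + η' * η'' * v)
      (by rcases c2 with c | c <;> rw [c] <;> linarith)
      (by rcases c2 with c | c <;> rw [c] <;> linarith)
      (by rcases c2 with c | c <;> rw [c] <;> linarith)
      (by rcases c2 with c | c <;> rw [c] <;> linarith)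
      (by
        convert huv using 1
        · linear_combination (η'' * u) * ηη'
        · linear_combination -(η'' * v) * ηη')
    convert this using 1
    · field_simp; linear_combination -(η'' * u) * ηη'
    · field_simp; linear_combination (η'' * v) * ηη'
  · simp only
    rw [x1, pow_add, hM]
    push_cast
    have : M * (η' * (s' / M)) = η' * s' := by field_simp
    linear_combination (d : ℝ) ^ k' * e1 + e1' + (d : ℝ) ^ k' * this
  · simp only
    rw [x2, pow_add, hM]
    push_cast
    have : M * (η' * (t' / M)) = η' * t' := by field_simp
    linear_combination (d : ℝ) ^ k' * e2 + e2' - (d : ℝ) ^ k' * this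

theorem R_total (H : RL d r) (hd : 2 ≤ d) (F : HF d r) (P : PH r) {e : ℝ × ℝ × ℝ}
    (he : e ∈ VE d r) : ∃ e' ∈ VE d r, ∀ ε > 0, Rε d r e e' ε := by
  by_contra hcon
  push Not at hcon
  have hfin : Finite (VE d r) := VE_finite hd
  have : ∀ᶠ ε in nhdsWithin (0 : ℝ) (Ioi 0), ∀ e' : VE d r, ¬ Rε d r e e' ε := by
    rw [Filter.eventually_all]
    intro e'
    obtain ⟨ε, hε, hne⟩ := hcon e' e'.2
    filter_upwards [Ioo_mem_nhdsGT hε] with ε' hε' hR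
    apply hne
    obtain ⟨s, t, k, n, m, s0, s1, t0, t1, h⟩ := hR
    exact ⟨s, t, k, n, m, s0, s1.trans hε'.2, t0, t1.trans hε'.2, h⟩
  obtain ⟨ε, h1, h2⟩ := (this.and self_mem_nhdsWithin).exists
  obtain ⟨s, t, η', s0, s1, t0, t1, hη', hA, hn⟩ := H.edge_eta P he.2.2.2.2.2.2.1 he.2.2.2.2.2.2.2 h2
  obtain ⟨e', he', k, n, m, g1, g2, g3⟩ := H.to_vertex hd F hη' hA hn
  exact h1 ⟨e', he'⟩ ⟨s, t, k, n, m, s0, s1, t0, t1, by rw [g1]; exact hA, g2, g3⟩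

theorem exists_loop {α : Type*} {E : Set α} (hE : E.Finite) (hne : E.Nonempty)
    (R : α → α → Prop) (htot : ∀ e ∈ E, ∃ e' ∈ E, R e e')
    (htr : ∀ e ∈ E, ∀ e' ∈ E, ∀ e'' ∈ E, R e e' → R e' e'' → R e e'') : ∃ e ∈ E, R e e := by
  have : Finite E := hE
  choose f hf using htot
  let g : E → E := fun e => ⟨f e.1 e.2, (hf e.1 e.2).1⟩
  have hg : ∀ e : E, R e (g e) := fun e => (hf e.1 e.2).2
  obtain ⟨e0, he0⟩ := hne
  let u : ℕ → E := fun n => g^[n] ⟨e0, he0⟩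
  have hu : ∀ n, R (u n) (u (n + 1)) := by
    intro n
    have : u (n + 1) = g (u n) := Function.iterate_succ_apply' g n _
    rw [this]; exact hg _
  have hu2 : ∀ i k, R (u i) (u (i + k + 1)) := by
    intro i k
    induction k with
    | zero => exact hu i
    | succ k ih => exact htr _ (u i).2 _ (u _).2 _ (u _).2 ih (hu _)
  obtain ⟨i, j, hij, he⟩ := Finite.exists_ne_map_eq_of_infinite u
  rcases lt_or_gt_of_ne hij with h | h
  · have := hu2 i (j - i - 1)
    rw [show i + (j - i - 1) + 1 = j by omega, ← he] at this
    exact ⟨_, (u i).2, this⟩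
  · have := hu2 j (i - j - 1)
    rw [show j + (i - j - 1) + 1 = i by omega, he] at this
    exact ⟨_, (u j).2, this⟩

theorem iter_scale (H : RL d r) (hd : 2 ≤ d) {p q η δ : ℝ} (hp : Fx d p) (hq : Fx d q)
    (hδ : ∀ σ τ, 0 < σ → σ < δ → 0 < τ → τ < δ →
      r (d * p + η * σ) (d * q - η * τ) → r (p + η * (σ / d)) (q - η * (τ / d)))
    {σ τ : ℝ} (σ0 : 0 < σ) (σ1 : σ < δ) (τ0 : 0 < τ) (τ1 : τ < δ)
    (h : r (p + η * σ) (q - η * τ)) (j : ℕ) :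
    r (p + η * (σ / d ^ j)) (q - η * (τ / d ^ j)) := by
  have hd1 : (1 : ℝ) ≤ d := by exact_mod_cast (by omega : 1 ≤ d)
  induction j with
  | zero => simpa using h
  | succ j ih =>
    have hj : (1 : ℝ) ≤ (d : ℝ) ^ j := one_le_pow₀ hd1
    obtain ⟨n, hn⟩ := hp
    obtain ⟨m, hm⟩ := hq
    have := hδ (σ / d ^ j) (τ / d ^ j) (by positivity) ((div_le_self σ0.le hj).trans_lt σ1)
      (by positivity) ((div_le_self τ0.le hj).trans_lt τ1) (by
        have := H.shl n (H.shift _ _ m ih)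
        rw [hn, hm]
        convert this using 1 <;> ring)
    rw [pow_succ]
    rw [div_div, div_div] at this
    exact this

/-- The contraction produces a periodic leaf. -/
theorem contract (H : RL d r) {p q η S T M δ : ℝ} (hM : 1 < M) (hS : 0 < S) (hT : 0 < T)
    (hη : η = 1 ∨ η = -1)
    (h1 : S + δ / M < δ) (h2 : T + δ / M < δ) (hA : Acc r η p q)
    (hδ0 : 0 < δ)
    (hst : ∀ σ τ, 0 < σ → σ < δ → 0 < τ → τ < δ → r (p + η * σ) (q - η * τ) →
      r (p + η * (S + σ / M)) (q - η * (T + τ / M)))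
    (hr1 : Rt (p + η * (S * M / (M - 1)))) (hr2 : Rt (q - η * (T * M / (M - 1)))) :
    r (p + η * (S * M / (M - 1))) (q - η * (T * M / (M - 1))) := by
  obtain ⟨σ0, τ0, a1, a2, a3, a4, a5⟩ := hA.2 δ hδ0
  have hM0 : 0 < M := by linarith
  have hM1 : M - 1 ≠ 0 := by linarith
  set S' := S * M / (M - 1) with hS'
  set T' := T * M / (M - 1) with hT'
  have eS : S + S' / M = S' := by rw [hS']; field_simp; ring
  have eT : T + T' / M = T' := by rw [hT']; field_simp; ring
  have key : ∀ n : ℕ, ∃ σ τ, 0 < σ ∧ σ < δ ∧ 0 < τ ∧ τ < δ ∧ r (p + η * σ) (q - η * τ) ∧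
      σ - S' = (σ0 - S') * (1 / M) ^ n ∧ τ - T' = (τ0 - T') * (1 / M) ^ n := by
    intro n
    induction n with
    | zero => exact ⟨σ0, τ0, a1, a2, a3, a4, a5, by simp, by simp⟩
    | succ n ih =>
      obtain ⟨σ, τ, b1, b2, b3, b4, b5, b6, b7⟩ := ih
      have c1 : σ / M < δ / M := div_lt_div_of_pos_right b2 hM0
      have c2 : τ / M < δ / M := div_lt_div_of_pos_right b4 hM0
      refine ⟨S + σ / M, T + τ / M, by positivity, by linarith, by positivity, by linarith,
        hst σ τ b1 b2 b3 b4 b5, ?_, ?_⟩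
      · rw [pow_succ, ← mul_assoc, ← b6]; linear_combination eS
      · rw [pow_succ, ← mul_assoc, ← b7]; linear_combination eT
  have lim : ∀ c : ℝ, Filter.Tendsto (fun n : ℕ => c * (1 / M) ^ n) Filter.atTop (nhds 0) := by
    intro c
    have := (tendsto_pow_atTop_nhds_zero_of_lt_one (r := 1 / M) (by positivity)
      (by rw [div_lt_one hM0]; exact hM)).const_mul c
    simpa using this
  have ηa : |η| = 1 := by rcases hη with rfl | rfl <;> simp
  refine H.closed _ _ hr1 hr2 fun ε hε => ?_
  have e1 := (lim (σ0 - S')).eventually (Metric.ball_mem_nhds 0 hε)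
  have e2 := (lim (τ0 - T')).eventually (Metric.ball_mem_nhds 0 hε)
  obtain ⟨n, n1, n2⟩ := (e1.and e2).exists
  obtain ⟨σ, τ, b1, b2, b3, b4, b5, b6, b7⟩ := key n
  simp only [Metric.mem_ball, Real.dist_eq, sub_zero] at n1 n2
  rw [← b6] at n1
  rw [← b7] at n2
  refine ⟨_, _, ?_, ?_, b5⟩
  · have : p + η * σ - (p + η * S') = η * (σ - S') := by ring
    rw [this, abs_mul, ηa, one_mul]; exact n1
  · have : q - η * τ - (q - η * T') = -(η * (τ - T')) := by ring
    rw [this, abs_neg, abs_mul, ηa, one_mul]; exact n2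

end RL
namespace RL
variable {d : ℕ} {r : ℝ → ℝ → Prop}

theorem Fx.of_periodic {x : ℝ} {J K : ℕ} (hJ : 1 ≤ J) (h : Fx d ((d : ℝ) ^ K * x))
    (hp : ∃ n : ℤ, (d : ℝ) ^ J * x = x + n) : Fx d x := by
  have h0 : Fx (d ^ J) x := by
    obtain ⟨n, hn⟩ := hp
    exact ⟨n, by push_cast; exact hn⟩
  obtain ⟨n, hn⟩ := h0.fwd K
  have h1 := h.later (J * K - K)
  have hle : K ≤ J * K := Nat.le_mul_of_pos_left _ hJ
  rw [show K + (J * K - K) = J * K by omega, pow_mul] at h1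
  push_cast at hn
  rw [hn] at h1
  have := h1.shift (-n)
  simpa using this

set_option maxHeartbeats 1000000 in
theorem no_lam (H : RL d r) (hd : 2 ≤ d) (F : HF d r) (P : PH r) {x y : ℝ} (h : r x y)
    (hn : ∀ n : ℤ, y ≠ x + n) : False := by
  obtain ⟨x, y, h, hL, hn⟩ := H.exists_acc P h hn
  obtain ⟨e0, he0, -⟩ := H.to_vertex hd F (Or.inl rfl) (acc_one.2 ⟨h, hL⟩) hn
  obtain ⟨⟨p, q, η⟩, he, hloop⟩ := exists_loop (VE_finite hd) ⟨e0, he0⟩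
    (fun e e' => ∀ ε > 0, Rε d r e e' ε) (fun e he => H.R_total hd F P he)
    (fun e he e' he' e'' he'' a b => H.R_trans hd he he' he'' a b)
  obtain ⟨-, -, hp, -, -, hq, hη, hA⟩ := he
  simp only at hp hq hη hA
  have hd' : (2 : ℝ) ≤ d := by exact_mod_cast hd
  obtain ⟨δ1, δ10, hδ1⟩ := lift_eta H (by omega) hη hA
  have hd0 : (0 : ℝ) < 1 / (4 * d) := by positivity
  obtain ⟨s, t, k, n, m, s0, s1, t0, t1, hA', e1, e2⟩ := hloop (δ1 / 2) (by linarith)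
  simp only at hA' e1 e2
  obtain ⟨δ', δ'0, hδ'⟩ := lift_eta (H.pow k) (Nat.one_le_pow _ _ (by omega)) hη hA'
  push_cast at hδ'
  rw [e1, e2] at hδ'
  obtain ⟨δ, δ0, d1, d2, d3⟩ : ∃ δ, 0 < δ ∧ δ ≤ δ' ∧ δ ≤ δ1 / 2 ∧ δ ≤ 1 / (4 * d) :=
    ⟨min δ' (min (δ1 / 2) (1 / (4 * d))), lt_min δ'0 (lt_min (by linarith) hd0),
      min_le_left _ _, (min_le_right _ _).trans (min_le_left _ _),
      (min_le_right _ _).trans (min_le_right _ _)⟩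
  -- choose j
  obtain ⟨j, hj⟩ := pow_unbounded_of_one_lt ((s + t + δ) / δ) (show (1 : ℝ) < d by linarith)
  rw [div_lt_iff₀ δ0] at hj
  have hk1 : (1 : ℝ) ≤ (d : ℝ) ^ k := one_le_pow₀ (by linarith)
  have hj1 : (1 : ℝ) ≤ (d : ℝ) ^ j := one_le_pow₀ (by linarith)
  have hJ : 1 ≤ j := by
    by_contra hh
    have : j = 0 := by omega
    rw [this] at hj; simp at hj; linarith
  obtain ⟨S, hS⟩ : ∃ S, S = s / (d : ℝ) ^ j := ⟨_, rfl⟩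
  obtain ⟨T, hT⟩ : ∃ T, T = t / (d : ℝ) ^ j := ⟨_, rfl⟩
  obtain ⟨M, hM⟩ : ∃ M, M = (d : ℝ) ^ (k + j) := ⟨_, rfl⟩
  have hM' : M = (d : ℝ) ^ k * (d : ℝ) ^ j := by rw [hM, pow_add]
  have hM2 : 2 ≤ M := by
    calc (2 : ℝ) ≤ d := hd'
      _ ≤ (d : ℝ) ^ (k + j) := le_self_pow₀ (by linarith) (by omega)
      _ = M := hM.symm
  have S0 : 0 < S := by rw [hS]; positivity
  have T0 : 0 < T := by rw [hT]; positivity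
  have hMj : (d : ℝ) ^ j ≤ M := by rw [hM']; nlinarith
  have hdM : δ / M ≤ δ / (d : ℝ) ^ j := by gcongr
  have b1 : S + δ / M < δ := by
    have : s / (d : ℝ) ^ j + δ / (d : ℝ) ^ j < δ := by
      rw [← add_div, div_lt_iff₀ (by positivity)]; linarith
    rw [hS]; linarith
  have b2 : T + δ / M < δ := by
    have : t / (d : ℝ) ^ j + δ / (d : ℝ) ^ j < δ := by
      rw [← add_div, div_lt_iff₀ (by positivity)]; linarith
    rw [hT]; linarith
  have hst : ∀ σ τ, 0 < σ → σ < δ → 0 < τ → τ < δ → r (p + η * σ) (q - η * τ) →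
      r (p + η * (S + σ / M)) (q - η * (T + τ / M)) := by
    intro σ τ a1 a2 a3 a4 a5
    have c1 := hδ' σ τ a1 (by linarith) a3 (by linarith) (by
      have := H.shl n (H.shift _ _ m a5)
      convert this using 1 <;> ring)
    have g1 := div_le_self a1.le hk1
    have g2 := div_le_self a3.le hk1
    have c2 := H.iter_scale hd hp hq hδ1 (σ := s + σ / d ^ k) (τ := t + τ / d ^ k) (by positivity)
      (by linarith) (by positivity) (by linarith) (by convert c1 using 1 <;> ring) j
    convert c2 using 1
    · rw [hS, hM']; field_simp
    · rw [hT, hM']; field_simp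
  have hM1 : M - 1 ≠ 0 := by linarith
  obtain ⟨p1, hp1⟩ := hp.fwd (k + j)
  obtain ⟨q1, hq1⟩ := hq.fwd (k + j)
  obtain ⟨p2, hp2⟩ := hp.fwd k
  obtain ⟨q2, hq2⟩ := hq.fwd k
  rw [← hM] at hp1 hq1
  have hSM : S * M = s * (d : ℝ) ^ k := by rw [hS, hM']; field_simp
  have hTM : T * M = t * (d : ℝ) ^ k := by rw [hT, hM']; field_simp
  obtain ⟨u, hu⟩ : ∃ u, u = S * M / (M - 1) := ⟨_, rfl⟩
  obtain ⟨v, hv⟩ : ∃ v, v = T * M / (M - 1) := ⟨_, rfl⟩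
  have hu1 : (M - 1) * u = s * (d : ℝ) ^ k := by rw [hu, ← hSM]; field_simp
  have hv1 : (M - 1) * v = t * (d : ℝ) ^ k := by rw [hv, ← hTM]; field_simp
  have X1 : M * (p + η * u) = p + η * u + ((p1 + n - p2 : ℤ) : ℝ) := by
    push_cast; linear_combination hp1 + η * hu1 + e1 - hp2
  have Y1 : M * (q - η * v) = q - η * v + ((q1 + m - q2 : ℤ) : ℝ) := by
    push_cast; linear_combination hq1 - η * hv1 + e2 - hq2
  have hMr : Rt (M - 1) := ⟨(d : ℚ) ^ (k + j) - 1, by push_cast; rw [hM]⟩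
  have rX : Rt (p + η * u) := Rt.of_mul hMr hM1 (by
    have : (M - 1) * (p + η * u) = ((p1 + n - p2 : ℤ) : ℝ) := by linarith
    rw [this]; exact Rt.int _)
  have rY : Rt (q - η * v) := Rt.of_mul hMr hM1 (by
    have : (M - 1) * (q - η * v) = ((q1 + m - q2 : ℤ) : ℝ) := by linarith
    rw [this]; exact Rt.int _)
  have u0 : 0 < u := by rw [hu]; exact div_pos (mul_pos S0 (by linarith)) (by linarith)
  have v0 : 0 < v := by rw [hv]; exact div_pos (mul_pos T0 (by linarith)) (by linarith)
  have ub : u < δ := by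
    have g : M * (S + δ / M) < M * δ := by apply mul_lt_mul_of_pos_left b1; linarith
    have g' : M * (δ / M) = δ := by field_simp
    rw [mul_add, g'] at g
    rw [hu, div_lt_iff₀ (by linarith)]; linarith
  have vb : v < δ := by
    have g : M * (T + δ / M) < M * δ := by apply mul_lt_mul_of_pos_left b2; linarith
    have g' : M * (δ / M) = δ := by field_simp
    rw [mul_add, g'] at g
    rw [hv, div_lt_iff₀ (by linarith)]; linarith
  have hR := contract H (p := p) (q := q) (by linarith : 1 < M) S0 T0 hη b1 b2 hA δ0 hst
    (by rw [← hu]; exact rX) (by rw [← hv]; exact rY)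
  rw [← hu, ← hv] at hR
  have hquart : 1 / (4 * (d : ℝ)) = 1 / d / 4 := by field_simp
  rw [hquart] at d3
  have hpos : (0 : ℝ) < 1 / d := by positivity
  have hnt : ∀ n : ℤ, q - η * v ≠ p + η * u + n := by
    intro i hi
    have hpi := hp.shift i
    rcases hη with rfl | rfl
    · exact Fx.close hd hpi hq (by linarith) (by linarith)
    · exact Fx.close hd hq hpi (by linarith) (by linarith)
  obtain ⟨K, hK⟩ := F _ _ hR hnt
  have hfx : Fx d (p + η * u) := Fx.of_periodic (J := k + j) (by omega) hK
    ⟨_, by rw [← hM]; exact X1⟩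
  rcases hη with rfl | rfl
  · exact Fx.close hd hp hfx (by linarith) (by linarith)
  · exact Fx.close hd hfx hp (by linarith) (by linarith)

end RL
namespace RL

theorem coe_eq {x y : ℝ} : ((x : Circle1) = (y : Circle1)) ↔ ∃ n : ℤ, y = x + n := by
  constructor
  · intro h
    have h1 : ((y - x : ℝ) : Circle1) = 0 := by
      rw [AddCircle.coe_sub, h, sub_self]
    obtain ⟨n, hn⟩ := (AddCircle.coe_eq_zero_iff (1 : ℝ)).1 h1
    refine ⟨n, ?_⟩
    simp at hn
    linarith
  · rintro ⟨n, rfl⟩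
    have h1 : ((n : ℝ) : Circle1) = 0 :=
      (AddCircle.coe_eq_zero_iff (1 : ℝ)).2 ⟨n, by simp⟩
    rw [AddCircle.coe_add, h1, add_zero]

theorem coe_shift (x : ℝ) (n : ℤ) : ((x + n : ℝ) : Circle1) = (x : Circle1) :=
  (coe_eq.2 ⟨n, rfl⟩).symm

theorem coe_surj (z : Circle1) : ∃ x : ℝ, (x : Circle1) = z :=
  QuotientAddGroup.mk_surjective z

theorem coe_cont : Continuous (fun x : ℝ => (x : Circle1)) := AddCircle.continuous_mk' 1

theorem mem_ratC {x : ℝ} : (x : Circle1) ∈ ratC ↔ Rt x := by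
  constructor
  · rintro ⟨q, hq⟩
    obtain ⟨n, hn⟩ := coe_eq.1 hq
    exact ⟨q - n, by push_cast; linarith⟩
  · rintro ⟨q, rfl⟩
    exact ⟨q, rfl⟩

theorem md_coe (d : ℕ) (x : ℝ) : md d (x : Circle1) = ((d * x : ℝ) : Circle1) := by
  unfold md
  rw [← nsmul_eq_mul, AddCircle.coe_nsmul]

theorem md_iter (d n : ℕ) (x : ℝ) : (md d)^[n] (x : Circle1) = (((d : ℝ) ^ n * x : ℝ) : Circle1) := by
  induction n with
  | zero => simp
  | succ n ih =>
    rw [Function.iterate_succ_apply', ih, md_coe]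
    congr 1; ring

/-- separation of the two sides of a chord -/
theorem sep {a b u v : ℝ} (h1 : a < u) (h2 : u < b) (h3 : b < v) (h4 : v < a + 1)
    {S : Set Circle1} (hS : IsPreconnected S) (ha : (a : Circle1) ∉ S) (hb : (b : Circle1) ∉ S)
    (hu : (u : Circle1) ∈ S) (hv : (v : Circle1) ∈ S) : False := by
  have op : IsOpenMap (fun x : ℝ => (x : Circle1)) := QuotientAddGroup.isOpenMap_coe
  have := hS ((fun x : ℝ => (x : Circle1)) '' Ioo a b) ((fun x : ℝ => (x : Circle1)) '' Ioo b (a + 1))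
    (op _ isOpen_Ioo) (op _ isOpen_Ioo) ?_ ⟨_, hu, u, ⟨h1, h2⟩, rfl⟩ ⟨_, hv, v, ⟨h3, h4⟩, rfl⟩
  · obtain ⟨z, -, ⟨x, ⟨x1, x2⟩, rfl⟩, y, ⟨y1, y2⟩, hy⟩ := this
    obtain ⟨n, hn⟩ := coe_eq.1 hy
    have a1 : (-1 : ℝ) < n := by linarith
    have a2 : (n : ℝ) < 0 := by linarith
    have a1' : -1 < n := by exact_mod_cast a1
    have a2' : n < 0 := by exact_mod_cast a2
    omega
  · intro z hz
    obtain ⟨x, rfl⟩ := coe_surj z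
    obtain ⟨n, n1, n2⟩ := norm_rep a x
    rw [← coe_shift x n] at hz ⊢
    rcases lt_trichotomy (x + n) b with g | g | g
    · exact Or.inl ⟨_, ⟨n1, g⟩, rfl⟩
    · rw [g] at hz; exact absurd hz hb
    · rcases eq_or_lt_of_le n2 with g' | g'
      · rw [g'] at hz
        have : ((a + 1 : ℝ) : Circle1) = (a : Circle1) := by
          have := coe_shift a 1; simpa using this
        rw [this] at hz; exact absurd hz ha
      · exact Or.inr ⟨_, ⟨g, g'⟩, rfl⟩

def lr {d : ℕ} (lam : InvRatLam d) (x y : ℝ) : Prop := lam.rel (x : Circle1) (y : Circle1)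

theorem lr_RL {d : ℕ} (hd : 2 ≤ d) (lam : InvRatLam d) : RL d (lr lam) where
  rat x y h := ⟨mem_ratC.1 (lam.rel_rat _ _ h).1, mem_ratC.1 (lam.rel_rat _ _ h).2⟩
  refl x h := lam.refl _ (mem_ratC.2 h)
  symm x y h := lam.symm _ _ h
  trans x y z h h' := lam.trans _ _ _ h h'
  shift x y n h := by unfold lr at *; rw [coe_shift]; exact h
  closed x y hx hy h := by
    refine lam.closed' _ (mem_ratC.2 hx) _ (mem_ratC.2 hy) ?_
    have hc : Continuous (fun p : ℝ × ℝ => ((p.1 : Circle1), (p.2 : Circle1))) :=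
      (coe_cont.comp continuous_fst).prodMk (coe_cont.comp continuous_snd)
    have hcl : (x, y) ∈ closure {p : ℝ × ℝ | lr lam p.1 p.2} := by
      rw [Metric.mem_closure_iff]
      intro ε hε
      obtain ⟨x', y', h1, h2, h3⟩ := h ε hε
      refine ⟨(x', y'), h3, ?_⟩
      rw [Prod.dist_eq, max_lt_iff, Real.dist_eq, Real.dist_eq, abs_sub_comm, abs_sub_comm y]
      exact ⟨h1, h2⟩
    have hm : Set.MapsTo (fun p : ℝ × ℝ => ((p.1 : Circle1), (p.2 : Circle1)))
        {p : ℝ × ℝ | lr lam p.1 p.2} {p : Circle1 × Circle1 | lam.rel p.1 p.2} := fun p hp => hp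
    have h2 := map_mem_closure hc hcl hm
    exact h2
  fin z a b := by
    have hf := lam.finiteClass (z : Circle1)
    have : {w | a ≤ w ∧ w ≤ b ∧ lr lam z w} ⊆
        ⋃ c ∈ relClass lam.rel (z : Circle1), {w : ℝ | a ≤ w ∧ w ≤ b ∧ (w : Circle1) = c} := by
      rintro w ⟨h1, h2, h3⟩
      simp only [mem_iUnion]
      exact ⟨(w : Circle1), h3, h1, h2, rfl⟩
    refine (hf.biUnion fun c _ => ?_).subset this
    obtain ⟨c0, rfl⟩ := coe_surj c
    refine ((Set.finite_Icc ⌊a - c0⌋ ⌈b - c0⌉).image (fun n : ℤ => c0 + (n : ℝ))).subset ?_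
    rintro w ⟨h1, h2, h3⟩
    obtain ⟨n, hn⟩ := coe_eq.1 h3.symm
    refine ⟨n, ⟨?_, ?_⟩, hn.symm⟩
    · have : ((⌊a - c0⌋ : ℤ) : ℝ) ≤ n := by linarith [Int.floor_le (a - c0)]
      exact_mod_cast this
    · have : (n : ℝ) ≤ ((⌈b - c0⌉ : ℤ) : ℝ) := by linarith [Int.le_ceil (b - c0)]
      exact_mod_cast this
  cross a x b y h1 h2 h3 h4 h5 h6 := by
    by_contra hcon
    obtain ⟨z, hz, hsub⟩ := lam.unlinkedClass _ _ hcon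
    have hrx : lam.rel (x : Circle1) (x : Circle1) := lam.refl _ (lam.rel_rat _ _ h6).1
    have hra : lam.rel (a : Circle1) (a : Circle1) := lam.refl _ (lam.rel_rat _ _ h5).1
    have hss := connectedComponentIn_subset (relClass lam.rel (a : Circle1))ᶜ z
    exact sep h1 h2 h3 h4 isPreconnected_connectedComponentIn (fun h => hss h hra)
      (fun h => hss h h5) (hsub hrx) (hsub h6)
  fwd x y h := by
    have := (lam.invariant _ (lam.rel_rat _ _ h).1).1
    have h1 : md d (y : Circle1) ∈ md d '' relClass lam.rel (x : Circle1) := ⟨_, h, rfl⟩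
    rw [this, md_coe, md_coe] at h1
    exact h1
  lift x z h := by
    have hx : Rt x := Rt.of_mul (Rt.nat d) (by have : d ≠ 0 := by omega
                                               exact_mod_cast this)
      (mem_ratC.1 (lam.rel_rat _ _ h).1)
    have h1 : (z : Circle1) ∈ relClass lam.rel (md d (x : Circle1)) := by
      rw [md_coe]; exact h
    rw [← (lam.invariant _ (mem_ratC.2 hx)).1] at h1
    obtain ⟨y, hy, hyz⟩ := h1
    obtain ⟨y, rfl⟩ := coe_surj y
    rw [md_coe] at hyz
    obtain ⟨n, hn⟩ := coe_eq.1 hyz.symm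
    exact ⟨y, n, hy, hn⟩

theorem unl_of {d : ℕ} (lam : InvRatLam d) (H : RL d (lr lam)) {a b θ θ' : ℝ}
    (hab : lr lam a b) (hfree : ∀ w, a < w → w < b → ¬ lr lam a w) (hb1 : b ≤ a + 1)
    (h1 : a < θ) (h2 : θ < b) (h1' : a < θ') (h2' : θ' < b) (hθ : ¬ Rt θ) (hθ' : ¬ Rt θ')
    (hE : ¬ Enc (lr lam) a b θ) (hE' : ¬ Enc (lr lam) a b θ') :
    UnlRel lam.rel (θ : Circle1) (θ' : Circle1) := by
  refine ⟨fun h => hθ (mem_ratC.1 h), fun h => hθ' (mem_ratC.1 h), Or.inr fun x hx => ?_⟩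
  obtain ⟨x, rfl⟩ := coe_surj x
  suffices key : ∀ θ θ', a < θ → θ ≤ θ' → θ' < b → ¬ Rt θ → ¬ Rt θ' → ¬ Enc (lr lam) a b θ →
      ¬ Enc (lr lam) a b θ' → ∃ S : Set Circle1, IsPreconnected S ∧ (θ : Circle1) ∈ S ∧
      (θ' : Circle1) ∈ S ∧ S ⊆ (relClass lam.rel (x : Circle1))ᶜ by
    obtain ⟨S, s1, s2, s3, s4⟩ : ∃ S : Set Circle1, IsPreconnected S ∧ (θ : Circle1) ∈ S ∧
      (θ' : Circle1) ∈ S ∧ S ⊆ (relClass lam.rel (x : Circle1))ᶜ := by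
      rcases le_total θ θ' with g | g
      · exact key θ θ' h1 g h2' hθ hθ' hE hE'
      · obtain ⟨S, s1, s2, s3, s4⟩ := key θ' θ h1' g h2 hθ' hθ hE' hE
        exact ⟨S, s1, s3, s2, s4⟩
    exact s1.subset_connectedComponentIn s2 s4 s3
  clear h1 h2 h1' h2' hθ hθ' hE hE' θ θ'
  intro θ θ' h1 h2 h3 hθ hθ' hE hE'
  by_cases hc : ∃ c, θ ≤ c ∧ c ≤ θ' ∧ lr lam x c
  · obtain ⟨c, c1, c2, c3⟩ := hc
    have hcr := (H.rat _ _ c3).2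
    have c1' : θ < c := lt_of_le_of_ne c1 (fun e => hθ (e ▸ hcr))
    have c2' : c < θ' := lt_of_le_of_ne c2 (fun e => hθ' (e ▸ hcr))
    refine ⟨(fun x : ℝ => (x : Circle1)) '' Icc θ' (θ + 1), isPreconnected_Icc.image _
      coe_cont.continuousOn, ⟨θ + 1, ⟨by linarith, le_rfl⟩, ?_⟩, ⟨θ', ⟨le_rfl, by linarith⟩, rfl⟩, ?_⟩
    · have := coe_shift θ 1; simpa using this
    · rintro _ ⟨w, ⟨w1, w2⟩, rfl⟩ hw
      have hw : lr lam x w := hw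
      have hcw : lr lam c w := H.trans _ _ _ (H.symm _ _ c3) hw
      have hac : ¬ lr lam a c := hfree c (by linarith) (by linarith)
      have hwr := (H.rat _ _ hw).2
      have w1' : θ' < w := lt_of_le_of_ne w1 (fun e => hθ' (e ▸ hwr))
      have w2' : w < θ + 1 := lt_of_le_of_ne w2 (fun e => hθ (by
        have := hwr.sub (Rt.int 1); rw [e] at this; simpa using this))
      rcases lt_trichotomy w b with g | g | g
      · exact hE' ⟨c, w, by linarith, c2', w1', g, hcw⟩
      · rw [g] at hcw
        exact hac (H.trans _ _ _ hab (H.symm _ _ hcw))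
      · have hs := H.shift _ _ (-1) hcw
        have e1 : w + ((-1 : ℤ) : ℝ) = w - 1 := by push_cast; ring
        rw [e1] at hs
        rcases lt_trichotomy w (a + 1) with g' | g' | g'
        · exact hac (H.cross a c b w (by linarith) (by linarith) g g' hab hcw)
        · rw [g', add_sub_cancel_right] at hs
          exact hac (H.symm _ _ hs)
        · exact hE ⟨w - 1, c, by linarith, by linarith, c1', by linarith, H.symm _ _ hs⟩
  · push Not at hc
    refine ⟨(fun x : ℝ => (x : Circle1)) '' Icc θ θ', isPreconnected_Icc.image _
      coe_cont.continuousOn, ⟨θ, ⟨le_rfl, h2⟩, rfl⟩, ⟨θ', ⟨h2, le_rfl⟩, rfl⟩, ?_⟩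
    rintro _ ⟨w, ⟨w1, w2⟩, rfl⟩ hw
    exact hc w w1 w2 hw

theorem gap_class {d : ℕ} (hd : 2 ≤ d) (lam : InvRatLam d) {a b : ℝ} (h1 : a < b) (h2 : b ≤ a + 1)
    (hab : lr lam a b) (hfree : ∀ w, a < w → w < b → ¬ lr lam a w) (hacc : ¬ Lim (lr lam) a b) :
    ∃ θ, a < θ ∧ θ < b ∧ ¬ Rt θ ∧ {θ' | UnlRel lam.rel (θ : Circle1) θ'}.Infinite ∧
      (a : Circle1) ∈ closure {θ' | UnlRel lam.rel (θ : Circle1) θ'} := by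
  have H := lr_RL hd lam
  obtain ⟨θ, t1, -, t2, t3, t4⟩ := H.gap hd h1 h2 hab hfree hacc one_pos
  have hcl : (a : Circle1) ∈ closure {θ' | UnlRel lam.rel (θ : Circle1) θ'} := by
    have : a ∈ closure {x : ℝ | UnlRel lam.rel (θ : Circle1) (x : Circle1)} := by
      rw [Metric.mem_closure_iff]
      intro ε hε
      obtain ⟨θ', s1, s0, s2, s3, s4⟩ := H.gap hd h1 h2 hab hfree hacc hε
      refine ⟨θ', unl_of lam H hab hfree h2 t1 t2 s1 s2 t3 s3 t4 s4, ?_⟩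
      rw [Real.dist_eq, abs_sub_comm, abs_of_pos] <;> linarith
    exact map_mem_closure coe_cont this (fun p hp => hp)
  refine ⟨θ, t1, t2, t3, fun hfin => ?_, hcl⟩
  rw [hfin.isClosed.closure_eq] at hcl
  exact hcl.2.1 (lam.rel_rat _ _ hab).1

theorem lr_PH {d : ℕ} (hd : 2 ≤ d) (lam : InvRatLam d) (P : PrimitiveLam d lam.rel) :
    PH (lr lam) := by
  intro a b a' b' h1 h2 h3 h4 h5 hab haa' hab' hf hf'
  have H := lr_RL hd lam
  by_contra hcon
  push Not at hcon
  obtain ⟨c1, c2⟩ := hcon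
  obtain ⟨θ, t1, t2, t3, t4, t5⟩ := gap_class hd lam h1 h5.le hab hf c1
  obtain ⟨θ', s1, s2, s3, s4, s5⟩ := gap_class hd lam h3 (by linarith)
    (H.trans _ _ _ (H.symm _ _ haa') hab')
    (fun w w1 w2 w3 => hf' w w1 w2 (H.trans _ _ _ haa' w3)) c2
  have hra : lam.rel (a : Circle1) (a : Circle1) := lam.refl _ (lam.rel_rat _ _ hab).1
  refine P ⟨_, _, (a : Circle1), ⟨_, fun h => t3 (mem_ratC.1 h), rfl⟩, t4,
    ⟨_, fun h => s3 (mem_ratC.1 h), rfl⟩, s4, ?_, (lam.rel_rat _ _ hab).1,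
    ⟨_, hra, t5⟩, ⟨_, haa', s5⟩⟩
  intro heq
  have hm : (θ' : Circle1) ∈ {z | UnlRel lam.rel (θ' : Circle1) z} :=
    ⟨fun h => s3 (mem_ratC.1 h), fun h => s3 (mem_ratC.1 h), Or.inl rfl⟩
  rw [← heq] at hm
  have hθc : (θ : Circle1) ∈ (relClass lam.rel (a : Circle1))ᶜ := fun h =>
    t3 (mem_ratC.1 (lam.rel_rat _ _ h).2)
  have hself := mem_connectedComponentIn hθc
  have hmem : (θ' : Circle1) ∈ connectedComponentIn (relClass lam.rel (a : Circle1))ᶜ θ := by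
    rcases hm.2.2 with e | e
    · rw [← e]; exact hself
    · exact e _ (lam.rel_rat _ _ hab).1
  have hss := connectedComponentIn_subset (relClass lam.rel (a : Circle1))ᶜ (θ : Circle1)
  exact sep t1 t2 (show b < θ' by linarith) (by linarith) isPreconnected_connectedComponentIn
    (fun h => hss h hra) (fun h => hss h hab) hself hmem

theorem unif_period {d : ℕ} (F : Set Circle1) (hF : F.Finite) (hFr : F ⊆ ratC) :
    ∃ N, 1 ≤ N ∧ ∀ f ∈ F, ∃ z : ℝ, (z : Circle1) = f ∧ ∃ K : ℕ, Fx (d ^ N) ((d : ℝ) ^ K * z) := by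
  induction F, hF using Set.Finite.induction_on with
  | empty => exact ⟨1, le_rfl, by simp⟩
  | @insert f s hf hs ih =>
    obtain ⟨N, hN, h⟩ := ih ((subset_insert _ _).trans hFr)
    obtain ⟨z, rfl⟩ := coe_surj f
    obtain ⟨K, N', hN', n, hn⟩ := preper d (mem_ratC.1 (hFr (mem_insert _ _)))
    have mon : ∀ (A B : ℕ) (w : ℝ), Fx (d ^ A) w → Fx (d ^ (A * B)) w := by
      intro A B w hw
      obtain ⟨n, hn⟩ := hw.fwd B
      refine ⟨n, ?_⟩
      rw [← hn]; push_cast; rw [pow_mul]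
    refine ⟨N * N', Nat.mul_pos hN hN', ?_⟩
    intro g hg
    rcases mem_insert_iff.1 hg with rfl | hg
    · refine ⟨z, rfl, K, ?_⟩
      rw [mul_comm]
      apply mon
      refine ⟨n, ?_⟩
      rw [← hn]; push_cast; ring
    · obtain ⟨z', hz', K', hK'⟩ := h g hg
      exact ⟨z', hz', K', mon _ _ _ hK'⟩

theorem lr_HF {d : ℕ} (lam : InvRatLam d) (F : Set Circle1) (hF : F.Finite)
    (hFr : F ⊆ ratC) (hs : suppRel lam.rel ⊆ grandOrbit d F) :
    ∃ N, 1 ≤ N ∧ HF (d ^ N) (lr lam) := by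
  obtain ⟨N, hN, h⟩ := unif_period (d := d) F hF hFr
  refine ⟨N, hN, fun x y hxy hn => ?_⟩
  have hx : (x : Circle1) ∈ suppRel lam.rel := by
    refine ⟨_, hxy, fun e => ?_⟩
    obtain ⟨n, hn'⟩ := coe_eq.1 e.symm
    exact hn n hn'
  obtain ⟨n, m, f, hf, e⟩ := hs hx
  obtain ⟨z, rfl, K, hK⟩ := h f hf
  rw [md_iter, md_iter] at e
  obtain ⟨i, hi⟩ := coe_eq.1 e
  have hle : n + K ≤ N * (n + K) := Nat.le_mul_of_pos_left _ hN
  obtain ⟨e, he⟩ : ∃ e, N * (n + K) = n + K + e := ⟨_, (Nat.add_sub_cancel' hle).symm⟩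
  refine ⟨n + K, ?_⟩
  have e1 : ((d ^ N : ℕ) : ℝ) ^ (n + K) * x =
      (d : ℝ) ^ (m + e) * ((d : ℝ) ^ K * z) + ((d ^ (K + e) * i : ℤ) : ℝ) := by
    push_cast
    rw [← pow_mul, he]
    have : (d : ℝ) ^ (n + K + e) * x = (d : ℝ) ^ (K + e) * ((d : ℝ) ^ n * x) := by ring
    rw [this, hi]; ring
  rw [e1]
  apply Fx.shift
  obtain ⟨c, hc⟩ := hK
  refine ⟨d ^ (m + e) * c, ?_⟩
  push_cast at hc ⊢
  linear_combination (d : ℝ) ^ (m + e) * hc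

end RL

/-- A non-trivial `d`-invariant rational lamination whose support is
contained in the `m_d`-grand orbit of a finite set is not primitive. -/
theorem support_in_grand_orbit_not_primitive (d : ℕ) (hd : 2 ≤ d)
    (lam : InvRatLam d) (hnt : ∃ x y, lam.rel x y ∧ x ≠ y)
    (F : Set Circle1) (hF : F.Finite) (hFrat : F ⊆ ratC)
    (hsupp : suppRel lam.rel ⊆ grandOrbit d F) :
    ¬ PrimitiveLam d lam.rel := by
  intro P
  obtain ⟨x, y, hxy, hne⟩ := hnt
  obtain ⟨x, rfl⟩ := RL.coe_surj x
  obtain ⟨y, rfl⟩ := RL.coe_surj y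
  obtain ⟨N, hN, hHF⟩ := RL.lr_HF lam F hF hFrat hsupp
  have hD : 2 ≤ d ^ N := hd.trans (Nat.le_self_pow (by omega) d)
  exact RL.no_lam ((RL.lr_RL hd lam).pow N) hD hHF (RL.lr_PH hd lam P) (x := x) (y := y) hxy
    (fun n hn => hne (RL.coe_eq.2 ⟨n, hn⟩))
end
end

section
/- Let λ₀ be a non-trivial primitive d-invariant rational lamination, E the m_d-grand orbit of a finite subset of Q/Z, and λ the restriction of λ₀ to (Q/Z \ E) × (Q/Z \ E). Then λ₀ is the smallest closed equivalence relation on Q/Z containing λ. -/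
noncomputable section
open Set Function

/-- A closed equivalence relation on `ℚ/ℤ`. -/
def ClosedEqvRat (r : Circle1 → Circle1 → Prop) : Prop :=
  (∀ x y, r x y → x ∈ ratC ∧ y ∈ ratC) ∧ (∀ x ∈ ratC, r x x) ∧
  (∀ x y, r x y → r y x) ∧ (∀ x y z, r x y → r y z → r x z) ∧
  (∀ x ∈ ratC, ∀ y ∈ ratC,
    (x, y) ∈ closure {p : Circle1 × Circle1 | r p.1 p.2} → r x y)


structure Lm (d : ℕ) (R : ℝ → ℝ → Prop) : Prop where
  two : 2 ≤ d
  rat : ∀ x, R x x ↔ ∃ q : ℚ, (q : ℝ) = x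
  symm : ∀ x y, R x y → R y x
  trans : ∀ x y z, R x y → R y z → R x z
  shift : ∀ x y (j : ℤ), R x y → R x (y + j)
  closed : ∀ x y, R x x → R y y →
    (∀ ε > 0, ∃ x' y', |x' - x| < ε ∧ |y' - y| < ε ∧ R x' y') → R x y
  fin : ∀ c k, ∃ ε > 0, ∀ x, x ≠ k → |x - k| < ε → ¬ R c x
  cross : ∀ a b c e, a < b → b < c → c < e → e < a + 1 → R a c → R b e → R a b
  fwd : ∀ x y, R x y → R (d * x) (d * y)
  onto : ∀ x z, R x x → R (d * x) z → ∃ (y : ℝ) (j : ℤ), R x y ∧ d * y = z + j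

theorem exists_int_shift (x a : ℝ) : ∃ i : ℤ, a ≤ x + i ∧ x + i < a + 1 := by
  refine ⟨-⌊x - a⌋, ?_, ?_⟩
  · have := Int.floor_le (x - a); push_cast; linarith
  · have := Int.lt_floor_add_one (x - a); push_cast; linarith

namespace Lm

variable {d : ℕ} {R : ℝ → ℝ → Prop}

theorem left (h : Lm d R) {x y : ℝ} (hxy : R x y) : R x x := h.trans _ _ _ hxy (h.symm _ _ hxy)
theorem right (h : Lm d R) {x y : ℝ} (hxy : R x y) : R y y := h.trans _ _ _ (h.symm _ _ hxy) hxy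

theorem shl (h : Lm d R) {x y : ℝ} (i j : ℤ) (hxy : R x y) : R (x + i) (y + j) :=
  h.shift _ _ j (h.symm _ _ (h.shift _ _ i (h.symm _ _ hxy)))

theorem unsh (h : Lm d R) {x y : ℝ} (i j : ℤ) (hxy : R (x + i) (y + j)) : R x y := by
  have := h.shl (-i) (-j) hxy
  push_cast at this
  simpa [add_assoc] using this

theorem dpos (h : Lm d R) (n : ℕ) : (0 : ℝ) < (d : ℝ) ^ n := by
  have := h.two
  positivity

theorem fwdn (h : Lm d R) (n : ℕ) {x y : ℝ} (hxy : R x y) :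
    R ((d : ℝ) ^ n * x) ((d : ℝ) ^ n * y) := by
  induction n with
  | zero => simpa using hxy
  | succ n ih =>
    have := h.fwd _ _ ih
    simpa [pow_succ', mul_assoc] using this

theorem onton (h : Lm d R) (n : ℕ) : ∀ {x z : ℝ}, R x x → R ((d : ℝ) ^ n * x) z →
    ∃ (y : ℝ) (j : ℤ), R x y ∧ (d : ℝ) ^ n * y = z + j := by
  induction n with
  | zero => intro x z hx hz; exact ⟨z, 0, by simpa using hz, by simp⟩
  | succ n ih =>
    intro x z hx hz
    obtain ⟨y, j, h1, h2⟩ := h.onto ((d : ℝ) ^ n * x) z (h.fwdn n hx)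
      (by simpa [pow_succ', mul_assoc] using hz)
    obtain ⟨y', j', h3, h4⟩ := ih hx h1
    refine ⟨y', j + d * j', h3, ?_⟩
    rw [pow_succ', mul_assoc, h4, mul_add, h2]; push_cast; ring

theorem reflect (h : Lm d R) : Lm d (fun x y => R (-x) (-y)) where
  two := h.two
  rat x := by
    rw [h.rat]
    constructor
    · rintro ⟨q, hq⟩; exact ⟨-q, by push_cast; linarith⟩
    · rintro ⟨q, hq⟩; exact ⟨-q, by push_cast; linarith⟩
  symm x y := h.symm _ _
  trans x y z := h.trans _ _ _
  shift x y j hxy := by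
    have := h.shift _ _ (-j) hxy
    push_cast at this
    rwa [neg_add]
  closed x y hx hy hh := by
    apply h.closed _ _ hx hy
    intro ε hε
    obtain ⟨x', y', h1, h2, h3⟩ := hh ε hε
    refine ⟨-x', -y', ?_, ?_, h3⟩
    · rw [abs_sub_comm] at h1; convert h1 using 2; ring
    · rw [abs_sub_comm] at h2; convert h2 using 2; ring
  fin c k := by
    obtain ⟨ε, hε, hh⟩ := h.fin (-c) (-k)
    refine ⟨ε, hε, fun x hx hxk => hh _ (by simpa using hx) ?_⟩
    rw [abs_sub_comm] at hxk; convert hxk using 2; ring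
  cross a b c e h1 h2 h3 h4 hac hbe := by
    have e1 := h.cross (-e) (-c) (-b) (-a) (by linarith) (by linarith) (by linarith) (by linarith)
      (h.symm _ _ hbe) (h.symm _ _ hac)
    exact h.trans _ _ _ hac (h.trans _ _ _ (h.symm _ _ e1) (h.symm _ _ hbe))
  fwd x y hxy := by
    have := h.fwd _ _ hxy
    simpa using this
  onto x z hx hz := by
    obtain ⟨y, j, h1, h2⟩ := h.onto (-x) (-z) hx (by simpa using hz)
    refine ⟨-y, -j, by simpa using h1, ?_⟩
    push_cast; linarith

theorem evper (h : Lm d R) {x : ℝ} (hx : R x x) :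
    ∃ (n p : ℕ) (j : ℤ), 1 ≤ p ∧ (d : ℝ) ^ (n + p) * x = (d : ℝ) ^ n * x + j := by
  obtain ⟨q, rfl⟩ := (h.rat x).1 hx
  have : NeZero q.den := ⟨q.den_nz⟩
  obtain ⟨a, b, hne, hab⟩ := Finite.exists_ne_map_eq_of_infinite
    (fun n : ℕ => (((d : ℤ) ^ n * q.num : ℤ) : ZMod q.den))
  have key : ∀ a b : ℕ, a < b →
      (((d : ℤ) ^ a * q.num : ℤ) : ZMod q.den) = (((d : ℤ) ^ b * q.num : ℤ) : ZMod q.den) →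
      ∃ (n p : ℕ) (j : ℤ), 1 ≤ p ∧ (d : ℝ) ^ (n + p) * q = (d : ℝ) ^ n * q + j := by
    intro a b hlt hab
    rw [ZMod.intCast_eq_intCast_iff_dvd_sub] at hab
    obtain ⟨j, hj⟩ := hab
    refine ⟨a, b - a, j, by omega, ?_⟩
    rw [show a + (b - a) = b by omega]
    have hq : (q : ℝ) = q.num / q.den := by exact_mod_cast (Rat.num_div_den q).symm
    have hden : (q.den : ℝ) ≠ 0 := by exact_mod_cast q.den_nz
    have hj' : (d : ℝ) ^ b * q.num - (d : ℝ) ^ a * q.num = q.den * j := by exact_mod_cast hj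
    rw [hq]; field_simp; linarith
  rcases lt_or_gt_of_ne hne with hlt | hlt
  · exact key a b hlt hab
  · exact key b a hlt hab.symm

def RLim (R : ℝ → ℝ → Prop) (k v : ℝ) : Prop :=
  ∀ ε > 0, ∃ u w, k < u ∧ u < k + ε ∧ |w - v| < ε ∧ R u w

theorem rlim_fwd (h : Lm d R) (n : ℕ) {k v : ℝ} (hr : RLim R k v) :
    RLim R ((d : ℝ) ^ n * k) ((d : ℝ) ^ n * v) := by
  intro ε hε
  have hd := h.dpos n
  obtain ⟨u, w, h1, h2, h3, h4⟩ := hr (ε / (d : ℝ) ^ n) (by positivity)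
  refine ⟨_, _, ?_, ?_, ?_, h.fwdn n h4⟩
  · gcongr
  · calc _ < (d : ℝ) ^ n * (k + ε / (d : ℝ) ^ n) := by gcongr
      _ = _ := by field_simp
  · rw [← mul_sub, abs_mul, abs_of_pos hd]
    rwa [lt_div_iff₀' hd] at h3

theorem rlim_shift (h : Lm d R) (i j : ℤ) {k v : ℝ} (hr : RLim R k v) :
    RLim R (k + i) (v + j) := by
  intro ε hε
  obtain ⟨u, w, h1, h2, h3, h4⟩ := hr ε hε
  refine ⟨_, _, ?_, ?_, ?_, h.shl i j h4⟩
  · linarith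
  · linarith
  · simpa using h3

theorem rlim_unique (h : Lm d R) {k v w : ℝ} (h1 : RLim R k v) (h2 : RLim R k w)
    (a : k < v) (b : v < w) (c : w < k + 1) : False := by
  set η := min (v - k) (min (w - v) (k + 1 - w)) / 3 with hη
  have e1 : 3 * η ≤ v - k := by rw [hη]; linarith [min_le_left (v - k) (min (w - v) (k + 1 - w))]
  have e2 : 3 * η ≤ w - v := by
    rw [hη]
    linarith [min_le_right (v - k) (min (w - v) (k + 1 - w)), min_le_left (w - v) (k + 1 - w)]
  have e3 : 3 * η ≤ k + 1 - w := by
    rw [hη]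
    linarith [min_le_right (v - k) (min (w - v) (k + 1 - w)), min_le_right (w - v) (k + 1 - w)]
  have e0 : 0 < η := by
    have : 0 < min (v - k) (min (w - v) (k + 1 - w)) :=
      lt_min (by linarith) (lt_min (by linarith) (by linarith))
    positivity
  obtain ⟨u2, w2, a1, a2, a3, a4⟩ := h2 η e0
  obtain ⟨ε2, hε2, hf⟩ := h.fin u2 k
  obtain ⟨u1, w1, b1, b2, b3, b4⟩ := h1 (min η (min ε2 (u2 - k)))
    (lt_min e0 (lt_min hε2 (by linarith)))
  have m1 := min_le_left η (min ε2 (u2 - k))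
  have m2 := min_le_right η (min ε2 (u2 - k))
  have m3 := min_le_left ε2 (u2 - k)
  have m4 := min_le_right ε2 (u2 - k)
  rw [abs_lt] at a3 b3
  have := h.cross u1 u2 w1 w2 (by linarith) (by linarith) (by linarith) (by linarith) b4 a4
  refine hf u1 (by linarith) ?_ (h.symm _ _ this)
  rw [abs_lt]; constructor <;> linarith

theorem rlim_rat (h : Lm d R) {k v : ℝ} (hk : R k k) (hr : RLim R k v) : R v v := by
  by_contra hv
  obtain ⟨n, p, j, hp, hj⟩ := h.evper hk
  have r1 := h.rlim_fwd n hr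
  have r2 := h.rlim_fwd (n + p) hr
  rw [hj] at r2
  obtain ⟨i1, p1, p2⟩ := exists_int_shift ((d : ℝ) ^ n * v) ((d : ℝ) ^ n * k)
  obtain ⟨i2, q1, q2⟩ := exists_int_shift ((d : ℝ) ^ (n + p) * v) ((d : ℝ) ^ n * k)
  have r1' := h.rlim_shift 0 i1 r1
  have r2' := h.rlim_shift (-j) i2 r2
  have hkq := (h.rat k).1 hk
  obtain ⟨kq, hkq⟩ := hkq
  have hd2 : (2 : ℝ) ≤ d := by exact_mod_cast h.two
  have ne1 : (d : ℝ) ^ n * k ≠ (d : ℝ) ^ n * v + i1 := by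
    intro e
    apply hv
    rw [h.rat]
    refine ⟨kq - i1 / d ^ n, ?_⟩
    have := h.dpos n
    push_cast
    rw [hkq]
    field_simp; linarith
  have ne2 : (d : ℝ) ^ n * k ≠ (d : ℝ) ^ (n + p) * v + i2 := by
    intro e
    apply hv
    rw [h.rat]
    refine ⟨(d ^ n * kq - i2) / d ^ (n + p), ?_⟩
    have := h.dpos (n + p)
    push_cast
    rw [hkq]
    field_simp; linarith
  have ne3 : (d : ℝ) ^ n * v + i1 ≠ (d : ℝ) ^ (n + p) * v + i2 := by
    intro e
    apply hv
    rw [h.rat]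
    refine ⟨(i1 - i2) / (d ^ (n + p) - d ^ n), ?_⟩
    have hlt : (d : ℝ) ^ n < (d : ℝ) ^ (n + p) :=
      pow_lt_pow_right₀ (by linarith) (by omega)
    have : (d : ℝ) ^ (n + p) - (d : ℝ) ^ n ≠ 0 := by
      intro e; linarith
    push_cast
    field_simp; linarith
  have r1'' : RLim R ((d : ℝ) ^ n * k) ((d : ℝ) ^ n * v + i1) := by simpa using r1'
  have r2'' : RLim R ((d : ℝ) ^ n * k) ((d : ℝ) ^ (n + p) * v + i2) := by
    simpa using r2'
  have s1 := lt_of_le_of_ne p1 ne1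
  have s2 := lt_of_le_of_ne q1 ne2
  rcases lt_or_gt_of_ne ne3 with hlt | hlt
  · exact h.rlim_unique r1'' r2'' s1 hlt q2
  · exact h.rlim_unique r2'' r1'' s2 hlt p2

theorem cov_join (h : Lm d R) {k η B : ℝ} (hB : B ≤ k + 1)
    (hcov : ∀ x, k < x → x < k + η → ∃ u v, k ≤ u ∧ u < x ∧ x < v ∧ v < B ∧ R u v)
    {x y : ℝ} (hx : k < x) (hxy : x ≤ y) (hy : y < k + η) :
    ∃ u v, k ≤ u ∧ u < x ∧ y < v ∧ v < B ∧ R u v := by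
  set S : Set ℝ := {v | ∃ u, k ≤ u ∧ u < x ∧ x < v ∧ v < B ∧ R u v} with hS
  have hne : S.Nonempty := by
    obtain ⟨u, v, hh⟩ := hcov x hx (by linarith)
    exact ⟨v, u, hh⟩
  have hbd : BddAbove S := ⟨B, by rintro v ⟨u, hh⟩; exact hh.2.2.2.1.le⟩
  by_cases hlt : y < sSup S
  · obtain ⟨v, ⟨u, a, b, c, e, f⟩, hv⟩ := exists_lt_of_lt_csSup hne hlt
    exact ⟨u, v, a, b, hv, e, f⟩
  · exfalso
    push Not at hlt
    have hxs : x < sSup S := by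
      obtain ⟨v, hv⟩ := hne
      have := le_csSup hbd hv
      obtain ⟨u, a, b, c, e, f⟩ := hv
      linarith
    obtain ⟨u', v', a', b', c', e', f'⟩ := hcov (sSup S) (by linarith) (by linarith)
    obtain ⟨v, hvS, hv⟩ := exists_lt_of_lt_csSup hne b'
    have hvle := le_csSup hbd hvS
    obtain ⟨u, a, b, c, e, f⟩ := hvS
    by_cases hux : u' < x
    · have := le_csSup hbd (show v' ∈ S from ⟨u', a', hux, by linarith, e', f'⟩)
      linarith
    · push Not at hux
      have h1 := h.cross u u' v v' (by linarith) hv (by linarith) (by linarith) f f'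
      have := le_csSup hbd (show v' ∈ S from ⟨u, a, b, by linarith, e', h.trans _ _ _ h1 f'⟩)
      linarith

theorem right_lim (h : Lm d R) {k η B : ℝ} (hk : R k k) (hη : 0 < η) (hB : B ≤ k + 1)
    (hcov : ∀ x, k < x → x < k + η → ∃ u v, k ≤ u ∧ u < x ∧ x < v ∧ v < B ∧ R u v) :
    (∃ v, k < v ∧ v < B ∧ R k v) ∨ (∃ v, k < v ∧ v ≤ B ∧ R k v ∧
      ∀ ε > 0, ∃ u w, k < u ∧ u < k + ε ∧ |w - v| < ε ∧ w < B ∧ R u w) := by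
  by_cases hex : ∃ v, k < v ∧ v < B ∧ R k v
  · exact Or.inl hex
  right
  have hch : ∀ n : ℕ, ∃ p : ℝ × ℝ, k ≤ p.1 ∧ p.1 < k + η / 2 / (n + 1) ∧ k + η / 2 < p.2 ∧
      p.2 < B ∧ R p.1 p.2 := by
    intro n
    have hpos : 0 < η / 2 / (n + 1 : ℝ) := by positivity
    have hle : η / 2 / (n + 1 : ℝ) ≤ η / 2 :=
      div_le_self (by positivity) (by linarith [(Nat.cast_nonneg n : (0 : ℝ) ≤ n)])
    obtain ⟨u, v, hh⟩ := h.cov_join hB hcov (x := k + η / 2 / (n + 1)) (y := k + η / 2)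
      (by linarith) (by linarith) (by linarith)
    exact ⟨(u, v), hh⟩
  choose p hp using hch
  obtain ⟨v, hv, φ, hφ, hlim⟩ := isCompact_Icc.tendsto_subseq
    (s := Icc (k + η / 2) B) (x := fun n => (p n).2)
    (fun n => ⟨(hp n).2.2.1.le, (hp n).2.2.2.1.le⟩)
  have happ : ∀ ε > 0, ∃ u w, k < u ∧ u < k + ε ∧ |w - v| < ε ∧ w < B ∧ R u w := by
    intro ε hε
    have h1 : Filter.Tendsto (fun n : ℕ => η / 2 / ((n : ℝ) + 1)) Filter.atTop (nhds 0) :=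
      by simpa [div_eq_mul_inv] using (tendsto_one_div_add_atTop_nhds_zero_nat (𝕜 := ℝ)).const_mul (η / 2)
    have h2 := (h1.comp hφ.tendsto_atTop).eventually (gt_mem_nhds hε)
    have h3 := (Metric.tendsto_nhds.1 hlim) ε hε
    obtain ⟨n, hn1, hn2⟩ := (h2.and h3).exists
    obtain ⟨a, b, c, e, f⟩ := hp (φ n)
    refine ⟨(p (φ n)).1, (p (φ n)).2, ?_, ?_, ?_, e, f⟩
    · rcases a.lt_or_eq with hlt | heq
      · exact hlt
      · exfalso; exact hex ⟨(p (φ n)).2, by linarith, e, by rw [heq]; exact f⟩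
    · simp only [Function.comp] at hn1; linarith
    · simpa [Real.dist_eq] using hn2
  have hRL : RLim R k v := by
    intro ε hε
    obtain ⟨u, w, a, b, c, _, e⟩ := happ ε hε
    exact ⟨u, w, a, b, c, e⟩
  refine ⟨v, by linarith [hv.1], hv.2, ?_, happ⟩
  apply h.closed _ _ hk (h.rlim_rat hk hRL)
  intro ε hε
  obtain ⟨u, w, a, b, c, e⟩ := hRL ε hε
  refine ⟨u, w, ?_, c, e⟩
  rw [abs_lt]; constructor <;> linarith

end Lm

namespace Lm

variable {d : ℕ} {R : ℝ → ℝ → Prop}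

def App (R : ℝ → ℝ → Prop) (s t : ℝ) : Prop :=
  ∀ ε > 0, ∃ α β, 0 < α ∧ α < ε ∧ 0 < β ∧ β < ε ∧ R (s + α) (t - β)

def Unc (R : ℝ → ℝ → Prop) (a b x : ℝ) : Prop :=
  ∀ u v, a < u → u < x → x < v → v < b → ¬ R u v

theorem exists_isolated {K : Set ℝ} (hc : IsClosed K) (hne : K.Nonempty) (hK : K.Countable) :
    ∃ k ∈ K, ∃ η > 0, ∀ x ∈ K, |x - k| < η → x = k := by
  by_contra hcon
  push Not at hcon
  have hp : Perfect K := by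
    refine ⟨hc, fun k hk => ?_⟩
    rw [accPt_iff_nhds]
    intro U hU
    obtain ⟨η, hη, hb⟩ := Metric.mem_nhds_iff.1 hU
    obtain ⟨x, hx, h1, h2⟩ := hcon k hk η hη
    exact ⟨x, ⟨hb (by simpa [Real.dist_eq] using h1), hx⟩, h2⟩
  obtain ⟨f, hf, _, hinj⟩ := hp.exists_nat_bool_injection hne
  obtain ⟨g, hg⟩ := Set.countable_iff_exists_injOn.1 hK
  classical
  refine Function.cantor_injective (fun s : Set ℕ => g (f (fun n => decide (n ∈ s)))) ?_
  intro s s' hss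
  have h1 := hinj (hg (hf ⟨_, rfl⟩) (hf ⟨_, rfl⟩) hss)
  ext n
  have := congrFun h1 n
  simpa using this

theorem gap (h : Lm d R) {a b : ℝ} (hab : a < b) (hb1 : b < a + 1) (hR : R a b)
    (hno : ∀ x, a < x → x < b → ¬ R a x) (hnA : ¬ App R a b) (δ : ℝ) (hδ : 0 < δ) :
    ∃ θ, a < θ ∧ θ < a + δ ∧ θ < b ∧ ¬ R θ θ ∧ Unc R a b θ := by
  by_contra hcon
  push Not at hcon
  have hRat : ∀ x, a < x → x < a + δ → x < b → Unc R a b x → R x x := by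
    intro x h1 h2 h3 h4
    by_contra h5
    exact hcon x h1 h2 h3 h5 h4
  have haa := h.left hR
  -- covered near a impossible
  have hnear : ∀ η, 0 < η → ∃ x, a < x ∧ x < a + η ∧ Unc R a b x := by
    intro η hη
    by_contra hc
    push Not at hc
    have hcov : ∀ x, a < x → x < a + η → ∃ u v, a ≤ u ∧ u < x ∧ x < v ∧ v < b ∧ R u v := by
      intro x h1 h2
      have := hc x h1 h2
      unfold Unc at this
      push Not at this
      obtain ⟨u, v, e1, e2, e3, e4, e5⟩ := this
      exact ⟨u, v, e1.le, e2, e3, e4, e5⟩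
    rcases h.right_lim haa hη hb1.le hcov with ⟨v, h1, h2, h3⟩ | ⟨v, h1, h2, h3, h4⟩
    · exact hno v h1 h2 h3
    · rcases h2.lt_or_eq with h2 | rfl
      · exact hno v h1 h2 h3
      · apply hnA
        intro ε hε
        obtain ⟨u, w, e1, e2, e3, e4, e5⟩ := h4 ε hε
        rw [abs_lt] at e3
        refine ⟨u - a, v - w, by linarith, by linarith, by linarith, by linarith, ?_⟩
        convert e5 using 1 <;> ring
  obtain ⟨x, hx1, hx2, hx3⟩ := hnear (min δ (b - a)) (lt_min hδ (by linarith))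
  have hm1 := min_le_left δ (b - a)
  have hm2 := min_le_right δ (b - a)
  obtain ⟨c, hcirr, hc1, hc2⟩ := exists_irrational_btwn hx1
  obtain ⟨c', hcirr', hc1', hc2'⟩ := exists_irrational_btwn hx2
  have hirr : ∀ y, Irrational y → ¬ R y y := by
    intro y hy hyy
    obtain ⟨q, hq⟩ := (h.rat y).1 hyy
    exact hy ⟨q, hq⟩
  set K : Set ℝ := {y | c ≤ y ∧ y ≤ c' ∧ Unc R a b y} with hK
  have hKc : IsClosed K := by
    have : K = Icc c c' ∩ ⋂ (u : ℝ) (v : ℝ) (_ : a < u ∧ v < b ∧ R u v), (Ioo u v)ᶜ := by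
      ext y
      simp only [hK, mem_ofPred_eq, mem_inter_iff, mem_Icc, mem_iInter, mem_compl_iff, mem_Ioo, Unc]
      constructor
      · rintro ⟨e1, e2, e3⟩
        exact ⟨⟨e1, e2⟩, fun u v ⟨f1, f2, f3⟩ ⟨f4, f5⟩ => e3 u v f1 f4 f5 f2 f3⟩
      · rintro ⟨⟨e1, e2⟩, e3⟩
        exact ⟨e1, e2, fun u v f1 f2 f3 f4 f5 => e3 u v ⟨f1, f4, f5⟩ ⟨f2, f3⟩⟩
    rw [this]
    refine isClosed_Icc.inter ?_
    refine isClosed_iInter fun u => isClosed_iInter fun v => isClosed_iInter fun _ => ?_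
    exact isOpen_Ioo.isClosed_compl
  have hKrat : ∀ y ∈ K, R y y := by
    rintro y ⟨e1, e2, e3⟩
    exact hRat y (by linarith) (by linarith) (by linarith) e3
  have hKcount : K.Countable := by
    apply (countable_range (fun q : ℚ => (q : ℝ))).mono
    intro y hy
    obtain ⟨q, hq⟩ := (h.rat y).1 (hKrat y hy)
    exact ⟨q, hq⟩
  obtain ⟨k, hk, η, hη, hiso⟩ := exists_isolated hKc ⟨x, hc2.le, hc1'.le, hx3⟩ hKcount
  have hkk := hKrat k hk
  obtain ⟨hk1, hk2, hk3⟩ := hk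
  have hk1' : c < k := lt_of_le_of_ne hk1 (by rintro rfl; exact hirr _ hcirr hkk)
  have hk2' : k < c' := lt_of_le_of_ne hk2 (by rintro rfl; exact hirr _ hcirr' hkk)
  have hcovd : ∀ y, y ≠ k → |y - k| < min η (min (k - c) (c' - k)) →
      ∃ u v, a < u ∧ u < y ∧ y < v ∧ v < b ∧ R u v := by
    intro y hy hy2
    have n1 := min_le_left η (min (k - c) (c' - k))
    have n2 := min_le_right η (min (k - c) (c' - k))
    have n3 := min_le_left (k - c) (c' - k)
    have n4 := min_le_right (k - c) (c' - k)
    have hnot : ¬ Unc R a b y := by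
      intro hu
      apply hy
      have := abs_lt.1 hy2
      exact hiso y ⟨by linarith, by linarith, hu⟩ (by linarith)
    unfold Unc at hnot
    push Not at hnot
    exact hnot
  have hηp : 0 < min η (min (k - c) (c' - k)) :=
    lt_min hη (lt_min (by linarith) (by linarith))
  set η' := min η (min (k - c) (c' - k)) with hη'
  -- right neighbour
  have hright : ∃ v, k < v ∧ v ≤ b ∧ R k v := by
    have hcov : ∀ y, k < y → y < k + η' → ∃ u v, k ≤ u ∧ u < y ∧ y < v ∧ v < b ∧ R u v := by
      intro y h1 h2
      obtain ⟨u, v, e1, e2, e3, e4, e5⟩ := hcovd y h1.ne'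
        (by rw [abs_lt]; constructor <;> linarith)
      refine ⟨u, v, ?_, e2, e3, e4, e5⟩
      by_contra hlt
      push Not at hlt
      exact hk3 u v e1 hlt (by linarith) e4 e5
    rcases h.right_lim hkk hηp (by linarith) hcov with ⟨v, h1, h2, h3⟩ | ⟨v, h1, h2, h3, -⟩
    · exact ⟨v, h1, h2.le, h3⟩
    · exact ⟨v, h1, h2, h3⟩
  have hleft : ∃ w, w < k ∧ a ≤ w ∧ R k w := by
    have hcov : ∀ y, -k < y → y < -k + η' →
        ∃ u v, -k ≤ u ∧ u < y ∧ y < v ∧ v < -a ∧ R (-u) (-v) := by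
      intro y h1 h2
      obtain ⟨u, v, e1, e2, e3, e4, e5⟩ := hcovd (-y) (by intro e; linarith)
        (by rw [abs_lt]; constructor <;> linarith)
      refine ⟨-v, -u, ?_, by linarith, by linarith, by linarith, by
        simpa using h.symm _ _ e5⟩
      by_contra hlt
      push Not at hlt
      exact hk3 u v e1 (by linarith) (by linarith) e4 e5
    rcases h.reflect.right_lim (k := -k) (B := -a) (by simpa using hkk) hηp (by linarith) hcov
      with ⟨v, h1, h2, h3⟩ | ⟨v, h1, h2, h3, -⟩
    · exact ⟨-v, by linarith, by linarith, by simpa using h3⟩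
    · exact ⟨-v, by linarith, by linarith, by simpa using h3⟩
  obtain ⟨v, v1, v2, v3⟩ := hright
  obtain ⟨w, w1, w2, w3⟩ := hleft
  have hak : ¬ R a k := hno k (by linarith) (by linarith)
  rcases v2.lt_or_eq with v2 | rfl
  · rcases w2.lt_or_eq with w2 | rfl
    · exact hk3 w v w2 w1 v1 v2 (h.trans _ _ _ (h.symm _ _ w3) v3)
    · exact hak (h.symm _ _ w3)
  · exact hak (h.trans _ _ _ hR (h.symm _ _ v3))

theorem app_rel (h : Lm d R) {s t : ℝ} (hs : R s s) (ht : R t t) (ha : App R s t) : R s t := by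
  apply h.closed _ _ hs ht
  intro ε hε
  obtain ⟨α, β, a1, a2, b1, b2, hr⟩ := ha ε hε
  refine ⟨_, _, ?_, ?_, hr⟩
  · rw [abs_lt]; constructor <;> linarith
  · rw [abs_lt]; constructor <;> linarith

theorem strip0 (h : Lm d R) {s t : ℝ} (hs : R s s) (ht : R t t) (ha : App R s t)
    (hst : s < t) (hst1 : t ≤ s + 1)
    {ε : ℝ} (hε : 0 < ε) : ∃ ε' > 0, ∀ α, 0 < α → α < ε' → ∀ z, (R (s + α) z ∨ R (t - α) z) →
      ∃ j : ℤ, (s < z + j ∧ z + j < s + ε) ∨ (t - ε < z + j ∧ z + j < t) := by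
  have hR := h.app_rel hs ht ha
  obtain ⟨α1, β1, a1, a2, b1, b2, hr⟩ := ha (min ε ((t - s) / 2)) (lt_min hε (by linarith))
  have hm1 := min_le_left ε ((t - s) / 2)
  have hm2 := min_le_right ε ((t - s) / 2)
  obtain ⟨f1, hf1, F1⟩ := h.fin s s
  obtain ⟨f2, hf2, F2⟩ := h.fin s t
  obtain ⟨f3, hf3, F3⟩ := h.fin (s + α1) s
  obtain ⟨f4, hf4, F4⟩ := h.fin (s + α1) t
  obtain ⟨ε', hε', g⟩ : ∃ ε' > 0, ε' ≤ f1 ∧ ε' ≤ f2 ∧ ε' ≤ f3 ∧ ε' ≤ f4 ∧ ε' ≤ α1 ∧ ε' ≤ β1 :=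
    ⟨min f1 (min f2 (min f3 (min f4 (min α1 β1)))), by
      simp [*], by simp⟩
  obtain ⟨g1, g2, g3, g4, g5, g6⟩ := g
  refine ⟨ε', hε', fun α hα hα' z hz => ?_⟩
  obtain ⟨j, hj1, hj2⟩ := exists_int_shift z s
  have n1 : ¬ R s (s + α) := F1 _ (by linarith) (by rw [abs_lt]; constructor <;> linarith)
  have n2 : ¬ R s (t - α) := F2 _ (by linarith) (by rw [abs_lt]; constructor <;> linarith)
  have n3 : ¬ R (s + α1) (s + α) := F3 _ (by linarith) (by rw [abs_lt]; constructor <;> linarith)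
  have n4 : ¬ R (s + α1) (t - α) := F4 _ (by linarith) (by rw [abs_lt]; constructor <;> linarith)
  have hz' : R (s + α) (z + j) ∨ R (t - α) (z + j) := hz.imp (h.shift _ _ j) (h.shift _ _ j)
  clear hz
  refine ⟨j, ?_⟩
  generalize z + j = y at hj1 hj2 hz'
  have m1 : ¬ R s y := by
    intro e
    rcases hz' with hz | hz
    · exact n1 (h.trans _ _ _ e (h.symm _ _ hz))
    · exact n2 (h.trans _ _ _ e (h.symm _ _ hz))
  have m2 : ¬ R (s + α1) y := by
    intro e
    rcases hz' with hz | hz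
    · exact n3 (h.trans _ _ _ e (h.symm _ _ hz))
    · exact n4 (h.trans _ _ _ e (h.symm _ _ hz))
  have y1 : s < y := lt_of_le_of_ne hj1 (by rintro rfl; exact m1 hs)
  by_cases y2 : y < s + α1
  · left; constructor <;> linarith
  have y3 : s + α1 < y := lt_of_le_of_ne (not_lt.1 y2) (by rintro rfl; exact m2 (h.left hr))
  by_cases y4 : t ≤ y
  · exfalso
    rcases y4.lt_or_eq with y4 | rfl
    · rcases hz' with hz | hz
      · exact n1 (h.cross s (s + α) t y (by linarith) (by linarith) y4 hj2 hR hz)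
      · exact n2 (h.cross s (t - α) t y (by linarith) (by linarith) y4 hj2 hR hz)
    · exact m1 hR
  push Not at y4
  right
  refine ⟨?_, y4⟩
  by_contra hc
  push Not at hc
  have y5 : y < t - β1 := lt_of_le_of_ne (by linarith) (by rintro rfl; exact m2 hr)
  rcases hz' with hz | hz
  · exact n3 (h.symm _ _ (h.cross (s + α) (s + α1) y (t - β1) (by linarith) (by linarith) (by linarith)
      (by linarith) hz hr))
  · exact m2 (h.cross (s + α1) y (t - β1) (t - α) (by linarith) (by linarith) (by linarith)
      (by linarith) hr (h.symm _ _ hz))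

theorem app_shift (h : Lm d R) {s t : ℝ} (i j : ℤ) (ha : App R s t) : App R (s + i) (t + j) := by
  intro ε hε
  obtain ⟨α, β, a1, a2, b1, b2, hr⟩ := ha ε hε
  refine ⟨α, β, a1, a2, b1, b2, ?_⟩
  convert h.shl i j hr using 1 <;> ring

theorem app_fwd (h : Lm d R) {s t : ℝ} (n : ℕ) (ha : App R s t) :
    App R ((d : ℝ) ^ n * s) ((d : ℝ) ^ n * t) := by
  intro ε hε
  have hd := h.dpos n
  obtain ⟨α, β, a1, a2, b1, b2, hr⟩ := ha (ε / (d : ℝ) ^ n) (by positivity)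
  rw [lt_div_iff₀' hd] at a2 b2
  refine ⟨(d : ℝ) ^ n * α, (d : ℝ) ^ n * β, by positivity, a2, by positivity, b2, ?_⟩
  convert h.fwdn n hr using 1 <;> ring

theorem strip (h : Lm d R) {s t : ℝ} (hs : R s s) (ht : R t t) (ha : App R s t)
    {ε : ℝ} (hε : 0 < ε) : ∃ ε' > 0, ∀ α, 0 < α → α < ε' → ∀ z, (R (s + α) z ∨ R (t - α) z) →
      ∃ j : ℤ, (s < z + j ∧ z + j < s + ε) ∨ (t - ε < z + j ∧ z + j < t) := by
  obtain ⟨i, i1, i2⟩ := exists_int_shift (-t) (-(s + 1))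
  have ha' := h.app_shift 0 (-i) ha
  obtain ⟨ε', hε', hh⟩ := h.strip0 (h.shl 0 0 hs) (h.shl (-i) (-i) ht) ha'
    (by push_cast; linarith) (by push_cast; linarith) hε
  refine ⟨ε', hε', fun α h1 h2 z hz => ?_⟩
  obtain ⟨j, hj⟩ := hh α h1 h2 z (hz.imp (fun hz => by simpa using hz) (fun hz => by
    have := h.shl (-i) 0 hz
    convert this using 1
    · ring
    · simp))
  rcases hj with ⟨e1, e2⟩ | ⟨e1, e2⟩
  · exact ⟨j, Or.inl ⟨by simpa using e1, by simpa using e2⟩⟩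
  · refine ⟨j + i, Or.inr ⟨?_, ?_⟩⟩ <;> push_cast at * <;> linarith

theorem small_ne_int (c : ℝ) : ∃ η > 0, ∀ x, 0 < x → x < η → ∀ j : ℤ, x ≠ c + j := by
  refine ⟨c - ⌈c⌉ + 1, by linarith [Int.ceil_lt_add_one c], fun x h1 h2 j hj => ?_⟩
  have : (j : ℝ) < ((1 - ⌈c⌉ : ℤ) : ℝ) := by push_cast; linarith
  have h3 : j < 1 - ⌈c⌉ := by exact_mod_cast this
  have h4 : j ≤ -⌈c⌉ := by omega
  have h5 : (j : ℝ) ≤ ((-⌈c⌉ : ℤ) : ℝ) := by exact_mod_cast h4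
  push_cast at h5
  linarith [Int.le_ceil c]

theorem pullback (h : Lm d R) {s t : ℝ} (hs : R s s) (ht : R t t) (ha : App R s t) (n : ℕ) :
    ∃ ε > 0, ∀ α β, 0 < α → α < ε → 0 < β → β < ε →
      R ((d : ℝ) ^ n * (s + α)) ((d : ℝ) ^ n * (t - β)) → R (s + α) (t - β) := by
  have hd := h.dpos n
  set M := (d : ℝ) ^ n with hM
  obtain ⟨η, hη, hint⟩ := small_ne_int (M * (t - s))
  set ε := min (1 / M) (η / (2 * M)) with hεdef
  have hε : 0 < ε := lt_min (by positivity) (by positivity)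
  have e1 : M * ε ≤ 1 := by
    calc M * ε ≤ M * (1 / M) := by gcongr; exact min_le_left _ _
      _ = 1 := by field_simp
  have e2 : 2 * (M * ε) ≤ η := by
    calc 2 * (M * ε) ≤ 2 * (M * (η / (2 * M))) := by gcongr; exact min_le_right _ _
      _ = η := by field_simp
  obtain ⟨ε', hε', hstr⟩ := h.strip hs ht ha hε
  refine ⟨min ε ε', lt_min hε hε', fun α β a1 a2 b1 b2 hr => ?_⟩
  have a3 := lt_of_lt_of_le a2 (min_le_left _ _)
  have a4 := lt_of_lt_of_le a2 (min_le_right _ _)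
  have b3 := lt_of_lt_of_le b2 (min_le_left _ _)
  have b4 := lt_of_lt_of_le b2 (min_le_right _ _)
  -- need rationality of s + α
  have hrat : R (s + α) (s + α) := by
    obtain ⟨q, hq⟩ := (h.rat _).1 (h.left hr)
    rw [h.rat]
    refine ⟨q / d ^ n, ?_⟩
    push_cast
    rw [hq, ← hM]; field_simp
  obtain ⟨y, j, hy1, hy2⟩ := h.onton n hrat hr
  obtain ⟨i, hi⟩ := hstr α a1 a4 y (Or.inl hy1)
  rw [← hM] at hy2
  have hy3 : R (s + α) (y + i) := h.shift _ _ i hy1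
  rcases hi with ⟨c1, c2⟩ | ⟨c1, c2⟩
  · exfalso
    -- M (y + i - s + β) = M (t - s) + integer
    refine hint (M * (y + i - s + β)) (by apply mul_pos hd; linarith) ?_ (j + d ^ n * i) ?_
    · calc M * (y + i - s + β) < M * (ε + ε) := by gcongr; linarith
        _ ≤ η := by linarith
    · push_cast
      rw [← hM]
      linear_combination hy2
  · have key : M * (y + i - (t - β)) = ((j + d ^ n * i : ℤ) : ℝ) := by
      push_cast
      rw [← hM]
      linear_combination hy2
    have u1 : M * (y + i - (t - β)) < 1 := by
      calc _ < M * ε := by gcongr; linarith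
        _ ≤ 1 := e1
    have u2 : -1 < M * (y + i - (t - β)) := by
      have : M * (-ε) < M * (y + i - (t - β)) := by gcongr; linarith
      linarith
    rw [key] at u1 u2
    have v1 : (j + d ^ n * i : ℤ) < 1 := by exact_mod_cast u1
    have v2 : -1 < (j + d ^ n * i : ℤ) := by exact_mod_cast u2
    have v3 : (j + d ^ n * i : ℤ) = 0 := by omega
    rw [v3] at key
    have : y + i = t - β := by
      rw [Int.cast_zero] at key
      rcases mul_eq_zero.1 key with h0 | h0
      · exact absurd h0 hd.ne'
      · linarith
    rwa [← this]

end Lm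

namespace Lm

variable {d : ℕ} {R : ℝ → ℝ → Prop}

theorem finI (h : Lm d R) (c a b : ℝ) : {x | a ≤ x ∧ x ≤ b ∧ R c x}.Finite := by
  by_contra hinf
  obtain ⟨k, -, hk⟩ := Set.Infinite.exists_accPt_of_subset_isCompact hinf
    (isCompact_Icc (a := a) (b := b)) (fun x hx => ⟨hx.1, hx.2.1⟩)
  obtain ⟨ε, hε, hf⟩ := h.fin c k
  rw [accPt_iff_nhds] at hk
  obtain ⟨x, ⟨hx1, hx2⟩, hx3⟩ := hk (Metric.ball k ε) (Metric.ball_mem_nhds k hε)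
  exact hf x hx3 (by simpa [Real.dist_eq] using hx1) hx2.2.2

def Prim (R : ℝ → ℝ → Prop) : Prop :=
  ∀ a b c e, a < b → b ≤ c → c < e → e ≤ a + 1 → R a b → R a c → R c e →
    (∀ x, a < x → x < b → ¬ R a x) → (∀ x, c < x → x < e → ¬ R a x) → App R a b ∨ App R c e

theorem serial0 (h : Lm d R) (hP : Prim R) {s t : ℝ} (hs : R s s) (ht : R t t) (ha : App R s t)
    (hst : s < t) (hst1 : t ≤ s + 1) {ε : ℝ} (hε : 0 < ε) :
    ∃ α β, 0 < α ∧ α < ε ∧ 0 < β ∧ β < ε ∧ R (s + α) (t - β) ∧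
      (App R (s + α) (t - β) ∨ App R (t - β) (s + α)) := by
  obtain ⟨ε1, hε1, hle, hle2⟩ : ∃ ε1 > 0, ε1 ≤ ε ∧ ε1 ≤ (t - s) / 3 :=
    ⟨min ε ((t - s) / 3), lt_min hε (by linarith), min_le_left _ _, min_le_right _ _⟩
  obtain ⟨ε', hε', hstr⟩ := h.strip0 hs ht ha hst hst1 hε1
  obtain ⟨α1, β1, a1, a2, b1, b2, hr⟩ := ha (min ε1 ε') (lt_min hε1 hε')
  have a3 := lt_of_lt_of_le a2 (min_le_left _ _)
  have a4 := lt_of_lt_of_le a2 (min_le_right _ _)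
  have b3 := lt_of_lt_of_le b2 (min_le_left _ _)
  have hcl : ∀ z, R (s + α1) z →
      ∃ j : ℤ, (s < z + j ∧ z + j < s + ε1) ∨ (t - ε1 < z + j ∧ z + j < t) :=
    fun z hz => hstr α1 a1 a4 z (Or.inl hz)
  have hcl0 : ∀ z, R (s + α1) z → s < z → z < s + 1 →
      (s < z ∧ z < s + ε1) ∨ (t - ε1 < z ∧ z < t) := by
    intro z hz z1 z2
    obtain ⟨j, hj⟩ := hcl z hz
    have : j = 0 := by
      have u1 : (j : ℝ) < 1 := by rcases hj with hj | hj <;> linarith [hj.1, hj.2]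
      have u2 : (-1 : ℝ) < j := by rcases hj with hj | hj <;> linarith [hj.1, hj.2]
      have v1 : j < 1 := by exact_mod_cast u1
      have v2 : -1 < j := by exact_mod_cast u2
      omega
    subst this
    simpa using hj
  have hcs : ¬ R (s + α1) (s + 1) := by
    intro hz
    obtain ⟨j, hj⟩ := hcl _ hz
    have u1 : (j : ℝ) < 0 := by rcases hj with hj | hj <;> linarith [hj.1, hj.2]
    have u2 : (-1 : ℝ) < j := by rcases hj with hj | hj <;> linarith [hj.1, hj.2]
    have v1 : j < 0 := by exact_mod_cast u1
    have v2 : -1 < j := by exact_mod_cast u2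
    omega
  set T1 : Set ℝ := {x | s < x ∧ x < s + ε1 ∧ R (s + α1) x} with hT1
  set T2 : Set ℝ := {x | t - ε1 < x ∧ x < t ∧ R (s + α1) x} with hT2
  have f1 : T1.Finite := (h.finI (s + α1) s (s + ε1)).subset
    (fun x hx => ⟨hx.1.le, hx.2.1.le, hx.2.2⟩)
  have f2 : T2.Finite := (h.finI (s + α1) (t - ε1) t).subset
    (fun x hx => ⟨hx.1.le, hx.2.1.le, hx.2.2⟩)
  have n1 : T1.Nonempty := ⟨s + α1, by linarith, by linarith, h.left hr⟩
  have n2 : T2.Nonempty := ⟨t - β1, by linarith, by linarith, hr⟩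
  obtain ⟨x1, hx1, hx1m⟩ := Set.exists_min_image T1 id f1 n1
  obtain ⟨x2, hx2, hx2m⟩ := Set.exists_max_image T1 id f1 n1
  obtain ⟨y1, hy1, hy1m⟩ := Set.exists_min_image T2 id f2 n2
  obtain ⟨y2, hy2, hy2m⟩ := Set.exists_max_image T2 id f2 n2
  simp only [id] at hx1m hx2m hy1m hy2m
  have hx12 := hx1m x2 hx2
  have hy12 := hy1m y2 hy2
  have R1 : ∀ x y, R (s + α1) x → R (s + α1) y → R x y := fun x y e1 e2 =>
    h.trans _ _ _ (h.symm _ _ e1) e2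
  have hx1' := hx1
  have hx2' := hx2
  have hy1' := hy1
  have hy2' := hy2
  obtain ⟨p1, p2, p3⟩ := hx1'
  obtain ⟨q1, q2, q3⟩ := hx2'
  obtain ⟨r1, r2, r3⟩ := hy1'
  obtain ⟨s1, s2, s3⟩ := hy2'
  have := hP x2 y1 y2 (x1 + 1) (by linarith) hy12 (by linarith) (by linarith)
    (R1 _ _ q3 r3) (R1 _ _ q3 s3) (by simpa using h.shift _ _ 1 (R1 _ _ s3 p3)) ?_ ?_
  · rcases this with hA | hA
    · refine ⟨x2 - s, t - y1, by linarith, by linarith, by linarith, by linarith, ?_, Or.inl ?_⟩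
      · convert R1 _ _ q3 r3 using 1 <;> ring
      · convert hA using 1 <;> ring
    · refine ⟨x1 - s, t - y2, by linarith, by linarith, by linarith, by linarith, ?_, Or.inr ?_⟩
      · convert R1 _ _ p3 s3 using 1 <;> ring
      · have := h.app_shift 0 (-1) hA
        convert this using 1 <;> push_cast <;> ring
  · intro z z1 z2 hz
    have hz' : R (s + α1) z := h.trans _ _ _ q3 hz
    rcases hcl0 z hz' (by linarith) (by linarith) with hh | hh
    · have := hx2m z ⟨hh.1, hh.2, hz'⟩; linarith
    · have := hy1m z ⟨hh.1, hh.2, hz'⟩; linarith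
  · intro z z1 z2 hz
    have hz' : R (s + α1) z := h.trans _ _ _ q3 hz
    rcases lt_trichotomy z (s + 1) with hlt | heq | hgt
    · rcases hcl0 z hz' (by linarith) (by linarith) with hh | hh
      · linarith
      · have := hy2m z ⟨hh.1, hh.2, hz'⟩; linarith
    · rw [heq] at hz'; exact hcs hz'
    · have hz'' : R (s + α1) (z - 1) := by
        have := h.shift _ _ (-1) hz'
        push_cast at this
        exact this
      rcases hcl0 (z - 1) hz'' (by linarith) (by linarith) with hh | hh
      · have := hx1m (z - 1) ⟨hh.1, hh.2, hz''⟩; linarith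
      · linarith

theorem serial (h : Lm d R) (hP : Prim R) {s t : ℝ} (hs : R s s) (ht : R t t) (ha : App R s t)
    {ε : ℝ} (hε : 0 < ε) :
    ∃ α β, 0 < α ∧ α < ε ∧ 0 < β ∧ β < ε ∧ R (s + α) (t - β) ∧
      (App R (s + α) (t - β) ∨ App R (t - β) (s + α)) := by
  obtain ⟨i, i1, i2⟩ := exists_int_shift (-t) (-(s + 1))
  have ha' := h.app_shift 0 (-i) ha
  obtain ⟨α, β, a1, a2, b1, b2, hr, hA⟩ := h.serial0 hP (h.shl 0 0 hs) (h.shl (-i) (-i) ht) ha'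
    (by push_cast; linarith) (by push_cast; linarith) hε
  refine ⟨α, β, a1, a2, b1, b2, ?_, ?_⟩
  · have := h.shl 0 i hr
    convert this using 1 <;> push_cast <;> ring
  · rcases hA with hA | hA
    · left
      have := h.app_shift 0 i hA
      convert this using 1 <;> push_cast <;> ring
    · right
      have := h.app_shift i 0 hA
      convert this using 1 <;> push_cast <;> ring

def AppS (R : ℝ → ℝ → Prop) (g s t : ℝ) : Prop :=
  ∀ ε > 0, ∃ α β, 0 < α ∧ α < ε ∧ 0 < β ∧ β < ε ∧ R (s + g * α) (t - g * β)

theorem appS_one {s t : ℝ} : AppS R 1 s t ↔ App R s t := by simp [AppS, App]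

theorem appS_neg (h : Lm d R) {s t : ℝ} : AppS R (-1) s t ↔ App R t s := by
  constructor
  · intro ha ε hε
    obtain ⟨α, β, a1, a2, b1, b2, hr⟩ := ha ε hε
    refine ⟨β, α, b1, b2, a1, a2, ?_⟩
    convert h.symm _ _ hr using 1 <;> ring
  · intro ha ε hε
    obtain ⟨α, β, a1, a2, b1, b2, hr⟩ := ha ε hε
    refine ⟨β, α, b1, b2, a1, a2, ?_⟩
    convert h.symm _ _ hr using 1 <;> ring

theorem appS_shift (h : Lm d R) {g s t : ℝ} (i j : ℤ) (ha : AppS R g s t) :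
    AppS R g (s + i) (t + j) := by
  intro ε hε
  obtain ⟨α, β, a1, a2, b1, b2, hr⟩ := ha ε hε
  refine ⟨α, β, a1, a2, b1, b2, ?_⟩
  convert h.shl i j hr using 1 <;> ring

theorem appS_fwd (h : Lm d R) {g s t : ℝ} (n : ℕ) (ha : AppS R g s t) :
    AppS R g ((d : ℝ) ^ n * s) ((d : ℝ) ^ n * t) := by
  intro ε hε
  have hd := h.dpos n
  obtain ⟨α, β, a1, a2, b1, b2, hr⟩ := ha (ε / (d : ℝ) ^ n) (by positivity)
  rw [lt_div_iff₀' hd] at a2 b2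
  refine ⟨(d : ℝ) ^ n * α, (d : ℝ) ^ n * β, by positivity, a2, by positivity, b2, ?_⟩
  convert h.fwdn n hr using 1 <;> ring

theorem pullbackS (h : Lm d R) {g s t : ℝ} (hg : g = 1 ∨ g = -1) (hs : R s s) (ht : R t t)
    (ha : AppS R g s t) (n : ℕ) :
    ∃ ε > 0, ∀ α β, 0 < α → α < ε → 0 < β → β < ε →
      R ((d : ℝ) ^ n * (s + g * α)) ((d : ℝ) ^ n * (t - g * β)) → R (s + g * α) (t - g * β) := by
  rcases hg with rfl | rfl
  · simpa using h.pullback hs ht (appS_one.1 ha) n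
  · obtain ⟨ε, hε, hh⟩ := h.pullback ht hs (h.appS_neg.1 ha) n
    refine ⟨ε, hε, fun α β a1 a2 b1 b2 hr => ?_⟩
    have := hh β α b1 b2 a1 a2 (by convert h.symm _ _ hr using 1 <;> ring)
    convert h.symm _ _ this using 1 <;> ring

theorem serialS (h : Lm d R) (hP : Prim R) {g s t : ℝ} (hg : g = 1 ∨ g = -1)
    (hs : R s s) (ht : R t t) (ha : AppS R g s t) {ε : ℝ} (hε : 0 < ε) :
    ∃ g' α β, (g' = 1 ∨ g' = -1) ∧ 0 < α ∧ α < ε ∧ 0 < β ∧ β < ε ∧ R (s + g * α) (t - g * β) ∧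
      AppS R g' (s + g * α) (t - g * β) := by
  rcases hg with rfl | rfl
  · obtain ⟨α, β, a1, a2, b1, b2, hr, hA | hA⟩ := h.serial hP hs ht (appS_one.1 ha) hε
    · exact ⟨1, α, β, Or.inl rfl, a1, a2, b1, b2, by simpa using hr,
        appS_one.2 (by simpa using hA)⟩
    · exact ⟨-1, α, β, Or.inr rfl, a1, a2, b1, b2, by simpa using hr,
        h.appS_neg.2 (by simpa using hA)⟩
  · obtain ⟨α, β, a1, a2, b1, b2, hr, hA | hA⟩ := h.serial hP ht hs (h.appS_neg.1 ha) hε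
    · refine ⟨-1, β, α, Or.inr rfl, b1, b2, a1, a2, ?_, h.appS_neg.2 ?_⟩
      · convert h.symm _ _ hr using 1 <;> ring
      · convert hA using 1 <;> ring
    · refine ⟨1, β, α, Or.inl rfl, b1, b2, a1, a2, ?_, appS_one.2 ?_⟩
      · convert h.symm _ _ hr using 1 <;> ring
      · convert hA using 1 <;> ring

end Lm

structure Exc (d : ℕ) (R : ℝ → ℝ → Prop) (X : ℝ → Prop) (Pf : Set ℝ) : Prop where
  sat : ∀ x y, R x y → X x → X y
  fwd : ∀ x, X x → X (d * x)
  fin : Pf.Finite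
  per : ∀ s ∈ Pf, R s s ∧ ∃ (p : ℕ) (j : ℤ), 1 ≤ p ∧ (d : ℝ) ^ p * s = s + j
  land : ∀ x, X x → ∃ n0 : ℕ, ∀ n ≥ n0, ∃ s ∈ Pf, ∃ j : ℤ, (d : ℝ) ^ n * x = s + j

namespace Lm

variable {d : ℕ} {R : ℝ → ℝ → Prop} {X : ℝ → Prop} {Pf : Set ℝ}

theorem per_mul {p : ℕ} {s : ℝ} {j : ℤ} (hs : (d : ℝ) ^ p * s = s + j) (m : ℕ) :
    ∃ j' : ℤ, (d : ℝ) ^ (p * m) * s = s + j' := by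
  induction m with
  | zero => exact ⟨0, by simp⟩
  | succ m ih =>
    obtain ⟨j', hj'⟩ := ih
    refine ⟨j + d ^ p * j', ?_⟩
    rw [Nat.mul_succ, pow_add, mul_comm ((d : ℝ) ^ (p * m)), mul_assoc, hj', mul_add, hs]
    push_cast; ring

theorem pb_land (h : Lm d R) {g u v s t : ℝ} {N : ℕ} {i j : ℤ} (hg : g = 1 ∨ g = -1)
    (hu : R u u) (hv : R v v) (ha : AppS R g u v) (h1 : (d : ℝ) ^ N * u = s + i)
    (h2 : (d : ℝ) ^ N * v = t + j) :
    ∃ ε > 0, ∀ x y, 0 < x → x < ε → 0 < y → y < ε →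
      R (s + g * ((d : ℝ) ^ N * x)) (t - g * ((d : ℝ) ^ N * y)) → R (u + g * x) (v - g * y) := by
  obtain ⟨ε, hε, hh⟩ := h.pullbackS hg hu hv ha N
  refine ⟨ε, hε, fun x y x1 x2 y1 y2 hr => hh x y x1 x2 y1 y2 ?_⟩
  convert h.shl i j hr using 1
  · linear_combination h1
  · linear_combination h2

def Bad (R : ℝ → ℝ → Prop) (X : ℝ → Prop) (q : ℝ × ℝ × ℝ) : Prop :=
  (q.1 = 1 ∨ q.1 = -1) ∧ R q.2.1 q.2.1 ∧ R q.2.2 q.2.2 ∧ AppS R q.1 q.2.1 q.2.2 ∧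
    ∃ ε > 0, ∀ α β, 0 < α → α < ε → 0 < β → β < ε →
      R (q.2.1 + q.1 * α) (q.2.2 - q.1 * β) → X (q.2.1 + q.1 * α)

def StepE (d : ℕ) (R : ℝ → ℝ → Prop) (q q' : ℝ × ℝ × ℝ) (ε : ℝ) : Prop :=
  ∃ α β, 0 < α ∧ α < ε ∧ 0 < β ∧ β < ε ∧ R (q.2.1 + q.1 * α) (q.2.2 - q.1 * β) ∧
    AppS R q'.1 (q.2.1 + q.1 * α) (q.2.2 - q.1 * β) ∧
    ∃ (N : ℕ) (i j : ℤ), (d : ℝ) ^ N * (q.2.1 + q.1 * α) = q'.2.1 + i ∧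
      (d : ℝ) ^ N * (q.2.2 - q.1 * β) = q'.2.2 + j

theorem StepE.mono {q q' : ℝ × ℝ × ℝ} {ε ε' : ℝ} (hle : ε ≤ ε') (hs : StepE d R q q' ε) :
    StepE d R q q' ε' := by
  obtain ⟨α, β, a1, a2, b1, b2, hh⟩ := hs
  exact ⟨α, β, a1, by linarith, b1, by linarith, hh⟩

theorem sg_mul {g g' : ℝ} (hg : g = 1 ∨ g = -1) (hg' : g' = 1 ∨ g' = -1) :
    ∃ κ, (κ = 1 ∨ κ = -1) ∧ g * κ = g' := by
  rcases hg with rfl | rfl <;> rcases hg' with rfl | rfl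
  · exact ⟨1, by simp, by simp⟩
  · exact ⟨-1, by simp, by simp⟩
  · exact ⟨-1, by simp, by simp⟩
  · exact ⟨1, by simp, by simp⟩

theorem fwdX (hX : Exc d R X Pf) (n : ℕ) {x : ℝ} (hx : X x) : X ((d : ℝ) ^ n * x) := by
  induction n with
  | zero => simpa using hx
  | succ n ih => rw [pow_succ', mul_assoc]; exact hX.fwd _ ih

theorem step_exists (h : Lm d R) (hP : Prim R) (hX : Exc d R X Pf) {q : ℝ × ℝ × ℝ}
    (hq : Bad R X q) {ε : ℝ} (hε : 0 < ε) :
    ∃ q', q'.2.1 ∈ Pf ∧ q'.2.2 ∈ Pf ∧ Bad R X q' ∧ StepE d R q q' ε := by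
  obtain ⟨g, s, t⟩ := q
  obtain ⟨hg, hs, ht, ha, ε0, hε0, hb⟩ := hq
  simp only at hg hs ht ha hb
  obtain ⟨g', α, β, hg', a1, a2, b1, b2, hr, hA⟩ :=
    h.serialS hP hg hs ht ha (lt_min hε hε0)
  have a3 := lt_of_lt_of_le a2 (min_le_left _ _)
  have a4 := lt_of_lt_of_le a2 (min_le_right _ _)
  have b3 := lt_of_lt_of_le b2 (min_le_left _ _)
  have b4 := lt_of_lt_of_le b2 (min_le_right _ _)
  have hXu := hb α β a1 a4 b1 b4 hr
  have hXv := hX.sat _ _ hr hXu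
  obtain ⟨n1, hn1⟩ := hX.land _ hXu
  obtain ⟨n2, hn2⟩ := hX.land _ hXv
  set N := max n1 n2
  obtain ⟨s', hs', i, hi⟩ := hn1 N (le_max_left _ _)
  obtain ⟨t', ht', j, hj⟩ := hn2 N (le_max_right _ _)
  have hMpos := h.dpos N
  refine ⟨(g', s', t'), hs', ht', ⟨hg', (hX.per _ hs').1, (hX.per _ ht').1, ?_, ?_⟩,
    α, β, a1, a3, b1, b3, hr, hA, N, i, j, hi, hj⟩
  · have := h.appS_shift (-i) (-j) (h.appS_fwd N hA)
    rw [hi, hj] at this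
    simpa using this
  · obtain ⟨ε1, hε1, hpb⟩ := h.pb_land hg' (h.left hr) (h.right hr) hA hi hj
    obtain ⟨η, hη, k1, k2, k3, k4, k5⟩ : ∃ η > 0, η ≤ ε1 ∧ η ≤ α ∧ η ≤ β ∧ η ≤ ε0 - α ∧ η ≤ ε0 - β :=
      ⟨min ε1 (min α (min β (min (ε0 - α) (ε0 - β)))), by simp [*], by simp⟩
    refine ⟨(d : ℝ) ^ N * η, by positivity, fun α' β' c1 c2 e1 e2 hr' => ?_⟩
    simp only at hr' ⊢
    obtain ⟨x, hx⟩ : ∃ x, α' = (d : ℝ) ^ N * x := ⟨α' / (d : ℝ) ^ N, by field_simp⟩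
    obtain ⟨y, hy⟩ : ∃ y, β' = (d : ℝ) ^ N * y := ⟨β' / (d : ℝ) ^ N, by field_simp⟩
    subst hx hy
    have x1 : 0 < x := pos_of_mul_pos_right c1 hMpos.le
    have y1 : 0 < y := pos_of_mul_pos_right e1 hMpos.le
    have x2 : x < η := lt_of_mul_lt_mul_left c2 hMpos.le
    have y2 : y < η := lt_of_mul_lt_mul_left e2 hMpos.le
    have hR := hpb x y x1 (by linarith) y1 (by linarith) hr'
    obtain ⟨κ, hκ, hgk⟩ := sg_mul hg hg'
    have hXx : X (s + g * α + g' * x) := by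
      have := hb (α + κ * x) (β + κ * y) (by rcases hκ with rfl | rfl <;> linarith)
        (by rcases hκ with rfl | rfl <;> linarith) (by rcases hκ with rfl | rfl <;> linarith)
        (by rcases hκ with rfl | rfl <;> linarith) (by
          convert hR using 1 <;> rw [← hgk] <;> ring)
      convert this using 1
      rw [← hgk]; ring
    have hXM := fwdX hX N hXx
    refine hX.sat _ _ ?_ hXM
    have h2 := h.shl i 0 (h.left hr')
    convert h2 using 1
    · linear_combination hi
    · simp

theorem exists_step (h : Lm d R) (hP : Prim R) (hX : Exc d R X Pf) {q : ℝ × ℝ × ℝ}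
    (hq : Bad R X q) :
    ∃ q', q'.2.1 ∈ Pf ∧ q'.2.2 ∈ Pf ∧ Bad R X q' ∧ ∀ ε > 0, StepE d R q q' ε := by
  by_contra hcon
  push Not at hcon
  set Λ : Set (ℝ × ℝ × ℝ) := {1, -1} ×ˢ (Pf ×ˢ Pf) with hΛ
  have hfin : Λ.Finite := (Set.toFinite _).prod (hX.fin.prod hX.fin)
  have hall : ∀ S : Set (ℝ × ℝ × ℝ), S.Finite → (∀ q' ∈ S, q'.2.1 ∈ Pf ∧ q'.2.2 ∈ Pf) →
      ∃ ε > 0, ∀ q' ∈ S, Bad R X q' → ¬ StepE d R q q' ε := by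
    intro S hS
    induction S, hS using Set.Finite.induction_on with
    | empty => intro _; exact ⟨1, one_pos, by simp⟩
    | @insert a S ha hS ih =>
      intro hmem
      obtain ⟨ε, hε, hh⟩ := ih (fun q' hq' => hmem q' (mem_insert_of_mem _ hq'))
      by_cases hB : Bad R X a
      · obtain ⟨ε', hε', hn⟩ := hcon a (hmem a (mem_insert _ _)).1 (hmem a (mem_insert _ _)).2 hB
        refine ⟨min ε ε', lt_min hε hε', ?_⟩
        rintro q' (rfl | hq') hb hst
        · exact hn (hst.mono (min_le_right _ _))
        · exact hh q' hq' hb (hst.mono (min_le_left _ _))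
      · refine ⟨ε, hε, ?_⟩
        rintro q' (rfl | hq') hb hst
        · exact hB hb
        · exact hh q' hq' hb hst
  obtain ⟨ε, hε, hh⟩ := hall Λ hfin (fun q' hq' => ⟨hq'.2.1, hq'.2.2⟩)
  obtain ⟨q', h1, h2, h3, h4⟩ := h.step_exists hP hX hq hε
  exact hh q' ⟨by simpa using h3.1, h1, h2⟩ h3 h4

theorem step_trans (h : Lm d R) {q q' q'' : ℝ × ℝ × ℝ} (hg : q.1 = 1 ∨ q.1 = -1)
    (hg' : q'.1 = 1 ∨ q'.1 = -1) (hg'' : q''.1 = 1 ∨ q''.1 = -1)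
    (h1 : ∀ ε > 0, StepE d R q q' ε) (h2 : ∀ ε > 0, StepE d R q' q'' ε) :
    ∀ ε > 0, StepE d R q q'' ε := by
  intro ε hε
  obtain ⟨g, s, t⟩ := q
  obtain ⟨g', s', t'⟩ := q'
  obtain ⟨g'', s'', t''⟩ := q''
  simp only at hg hg' hg''
  obtain ⟨α, β, a1, a2, b1, b2, hr, hA, N, i, j, hi, hj⟩ := h1 ε hε
  simp only at hr hA hi hj
  have hMpos := h.dpos N
  obtain ⟨ε1, hε1, hpb⟩ := h.pb_land hg' (h.left hr) (h.right hr) hA hi hj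
  obtain ⟨η, hη, k1, k2, k3, k4, k5⟩ : ∃ η > 0, η ≤ ε1 ∧ η ≤ α ∧ η ≤ β ∧ η ≤ ε - α ∧ η ≤ ε - β :=
    ⟨min ε1 (min α (min β (min (ε - α) (ε - β)))), by simp [*], by simp⟩
  obtain ⟨α', β', c1, c2, e1, e2, hr', hA', N', i', j', hi', hj'⟩ :=
    h2 ((d : ℝ) ^ N * η) (by positivity)
  simp only at hr' hA' hi' hj'
  obtain ⟨x, hx⟩ : ∃ x, α' = (d : ℝ) ^ N * x := ⟨α' / (d : ℝ) ^ N, by field_simp⟩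
  obtain ⟨y, hy⟩ : ∃ y, β' = (d : ℝ) ^ N * y := ⟨β' / (d : ℝ) ^ N, by field_simp⟩
  subst hx hy
  have x1 : 0 < x := pos_of_mul_pos_right c1 hMpos.le
  have y1 : 0 < y := pos_of_mul_pos_right e1 hMpos.le
  have x2 : x < η := lt_of_mul_lt_mul_left c2 hMpos.le
  have y2 : y < η := lt_of_mul_lt_mul_left e2 hMpos.le
  have hR := hpb x y x1 (by linarith) y1 (by linarith) hr'
  obtain ⟨κ, hκ, hgk⟩ := sg_mul hg hg'
  have E1 : s + g * (α + κ * x) = s + g * α + g' * x := by rw [← hgk]; ring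
  have E2 : t - g * (β + κ * y) = t - g * β - g' * y := by rw [← hgk]; ring
  refine ⟨α + κ * x, β + κ * y, by rcases hκ with rfl | rfl <;> linarith,
    by rcases hκ with rfl | rfl <;> linarith, by rcases hκ with rfl | rfl <;> linarith,
    by rcases hκ with rfl | rfl <;> linarith, ?_, ?_, N + N', i' + d ^ N' * i, j' + d ^ N' * j,
    ?_, ?_⟩
  · simp only
    rw [E1, E2]; exact hR
  · simp only
    rw [E1, E2]
    intro ε3 hε3
    obtain ⟨μ, hμ, hgm⟩ := sg_mul hg' hg''
    obtain ⟨ζ, hζ, m1, m2, m3, m4, m5⟩ : ∃ ζ > 0, ζ ≤ ε3 ∧ ζ ≤ x ∧ ζ ≤ y ∧ ζ ≤ ε1 - x ∧ ζ ≤ ε1 - y :=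
      ⟨min ε3 (min x (min y (min (ε1 - x) (ε1 - y)))), by
        have : x < ε1 := by linarith
        have : y < ε1 := by linarith
        simp [*], by simp⟩
    obtain ⟨a, b, p1, p2, p3, p4, hr3⟩ := hA' ((d : ℝ) ^ N * ζ) (by positivity)
    obtain ⟨a', ha'⟩ : ∃ x, a = (d : ℝ) ^ N * x := ⟨a / (d : ℝ) ^ N, by field_simp⟩
    obtain ⟨b', hb'⟩ : ∃ y, b = (d : ℝ) ^ N * y := ⟨b / (d : ℝ) ^ N, by field_simp⟩
    subst ha' hb'
    have A1 : 0 < a' := pos_of_mul_pos_right p1 hMpos.le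
    have B1 : 0 < b' := pos_of_mul_pos_right p3 hMpos.le
    have A2 : a' < ζ := lt_of_mul_lt_mul_left p2 hMpos.le
    have B2 : b' < ζ := lt_of_mul_lt_mul_left p4 hMpos.le
    refine ⟨a', b', A1, by linarith, B1, by linarith, ?_⟩
    have := hpb (x + μ * a') (y + μ * b') (by rcases hμ with rfl | rfl <;> linarith)
      (by rcases hμ with rfl | rfl <;> linarith) (by rcases hμ with rfl | rfl <;> linarith)
      (by rcases hμ with rfl | rfl <;> linarith) (by
        convert hr3 using 1 <;> rw [← hgm] <;> ring)
    convert this using 1 <;> rw [← hgm] <;> ring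
  · simp only
    rw [E1]
    push_cast
    rw [pow_add]
    linear_combination (d : ℝ) ^ N' * hi + hi'
  · simp only
    rw [E2]
    push_cast
    rw [pow_add]
    linear_combination (d : ℝ) ^ N' * hj + hj'

theorem pf_fin (h : Lm d R) (hX : Exc d R X Pf) (k : ℝ) :
    ∃ η > 0, ∀ x, x ≠ k → |x - k| < η → ∀ s ∈ Pf, ∀ j : ℤ, x ≠ s + j := by
  have hall : ∀ S : Set ℝ, S.Finite → S ⊆ Pf →
      ∃ η > 0, ∀ x, x ≠ k → |x - k| < η → ∀ s ∈ S, ∀ j : ℤ, x ≠ s + j := by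
    intro S hS
    induction S, hS using Set.Finite.induction_on with
    | empty => intro _; exact ⟨1, one_pos, by simp⟩
    | @insert a S ha hS ih =>
      intro hsub
      obtain ⟨η, hη, hh⟩ := ih (fun x hx => hsub (mem_insert_of_mem _ hx))
      obtain ⟨ε, hε, hf⟩ := h.fin a k
      refine ⟨min η ε, lt_min hη hε, ?_⟩
      rintro x hx hxk s (rfl | hs) j rfl
      · exact hf _ hx (lt_of_lt_of_le hxk (min_le_right _ _))
          (h.shift _ _ j (hX.per _ (hsub (mem_insert _ _))).1)
      · exact hh _ hx (lt_of_lt_of_le hxk (min_le_left _ _)) s hs j rfl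
  exact hall Pf hX.fin subset_rfl

theorem perX (hX : Exc d R X Pf) {x : ℝ} (hx : X x) {K : ℕ} (hK : 1 ≤ K) {j : ℤ}
    (hj : (d : ℝ) ^ K * x = x + j) : ∃ s ∈ Pf, ∃ j : ℤ, x = s + j := by
  obtain ⟨n0, hn⟩ := hX.land x hx
  obtain ⟨s, hs, i, hi⟩ := hn (K * n0) (by nlinarith)
  obtain ⟨j', hj'⟩ := per_mul hj n0
  refine ⟨s, hs, i - j', ?_⟩
  push_cast
  linarith

set_option maxHeartbeats 1000000 in
theorem no_loop (h : Lm d R) (hX : Exc d R X Pf) {q : ℝ × ℝ × ℝ} (hq : Bad R X q)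
    (h1 : q.2.1 ∈ Pf) (h2 : q.2.2 ∈ Pf) (hst : ∀ ε > 0, StepE d R q q ε) : False := by
  obtain ⟨g, s, t⟩ := q
  obtain ⟨hg, hs, ht, ha, ε0, hε0, hb⟩ := hq
  simp only at hg hs ht ha hb h1 h2
  obtain ⟨-, ps, js, hps, hjs⟩ := hX.per s h1
  obtain ⟨-, pt, jt, hpt, hjt⟩ := hX.per t h2
  obtain ⟨p, hp, i0, j0, hi0, hj0⟩ : ∃ p : ℕ, 1 ≤ p ∧ ∃ i j : ℤ, (d : ℝ) ^ p * s = s + i ∧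
      (d : ℝ) ^ p * t = t + j := by
    obtain ⟨i, hi⟩ := per_mul hjs pt
    obtain ⟨j, hj⟩ := per_mul hjt ps
    exact ⟨ps * pt, Nat.mul_pos hps hpt, i, j, hi, by rw [mul_comm ps pt]; exact hj⟩
  obtain ⟨εa, hεa, hpa⟩ := h.pb_land hg hs ht ha hi0 hj0
  obtain ⟨ε1, hε1, l1, l2⟩ : ∃ ε1 > 0, ε1 ≤ ε0 ∧ ε1 ≤ εa :=
    ⟨min ε0 εa, lt_min hε0 hεa, min_le_left _ _, min_le_right _ _⟩
  obtain ⟨α, β, a1, a2, b1, b2, hr, hA, N, i, j, hi, hj⟩ := hst (ε1 / 2) (by positivity)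
  simp only at hr hA hi hj
  obtain ⟨ε2, hε2, hpb⟩ := h.pb_land hg (h.left hr) (h.right hr) hA hi hj
  obtain ⟨η, hη, hfin⟩ := h.pf_fin hX (s + g * α)
  set D := (d : ℝ) ^ p with hD
  set M := (d : ℝ) ^ N with hM
  have hd2 : (2 : ℝ) ≤ d := by exact_mod_cast h.two
  have hD2 : 2 ≤ D := by
    calc (2 : ℝ) ≤ d := hd2
      _ = (d : ℝ) ^ 1 := by simp
      _ ≤ (d : ℝ) ^ p := pow_le_pow_right₀ (by linarith) hp
  have hM1 : 1 ≤ M := one_le_pow₀ (by linarith)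
  have hDpos : 0 < D := by linarith
  have hMpos : 0 < M := by linarith
  -- contraction
  have hcontr : ∀ k : ℕ, ∀ x y, 0 < x → x < ε1 → 0 < y → y < ε1 → R (s + g * x) (t - g * y) →
      R (s + g * (x / D ^ k)) (t - g * (y / D ^ k)) := by
    intro k
    induction k with
    | zero => intro x y _ _ _ _ hh; simpa using hh
    | succ k ih =>
      intro x y x1 x2 y1 y2 hh
      have hDk : 1 ≤ D ^ (k + 1) := one_le_pow₀ (by linarith)
      have := ih x y x1 x2 y1 y2 hh
      apply hpa
      · positivity
      · calc x / D ^ (k + 1) ≤ x := div_le_self x1.le hDk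
          _ < εa := by linarith
      · positivity
      · calc y / D ^ (k + 1) ≤ y := div_le_self y1.le hDk
          _ < εa := by linarith
      · convert this using 3 <;> field_simp <;> ring
  obtain ⟨k, hk⟩ := exists_pow_lt_of_lt_one
    (show 0 < min (1 / 2) (min (ε2 / ε1) (η / ε1)) by positivity) (show (1 / 2 : ℝ) < 1 by norm_num)
  set c := 1 / (M * D ^ k) with hc
  have hcpos : 0 < c := by positivity
  have hcle : c ≤ (1 / 2) ^ k := by
    rw [hc, one_div_pow]
    apply one_div_le_one_div_of_le (by positivity)
    calc (2 : ℝ) ^ k ≤ D ^ k := by gcongr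
      _ ≤ M * D ^ k := le_mul_of_one_le_left (by positivity) hM1
  have c1 : c < 1 / 2 := by linarith [min_le_left (1 / 2) (min (ε2 / ε1) (η / ε1))]
  have c2 : c * ε1 < ε2 := by
    rw [← lt_div_iff₀ hε1]
    linarith [min_le_right (1 / 2) (min (ε2 / ε1) (η / ε1)), min_le_left (ε2 / ε1) (η / ε1)]
  have c3 : c * ε1 < η := by
    rw [← lt_div_iff₀ hε1]
    linarith [min_le_right (1 / 2) (min (ε2 / ε1) (η / ε1)), min_le_right (ε2 / ε1) (η / ε1)]
  have hMc : M * D ^ k * c = 1 := by rw [hc]; field_simp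
  have hH : ∀ x y, 0 < x → x < ε1 → 0 < y → y < ε1 → R (s + g * x) (t - g * y) →
      R (s + g * (α + c * x)) (t - g * (β + c * y)) := by
    intro x y x1 x2 y1 y2 hh
    have h3 := hcontr k x y x1 x2 y1 y2 hh
    have cx : c * x < ε2 := lt_trans (by gcongr) c2
    have cy : c * y < ε2 := lt_trans (by gcongr) c2
    have h4 := hpb (c * x) (c * y) (by positivity) cx (by positivity) cy (by
      convert h3 using 3 <;> rw [hc] <;> field_simp)
    convert h4 using 1 <;> ring
  set xs := α / (1 - c) with hxs
  set ys := β / (1 - c) with hys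
  have h1c : 0 < 1 - c := by linarith
  have hxfix : xs = α + c * xs := by rw [hxs]; field_simp; ring
  have hyfix : ys = β + c * ys := by rw [hys]; field_simp; ring
  have xs0 : 0 < xs := by positivity
  have ys0 : 0 < ys := by positivity
  have hhalf : ε1 / 2 < ε1 * (1 - c) := by
    have := mul_lt_mul_of_pos_left c1 hε1
    linarith
  have xs1 : xs < ε1 := by rw [hxs, div_lt_iff₀ h1c]; linarith
  have ys1 : ys < ε1 := by rw [hys, div_lt_iff₀ h1c]; linarith
  have hcx : ∀ x, 0 < x → x < ε1 → c * x < ε1 / 2 := by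
    intro x x1 x2
    have h1 := mul_lt_mul_of_pos_right c1 x1
    linarith
  obtain ⟨x0, y0, p1, p2, p3, p4, hr0⟩ := ha ε1 hε1
  have hit : ∀ n : ℕ, ∃ x y, 0 < x ∧ x < ε1 ∧ 0 < y ∧ y < ε1 ∧ x - xs = c ^ n * (x0 - xs) ∧
      y - ys = c ^ n * (y0 - ys) ∧ R (s + g * x) (t - g * y) := by
    intro n
    induction n with
    | zero => exact ⟨x0, y0, p1, p2, p3, p4, by simp, by simp, hr0⟩
    | succ n ih =>
      obtain ⟨x, y, x1, x2, y1, y2, e1, e2, hh⟩ := ih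
      refine ⟨α + c * x, β + c * y, by positivity, by linarith [hcx x x1 x2], by positivity,
        by linarith [hcx y y1 y2], ?_, ?_, hH x y x1 x2 y1 y2 hh⟩
      · rw [pow_succ]; linear_combination c * e1 - hxfix
      · rw [pow_succ]; linear_combination c * e2 - hyfix
  have hgabs : |g| = 1 := by rcases hg with rfl | rfl <;> simp
  obtain ⟨qs, hqs⟩ := (h.rat s).1 hs
  obtain ⟨qt, hqt⟩ := (h.rat t).1 ht
  obtain ⟨qu, hqu⟩ := (h.rat _).1 (h.left hr)
  obtain ⟨qv, hqv⟩ := (h.rat _).1 (h.right hr)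
  have hcq : c = ((1 / (d ^ N * (d ^ p) ^ k) : ℚ) : ℝ) := by push_cast; rfl
  have hlim : R (s + g * xs) (t - g * ys) := by
    apply h.closed
    · rw [h.rat]
      refine ⟨qs + (qu - qs) / (1 - (1 / (d ^ N * (d ^ p) ^ k) : ℚ)), ?_⟩
      rw [Rat.cast_add, Rat.cast_div, Rat.cast_sub, Rat.cast_sub, ← hcq, hqs, hqu, hxs]
      push_cast; ring
    · rw [h.rat]
      refine ⟨qt + (qv - qt) / (1 - (1 / (d ^ N * (d ^ p) ^ k) : ℚ)), ?_⟩
      rw [Rat.cast_add, Rat.cast_div, Rat.cast_sub, Rat.cast_sub, ← hcq, hqt, hqv, hys]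
      push_cast; ring
    · intro ε hε
      set B := |x0 - xs| + |y0 - ys| + 1 with hB
      have hBpos : 0 < B := by positivity
      obtain ⟨n, hn⟩ := exists_pow_lt_of_lt_one (show 0 < ε / B by positivity)
        (show c < 1 by linarith)
      rw [lt_div_iff₀ hBpos] at hn
      obtain ⟨x, y, -, -, -, -, e1, e2, hh⟩ := hit n
      have hcn : 0 < c ^ n := by positivity
      refine ⟨_, _, ?_, ?_, hh⟩
      · rw [show s + g * x - (s + g * xs) = g * (x - xs) by ring, abs_mul, hgabs, one_mul, e1,
          abs_mul, abs_of_pos hcn]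
        refine lt_of_le_of_lt ?_ hn
        gcongr
        linarith [abs_nonneg (y0 - ys)]
      · rw [show t - g * y - (t - g * ys) = -(g * (y - ys)) by ring, abs_neg, abs_mul, hgabs,
          one_mul, e2, abs_mul, abs_of_pos hcn]
        refine lt_of_le_of_lt ?_ hn
        gcongr
        linarith [abs_nonneg (x0 - xs)]
  have hXx := hb xs ys xs0 (by linarith) ys0 (by linarith) hlim
  obtain ⟨jk, hjk⟩ := per_mul hi0 k
  have hDk : (d : ℝ) ^ (p * k) = D ^ k := by rw [hD, pow_mul]
  rw [hDk] at hjk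
  -- choose exponent at least one
  have hper : (d : ℝ) ^ (N + p * k) * (s + g * xs) = (s + g * xs) + ((jk + (d ^ p) ^ k * i : ℤ) : ℝ) := by
    rw [pow_add, hDk, ← hM]
    push_cast
    rw [← hD]
    linear_combination M * D ^ k * g * hxfix + D ^ k * hi + hjk + g * xs * hMc
  have hexp : 1 ≤ N + p * k := by
    by_contra hlt
    have hz : N + p * k = 0 := by omega
    have hN : N = 0 := by omega
    have hpk : p * k = 0 := by omega
    have : M * D ^ k = 1 := by rw [← hDk, hpk, hM, hN]; simp
    rw [hc, this] at c1
    norm_num at c1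
  obtain ⟨s', hs', j', hj'⟩ := perX hX hXx hexp hper
  refine hfin (s + g * xs) ?_ ?_ s' hs' j' hj'
  · intro e
    have hz : g * (c * xs) = 0 := by linear_combination e - g * hxfix
    have : 0 < c * xs := by positivity
    rcases hg with rfl | rfl <;> linarith
  · rw [show s + g * xs - (s + g * α) = g * (c * xs) by linear_combination g * hxfix, abs_mul,
      hgabs, one_mul, abs_of_pos (by positivity)]
    refine lt_trans ?_ c3
    gcongr

theorem no_bad (h : Lm d R) (hP : Prim R) (hX : Exc d R X Pf) {q : ℝ × ℝ × ℝ}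
    (hq : Bad R X q) : False := by
  set Λ : Set (ℝ × ℝ × ℝ) := {q | q.2.1 ∈ Pf ∧ q.2.2 ∈ Pf ∧ Bad R X q} with hΛ
  have hfin : Λ.Finite := by
    refine ((Set.toFinite ({1, -1} : Set ℝ)).prod (hX.fin.prod hX.fin)).subset ?_
    rintro q ⟨h1, h2, h3⟩
    exact ⟨by simpa using h3.1, h1, h2⟩
  have : Finite Λ := hfin
  let r : Λ → Λ → Prop := fun a b => ∀ ε > 0, StepE d R b.1 a.1 ε
  have ht : IsTrans Λ r := ⟨fun a b c h1 h2 =>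
    h.step_trans c.2.2.2.1 b.2.2.2.1 a.2.2.2.1 h2 h1⟩
  have hir : Std.Irrefl r := ⟨fun a ha => h.no_loop hX a.2.2.2 a.2.1 a.2.2.1 ha⟩
  have hwf : WellFounded r := Finite.wellFounded_of_trans_of_irrefl r
  obtain ⟨q1, e1, e2, e3, -⟩ := h.exists_step hP hX hq
  obtain ⟨m, -, hm⟩ := hwf.has_min univ ⟨⟨q1, e1, e2, e3⟩, trivial⟩
  obtain ⟨q2, f1, f2, f3, f4⟩ := h.exists_step hP hX m.2.2.2
  exact hm ⟨q2, f1, f2, f3⟩ trivial f4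

theorem good_approx (h : Lm d R) (hP : Prim R) (hX : Exc d R X Pf) {s t : ℝ} (hs : R s s)
    (ht : R t t) (ha : App R s t) {ε : ℝ} (hε : 0 < ε) :
    ∃ α β, 0 < α ∧ α < ε ∧ 0 < β ∧ β < ε ∧ R (s + α) (t - β) ∧ ¬ X (s + α) := by
  by_contra hcon
  push Not at hcon
  refine h.no_bad hP hX (q := (1, s, t)) ⟨Or.inl rfl, hs, ht, appS_one.2 ha, ε, hε, ?_⟩
  intro α β a1 a2 b1 b2 hr
  simp only [one_mul] at hr ⊢
  exact hcon α β a1 a2 b1 b2 hr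

end Lm

theorem c1_add_int (x : ℝ) (j : ℤ) : ((x + j : ℝ) : Circle1) = (x : Circle1) := by
  have : (((j : ℝ)) : Circle1) = 0 := by
    rw [AddCircle.coe_eq_zero_iff]; exact ⟨j, by simp⟩
  rw [AddCircle.coe_add, this, add_zero]

theorem c1_eq {x y : ℝ} (hxy : (x : Circle1) = (y : Circle1)) : ∃ j : ℤ, y = x + j := by
  have : ((y - x : ℝ) : Circle1) = 0 := by rw [AddCircle.coe_sub, hxy, sub_self]
  rw [AddCircle.coe_eq_zero_iff] at this
  obtain ⟨j, hj⟩ := this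
  refine ⟨j, ?_⟩
  simp at hj
  linarith

theorem c1_ne {x y : ℝ} (h1 : x < y) (h2 : y < x + 1) : (x : Circle1) ≠ (y : Circle1) := by
  intro hh
  obtain ⟨j, rfl⟩ := c1_eq hh
  have a : (0 : ℝ) < j := by linarith
  have b : (j : ℝ) < 1 := by linarith
  have a' : 0 < j := by exact_mod_cast a
  have b' : j < 1 := by exact_mod_cast b
  omega

theorem c1_cont : Continuous (fun x : ℝ => (x : Circle1)) := AddCircle.continuous_mk' 1

theorem c1_surj (z : Circle1) : ∃ x : ℝ, (x : Circle1) = z := QuotientAddGroup.mk_surjective z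

theorem c1_rat (x : ℝ) : (x : Circle1) ∈ ratC ↔ ∃ q : ℚ, (q : ℝ) = x := by
  constructor
  · rintro ⟨q, hq⟩
    obtain ⟨j, hj⟩ := c1_eq hq
    exact ⟨q - j, by push_cast; linarith⟩
  · rintro ⟨q, rfl⟩
    exact ⟨q, rfl⟩

theorem c1_md (d : ℕ) (x : ℝ) : md d (x : Circle1) = ((d * x : ℝ) : Circle1) := by
  unfold md
  rw [← nsmul_eq_mul, AddCircle.coe_nsmul]

theorem c1_mdn (d n : ℕ) (x : ℝ) : (md d)^[n] (x : Circle1) = (((d : ℝ) ^ n * x : ℝ) : Circle1) := by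
  induction n with
  | zero => simp
  | succ n ih => rw [iterate_succ_apply', ih, c1_md, pow_succ']; congr 1; ring

theorem c1_sep {a b c e : ℝ} (hab : a < b) (hbc : b < c) (hce : c < e) (hea : e < a + 1)
    {S : Set Circle1} (hS : IsPreconnected S) (ha : (a : Circle1) ∉ S) (hc : (c : Circle1) ∉ S)
    (hb : (b : Circle1) ∈ S) (he : (e : Circle1) ∈ S) : False := by
  have op : IsOpenMap (fun x : ℝ => (x : Circle1)) := QuotientAddGroup.isOpenMap_coe
  obtain ⟨z, -, ⟨x, hx, hxz⟩, ⟨y, hy, hyz⟩⟩ := hS _ _ (op _ (isOpen_Ioo (a := a) (b := c)))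
    (op _ (isOpen_Ioo (a := c) (b := a + 1))) (by
      intro z hz
      obtain ⟨x, rfl⟩ := c1_surj z
      obtain ⟨i, h1, h2⟩ := exists_int_shift x a
      have hxi : ((x + i : ℝ) : Circle1) = x := c1_add_int x i
      have n1 : x + i ≠ a := by intro hh; rw [hh] at hxi; rw [hxi] at ha; exact ha hz
      have n2 : x + i ≠ c := by intro hh; rw [hh] at hxi; rw [hxi] at hc; exact hc hz
      rcases lt_or_gt_of_ne n2 with h3 | h3
      · left; exact ⟨x + i, ⟨lt_of_le_of_ne h1 n1.symm, h3⟩, hxi⟩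
      · right; exact ⟨x + i, ⟨h3, h2⟩, hxi⟩)
    ⟨_, hb, b, ⟨hab, hbc⟩, rfl⟩ ⟨_, he, e, ⟨hce, hea⟩, rfl⟩
  simp only at hxz hyz
  exact c1_ne (x := x) (y := y) (by linarith [hx.2, hy.1]) (by linarith [hx.1, hy.2])
    (hxz.trans hyz.symm)

theorem c1_conn {x y : ℝ} (hxy : x ≤ y) {S : Set Circle1}
    (hS : ∀ z, x ≤ z → z ≤ y → (z : Circle1) ∈ S) :
    (y : Circle1) ∈ connectedComponentIn S x ∧ (x : Circle1) ∈ connectedComponentIn S y := by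
  have hp : IsPreconnected ((fun z : ℝ => (z : Circle1)) '' Icc x y) :=
    isPreconnected_Icc.image _ c1_cont.continuousOn
  have hsub : ((fun z : ℝ => (z : Circle1)) '' Icc x y) ⊆ S := by
    rintro _ ⟨z, hz, rfl⟩; exact hS z hz.1 hz.2
  have mx : (x : Circle1) ∈ ((fun z : ℝ => (z : Circle1)) '' Icc x y) := ⟨x, ⟨le_rfl, hxy⟩, rfl⟩
  have my : (y : Circle1) ∈ ((fun z : ℝ => (z : Circle1)) '' Icc x y) := ⟨y, ⟨hxy, le_rfl⟩, rfl⟩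
  exact ⟨hp.subset_connectedComponentIn mx hsub my, hp.subset_connectedComponentIn my hsub mx⟩

/-- The lift of the relation to the real line. -/
def liftR (r : Circle1 → Circle1 → Prop) (x y : ℝ) : Prop := r (x : Circle1) (y : Circle1)

theorem lift_closed {r : Circle1 → Circle1 → Prop}
    (hcl : ∀ x ∈ ratC, ∀ y ∈ ratC,
      (x, y) ∈ closure {p : Circle1 × Circle1 | r p.1 p.2} → r x y)
    (x y : ℝ) (hx : (x : Circle1) ∈ ratC) (hy : (y : Circle1) ∈ ratC)
    (hh : ∀ ε > 0, ∃ x' y', |x' - x| < ε ∧ |y' - y| < ε ∧ liftR r x' y') : liftR r x y := by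
  apply hcl _ hx _ hy
  have hm : (x, y) ∈ closure {p : ℝ × ℝ | liftR r p.1 p.2} := by
    rw [Metric.mem_closure_iff]
    intro ε hε
    obtain ⟨x', y', h1, h2, h3⟩ := hh ε hε
    refine ⟨(x', y'), h3, ?_⟩
    rw [Prod.dist_eq, max_lt_iff, dist_comm, Real.dist_eq, dist_comm, Real.dist_eq]
    exact ⟨h1, h2⟩
  have hc : Continuous (fun p : ℝ × ℝ => ((p.1 : Circle1), (p.2 : Circle1))) :=
    (c1_cont.comp continuous_fst).prodMk (c1_cont.comp continuous_snd)
  have := image_closure_subset_closure_image hc (mem_image_of_mem _ hm)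
  refine closure_mono ?_ this
  rintro _ ⟨p, hp, rfl⟩
  exact hp

theorem lam_fwd {d : ℕ} (lam : InvRatLam d) {x y : Circle1} (h : lam.rel x y) :
    lam.rel (md d x) (md d y) := by
  have := (lam.invariant x (lam.rel_rat _ _ h).1).1
  have h2 : md d y ∈ md d '' relClass lam.rel x := ⟨y, h, rfl⟩
  rw [this] at h2
  exact h2

theorem lam_fwdn {d : ℕ} (lam : InvRatLam d) (n : ℕ) {x y : Circle1} (h : lam.rel x y) :
    lam.rel ((md d)^[n] x) ((md d)^[n] y) := by
  induction n with
  | zero => simpa using h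
  | succ n ih => rw [iterate_succ_apply', iterate_succ_apply']; exact lam_fwd lam ih

theorem lam_Lm {d : ℕ} (hd : 2 ≤ d) (lam : InvRatLam d) : Lm d (liftR lam.rel) where
  two := hd
  rat x := by
    rw [← c1_rat]
    exact ⟨fun h => (lam.rel_rat _ _ h).1, fun h => lam.refl _ h⟩
  symm x y h := lam.symm _ _ h
  trans x y z h1 h2 := lam.trans _ _ _ h1 h2
  shift x y j h := by unfold liftR; rw [c1_add_int]; exact h
  closed x y hx hy hh :=
    lift_closed lam.closed' x y (lam.rel_rat _ _ hx).1 (lam.rel_rat _ _ hy).1 hh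
  fin c k := by
    have hfin : (relClass lam.rel (c : Circle1) \ {(k : Circle1)}).Finite :=
      (lam.finiteClass _).subset sdiff_subset
    have hopen := (hfin.isClosed.isOpen_compl).preimage c1_cont
    have hk : k ∈ (fun x : ℝ => (x : Circle1)) ⁻¹' (relClass lam.rel (c : Circle1) \ {(k : Circle1)})ᶜ := by
      simp
    obtain ⟨ε, hε, hb⟩ := Metric.isOpen_iff.1 hopen k hk
    refine ⟨min ε 1, by positivity, ?_⟩
    intro x hne hx hR
    have hx1 : |x - k| < ε := lt_of_lt_of_le hx (min_le_left _ _)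
    have hx2 : |x - k| < 1 := lt_of_lt_of_le hx (min_le_right _ _)
    rw [abs_lt] at hx2
    have := hb (by rw [Metric.mem_ball, Real.dist_eq]; exact hx1)
    apply this
    refine ⟨hR, ?_⟩
    rcases lt_or_gt_of_ne hne with h1 | h1
    · exact c1_ne h1 (by linarith)
    · exact (c1_ne h1 (by linarith)).symm
  cross a b c e hab hbc hce hea h1 h2 := by
    by_contra hn
    obtain ⟨x, -, hsub⟩ := lam.unlinkedClass _ _ hn
    have hS := isPreconnected_connectedComponentIn (x := x) (F := (relClass lam.rel (a : Circle1))ᶜ)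
    have hss := connectedComponentIn_subset (relClass lam.rel (a : Circle1))ᶜ x
    refine c1_sep hab hbc hce hea hS (fun hh => hss hh ?_) (fun hh => hss hh ?_) (hsub ?_) (hsub ?_)
    · exact lam.refl _ (lam.rel_rat _ _ h1).1
    · exact h1
    · exact lam.refl _ (lam.rel_rat _ _ h2).1
    · exact h2
  fwd x y h := by
    unfold liftR
    rw [← c1_md, ← c1_md]
    exact lam_fwd lam h
  onto x z hx hz := by
    have := (lam.invariant x (lam.rel_rat _ _ hx).1).1
    unfold liftR at hz
    rw [← c1_md] at hz
    have hz' : (z : Circle1) ∈ relClass lam.rel (md d (x : Circle1)) := hz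
    rw [← this] at hz'
    obtain ⟨w, hw, hwz⟩ := hz'
    obtain ⟨y, rfl⟩ := c1_surj w
    rw [c1_md] at hwz
    obtain ⟨j, hj⟩ := c1_eq hwz.symm
    exact ⟨y, j, hw, hj⟩

theorem lam_unl {d : ℕ} (hd : 2 ≤ d) (lam : InvRatLam d) {a b θ θ' : ℝ}
    (hb1 : b < a + 1) (hR : liftR lam.rel a b)
    (hno : ∀ x, a < x → x < b → ¬ liftR lam.rel a x)
    (ha : a < θ) (hlt : θ < θ') (hb : θ' < b)
    (h1 : ¬ liftR lam.rel θ θ) (h2 : ¬ liftR lam.rel θ' θ')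
    (u1 : Lm.Unc (liftR lam.rel) a b θ) (u2 : Lm.Unc (liftR lam.rel) a b θ') :
    UnlRel lam.rel θ θ' ∧ UnlRel lam.rel θ' θ := by
  have h := lam_Lm hd lam
  have n1 : (θ : Circle1) ∉ ratC := fun hh => h1 (lam.refl _ hh)
  have n2 : (θ' : Circle1) ∉ ratC := fun hh => h2 (lam.refl _ hh)
  suffices hs : ∀ x ∈ ratC, (θ' : Circle1) ∈ connectedComponentIn (relClass lam.rel x)ᶜ θ ∧
      (θ : Circle1) ∈ connectedComponentIn (relClass lam.rel x)ᶜ θ' from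
    ⟨⟨n1, n2, Or.inr fun x hx => (hs x hx).1⟩, ⟨n2, n1, Or.inr fun x hx => (hs x hx).2⟩⟩
  intro x hx
  by_cases hz : ∀ z : ℝ, θ ≤ z → z ≤ θ' → (z : Circle1) ∈ (relClass lam.rel x)ᶜ
  · exact c1_conn hlt.le hz
  push Not at hz
  obtain ⟨z, z1, z2, hz⟩ := hz
  have hz : lam.rel x z := by simpa [relClass] using hz
  have z1 : θ < z := by
    refine lt_of_le_of_ne z1 ?_
    rintro rfl
    exact n1 (lam.rel_rat _ _ hz).2
  have z2 : z < θ' := by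
    refine lt_of_le_of_ne z2 ?_
    rintro rfl
    exact n2 (lam.rel_rat _ _ hz).2
  have hw : ∀ w : ℝ, θ' ≤ w → w ≤ θ + 1 → (w : Circle1) ∈ (relClass lam.rel x)ᶜ := by
    intro w w1 w2 hw
    have hw : lam.rel x w := hw
    have w1 : θ' < w := by
      refine lt_of_le_of_ne w1 ?_
      rintro rfl
      exact n2 (lam.rel_rat _ _ hw).2
    have w2 : w < θ + 1 := by
      refine lt_of_le_of_ne w2 ?_
      rintro rfl
      have := (lam.rel_rat _ _ hw).2
      have e := c1_add_int θ 1
      push_cast at e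
      rw [e] at this
      exact n1 this
    have hzw : liftR lam.rel z w := lam.trans _ _ _ (lam.symm _ _ hz) hw
    have hnz := hno z (by linarith) (by linarith)
    rcases lt_trichotomy w b with hwb | hwb | hwb
    · exact u2 z w (by linarith) z2 w1 hwb hzw
    · subst hwb
      exact hnz (h.trans _ _ _ hR (h.symm _ _ hzw))
    have hsh := h.symm _ _ (h.shift _ _ (-1) hzw)
    push_cast at hsh
    rcases lt_trichotomy w (a + 1) with hwa | hwa | hwa
    · exact hnz (h.cross a z b w (by linarith) (by linarith) hwb hwa hR hzw)
    · subst hwa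
      apply hnz
      convert hsh using 1
      ring
    · exact u1 _ z (by linarith) (by linarith) z1 (by linarith) hsh
  have := c1_conn (by linarith) hw
  have e := c1_add_int θ 1
  push_cast at e
  rw [e] at this
  exact ⟨this.2, this.1⟩

theorem lam_side {d : ℕ} (hd : 2 ≤ d) (lam : InvRatLam d) {a b : ℝ} (hab : a < b)
    (hb1 : b < a + 1) (hR : liftR lam.rel a b)
    (hno : ∀ x, a < x → x < b → ¬ liftR lam.rel a x) (hnA : ¬ Lm.App (liftR lam.rel) a b) :
    ∃ θ : ℝ, a < θ ∧ θ < b ∧ (θ : Circle1) ∉ ratC ∧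
      {θ' | UnlRel lam.rel θ θ'}.Infinite ∧ (a : Circle1) ∈ closure {θ' | UnlRel lam.rel θ θ'} := by
  have h := lam_Lm hd lam
  have hg := h.gap hab hb1 hR hno hnA
  obtain ⟨θ, t1, -, t2, hirr, hU⟩ := hg 1 one_pos
  have n1 : (θ : Circle1) ∉ ratC := fun hh => hirr (lam.refl _ hh)
  have hcl : (a : Circle1) ∈ closure {θ' | UnlRel lam.rel θ θ'} := by
    have hm : a ∈ closure {x : ℝ | a < x ∧ x < b ∧ ¬ liftR lam.rel x x ∧
        Lm.Unc (liftR lam.rel) a b x} := by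
      rw [Metric.mem_closure_iff]
      intro ε hε
      obtain ⟨x, x1, x2, x3, x4, x5⟩ := hg ε hε
      refine ⟨x, ⟨x1, x3, x4, x5⟩, ?_⟩
      rw [dist_comm, Real.dist_eq, abs_lt]
      constructor <;> linarith
    have := image_closure_subset_closure_image c1_cont (mem_image_of_mem _ hm)
    refine closure_mono ?_ this
    rintro _ ⟨x, ⟨x1, x2, x3, x4⟩, rfl⟩
    rcases lt_trichotomy θ x with hx | hx | hx
    · exact (lam_unl hd lam hb1 hR hno t1 hx x2 hirr x3 hU x4).1
    · subst hx; exact ⟨n1, n1, Or.inl rfl⟩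
    · exact (lam_unl hd lam hb1 hR hno x1 hx t2 x3 hirr x4 hU).2
  refine ⟨θ, t1, t2, n1, ?_, hcl⟩
  intro hf
  rw [hf.isClosed.closure_eq] at hcl
  exact hcl.2.1 (lam.rel_rat _ _ hR).1

theorem lam_prim {d : ℕ} (hd : 2 ≤ d) (lam : InvRatLam d) (hprim : PrimitiveLam d lam.rel) :
    Lm.Prim (liftR lam.rel) := by
  intro a b c e hab hbc hce hea rab rac rce no1 no2
  have h := lam_Lm hd lam
  by_contra hcon
  push Not at hcon
  obtain ⟨θ, t1, t2, ht, hinf, hcl⟩ := lam_side hd lam hab (by linarith) rab no1 hcon.1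
  obtain ⟨θ', t1', t2', ht', hinf', hcl'⟩ := lam_side hd lam hce (by linarith) rce
    (fun x x1 x2 hx => no2 x x1 x2 (h.trans _ _ _ rac hx)) hcon.2
  refine hprim ⟨_, _, (a : Circle1), ⟨θ, ht, rfl⟩, hinf, ⟨θ', ht', rfl⟩, hinf', ?_,
    (lam.rel_rat _ _ rab).1, ⟨_, lam.refl _ (lam.rel_rat _ _ rab).1, hcl⟩, ⟨_, rac, hcl'⟩⟩
  intro heq
  have hmem : (θ' : Circle1) ∈ {x | UnlRel lam.rel θ' x} := ⟨ht', ht', Or.inl rfl⟩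
  rw [← heq] at hmem
  rcases hmem.2.2 with h1 | h1
  · exact c1_ne (by linarith) (by linarith) h1
  · have h1 := h1 a (lam.rel_rat _ _ rab).1
    have hS := isPreconnected_connectedComponentIn (x := (θ : Circle1))
      (F := (relClass lam.rel (a : Circle1))ᶜ)
    have hss := connectedComponentIn_subset (relClass lam.rel (a : Circle1))ᶜ (θ : Circle1)
    refine c1_sep (a := a) (b := θ) (c := b) (e := θ') t1 t2 (by linarith) (by linarith) hS
      (fun hh => hss hh ?_) (fun hh => hss hh ?_) ?_ h1
    · exact lam.refl _ (lam.rel_rat _ _ rab).1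
    · exact rab
    · apply mem_connectedComponentIn
      intro hh
      exact ht (lam.rel_rat _ _ hh).2

theorem orbit_finite {d : ℕ} (hd : 2 ≤ d) (lam : InvRatLam d) {f : Circle1} (hf : f ∈ ratC) :
    (Set.range fun m : ℕ => (md d)^[m] f).Finite := by
  have h := lam_Lm hd lam
  obtain ⟨x, rfl⟩ := c1_surj f
  obtain ⟨n, p, j, hp, hj⟩ := h.evper (x := x) (lam.refl _ hf)
  have heq : (md d)^[n + p] (x : Circle1) = (md d)^[n] (x : Circle1) := by
    rw [c1_mdn, c1_mdn, hj, c1_add_int]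
  have key : ∀ m : ℕ, ∃ k < n + p, (md d)^[m] (x : Circle1) = (md d)^[k] (x : Circle1) := by
    intro m
    induction m using Nat.strong_induction_on with
    | _ m ih =>
      by_cases hm : m < n + p
      · exact ⟨m, hm, rfl⟩
      · obtain ⟨k, hk, hk'⟩ := ih (m - p) (by omega)
        refine ⟨k, hk, ?_⟩
        rw [← hk']
        obtain ⟨l, rfl⟩ : ∃ l, m = l + (n + p) := ⟨m - (n + p), by omega⟩
        rw [iterate_add_apply, heq, ← iterate_add_apply]
        congr 1
        congr 1
        omega
  refine ((Finset.range (n + p)).finite_toSet.image (fun k => (md d)^[k] (x : Circle1))).subset ?_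
  rintro _ ⟨m, rfl⟩
  obtain ⟨k, hk, hk'⟩ := key m
  exact ⟨k, by simpa using hk, hk'.symm⟩

/-- Angles whose class meets the grand orbit. -/
def XX {d : ℕ} (lam : InvRatLam d) (F : Set Circle1) (x : ℝ) : Prop :=
  ∃ w, lam.rel (x : Circle1) w ∧ w ∈ grandOrbit d F

/-- Periodic representatives. -/
def PP {d : ℕ} (lam : InvRatLam d) (F : Set Circle1) : Set ℝ :=
  {x | (0 ≤ x ∧ x < 1) ∧ (∃ f ∈ F, ∃ m : ℕ, lam.rel (x : Circle1) ((md d)^[m] f)) ∧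
    ∃ (p : ℕ) (j : ℤ), 1 ≤ p ∧ (d : ℝ) ^ p * x = x + j}

theorem lam_exc {d : ℕ} (hd : 2 ≤ d) (lam : InvRatLam d) (F : Set Circle1) (hF : F.Finite)
    (hFrat : F ⊆ ratC) : Exc d (liftR lam.rel) (XX lam F) (PP lam F) where
  sat x y hxy hx := by
    obtain ⟨w, h1, h2⟩ := hx
    exact ⟨w, lam.trans _ _ _ (lam.symm _ _ hxy) h1, h2⟩
  fwd x hx := by
    obtain ⟨w, h1, n, m, f, hf, hfw⟩ := hx
    refine ⟨md d w, ?_, n, m + 1, f, hf, ?_⟩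
    · rw [← c1_md]; exact lam_fwd lam h1
    · rw [iterate_succ_apply', hfw, ← iterate_succ_apply (md d) n w, iterate_succ_apply']
  fin := by
    have h1 : (⋃ f ∈ F, Set.range fun m : ℕ => (md d)^[m] f).Finite :=
      hF.biUnion fun f hf => orbit_finite hd lam (hFrat hf)
    have h2 : (⋃ o ∈ (⋃ f ∈ F, Set.range fun m : ℕ => (md d)^[m] f), relClass lam.rel o).Finite :=
      h1.biUnion fun o _ => lam.finiteClass o
    refine Set.Finite.of_finite_image (f := fun x : ℝ => (x : Circle1)) (h2.subset ?_) ?_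
    · rintro _ ⟨x, ⟨-, ⟨f, hf, m, hm⟩, -⟩, rfl⟩
      simp only [mem_iUnion]
      exact ⟨_, ⟨f, hf, m, rfl⟩, lam.symm _ _ hm⟩
    · intro x hx y hy hxy
      by_contra hne
      rcases lt_or_gt_of_ne hne with h3 | h3
      · exact c1_ne h3 (by linarith [hx.1.1, hy.1.2]) hxy
      · exact c1_ne h3 (by linarith [hy.1.1, hx.1.2]) hxy.symm
  per s hs := by
    obtain ⟨-, ⟨f, hf, m, hm⟩, hp⟩ := hs
    exact ⟨lam.refl _ (lam.rel_rat _ _ hm).1, hp⟩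
  land x hx := by
    have h := lam_Lm hd lam
    obtain ⟨w, h1, n, m, f, hf, hfw⟩ := hx
    obtain ⟨n1, p, j, hp, hj⟩ := h.evper (x := x) (lam.refl _ (lam.rel_rat _ _ h1).1)
    refine ⟨max n n1, fun N hN => ?_⟩
    have hNn : n ≤ N := le_trans (le_max_left _ _) hN
    have hNn1 : n1 ≤ N := le_trans (le_max_right _ _) hN
    obtain ⟨i, i1, i2⟩ := exists_int_shift ((d : ℝ) ^ N * x) 0
    refine ⟨(d : ℝ) ^ N * x + i, ⟨⟨i1, by linarith⟩, ⟨f, hf, N - n + m, ?_⟩, p,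
      d ^ (N - n1) * j - i + d ^ p * i, hp, ?_⟩, -i, by push_cast; ring⟩
    · rw [c1_add_int, ← c1_mdn]
      have := lam_fwdn lam N h1
      convert this using 1
      obtain ⟨l, rfl⟩ : ∃ l, N = l + n := ⟨N - n, by omega⟩
      rw [Nat.add_sub_cancel, iterate_add_apply, iterate_add_apply, hfw]
    · obtain ⟨l, rfl⟩ : ∃ l, N = l + n1 := ⟨N - n1, by omega⟩
      rw [Nat.add_sub_cancel]
      push_cast
      rw [pow_add] at hj
      rw [pow_add]
      linear_combination (d : ℝ) ^ l * hj

theorem rel_dir {d : ℕ} (hd : 2 ≤ d) (lam : InvRatLam d) (hprim : PrimitiveLam d lam.rel)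
    (F : Set Circle1) (hF : F.Finite) (hFrat : F ⊆ ratC)
    (r : Circle1 → Circle1 → Prop) (hr : ClosedEqvRat r)
    (hres : ∀ a b, lam.rel a b → a ∉ grandOrbit d F → b ∉ grandOrbit d F → r a b)
    {s t : ℝ} (hst : liftR lam.rel s t) (ha : Lm.App (liftR lam.rel) s t) : liftR r s t := by
  have h := lam_Lm hd lam
  apply lift_closed hr.2.2.2.2 s t (lam.rel_rat _ _ hst).1 (lam.rel_rat _ _ hst).2
  intro ε hε
  obtain ⟨α, β, a1, a2, b1, b2, hR, hX⟩ := h.good_approx (lam_prim hd lam hprim)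
    (lam_exc hd lam F hF hFrat) (h.left hst) (h.right hst) ha hε
  refine ⟨s + α, t - β, ?_, ?_, hres _ _ hR ?_ ?_⟩
  · rw [abs_lt]; constructor <;> linarith
  · rw [abs_lt]; constructor <;> linarith
  · intro hh; exact hX ⟨_, h.left hR, hh⟩
  · intro hh; exact hX ⟨_, hR, hh⟩

/-- The last point of the class in `[x,y]` that is `r`-related to `x`, and its successor. -/
theorem last_step {d : ℕ} {R : ℝ → ℝ → Prop} (h : Lm d R) {q : ℝ → ℝ → Prop} {x y : ℝ}
    (hxy : x < y) (hR : R x y) (hq : q x x) (hnq : ¬ q x y) :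
    ∃ s t, x ≤ s ∧ s < t ∧ t ≤ y ∧ R x s ∧ R x t ∧ q x s ∧ ¬ q x t ∧
      ∀ z, s < z → z < t → ¬ R x z := by
  have hf := h.finI x x y
  obtain ⟨s, ⟨⟨s1, s2, s3⟩, s4⟩, smax⟩ := Set.exists_max_image
    {p | p ∈ {z | x ≤ z ∧ z ≤ y ∧ R x z} ∧ q x p} id
    (hf.subset fun p hp => hp.1) ⟨x, ⟨le_rfl, hxy.le, h.left hR⟩, hq⟩
  have sy : s < y := by
    refine lt_of_le_of_ne s2 ?_
    rintro rfl
    exact hnq s4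
  obtain ⟨t, ⟨⟨t1, t2, t3⟩, t4⟩, tmin⟩ := Set.exists_min_image
    {p | p ∈ {z | x ≤ z ∧ z ≤ y ∧ R x z} ∧ s < p} id
    (hf.subset fun p hp => hp.1) ⟨y, ⟨hxy.le, le_rfl, hR⟩, sy⟩
  refine ⟨s, t, s1, t4, t2, s3, t3, s4, ?_, ?_⟩
  · intro hh
    have := smax t ⟨⟨t1, t2, t3⟩, hh⟩
    simp only [id] at this
    linarith
  · intro z z1 z2 hz
    have := tmin z ⟨⟨by linarith, by linarith, hz⟩, z1⟩
    simp only [id] at this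
    linarith

/-- If `λ₀` is a non-trivial primitive `d`-invariant rational
lamination and `E` is the `m_d`-grand orbit of a finite set, then `λ₀` is the
smallest closed equivalence relation on `ℚ/ℤ` containing the restriction of `λ₀`
away from `E`. -/
theorem primitive_generated_by_restriction (d : ℕ) (hd : 2 ≤ d)
    (lam : InvRatLam d) (hnt : ∃ x y, lam.rel x y ∧ x ≠ y)
    (hprim : PrimitiveLam d lam.rel)
    (F : Set Circle1) (hF : F.Finite) (hFrat : F ⊆ ratC) :
    ∀ x y : Circle1, lam.rel x y ↔
      ∀ r : Circle1 → Circle1 → Prop, ClosedEqvRat r →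
        (∀ a b, lam.rel a b → a ∉ grandOrbit d F → b ∉ grandOrbit d F → r a b) →
        r x y := by
  intro X Y
  constructor
  swap
  · intro hall
    exact hall lam.rel ⟨lam.rel_rat, lam.refl, lam.symm, lam.trans, lam.closed'⟩
      (fun a b hab _ _ => hab)
  intro hXY r hr hres
  have h := lam_Lm hd lam
  by_contra hn
  obtain ⟨x, rfl⟩ := c1_surj X
  obtain ⟨y0, rfl⟩ := c1_surj Y
  obtain ⟨i, i1, i2⟩ := exists_int_shift y0 x
  rw [← c1_add_int y0 i] at hXY hn
  generalize y0 + i = y at *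
  obtain ⟨-, rrefl, rsymm, rtrans, -⟩ := id hr
  have hx : (x : Circle1) ∈ ratC := (lam.rel_rat _ _ hXY).1
  have hy : (y : Circle1) ∈ ratC := (lam.rel_rat _ _ hXY).2
  have hlt : x < y := by
    refine lt_of_le_of_ne i1 ?_
    rintro rfl
    exact hn (rrefl _ hx)
  have e1 : ((x + 1 : ℝ) : Circle1) = x := by
    have := c1_add_int x 1
    push_cast at this
    exact this
  obtain ⟨s, t, a1, a2, a3, a4, a5, a6, a7, a8⟩ :=
    last_step h (q := liftR r) hlt hXY (rrefl _ hx) hn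
  obtain ⟨s', t', b1, b2, b3, b4, b5, b6, b7, b8⟩ :=
    last_step h (q := liftR r) (x := y) (y := x + 1) i2
      (by unfold liftR; rw [e1]; exact lam.symm _ _ hXY) (rrefl _ hy)
      (by unfold liftR; rw [e1]; exact fun hh => hn (rsymm _ _ hh))
  have hst : liftR lam.rel s t := h.trans _ _ _ (h.symm _ _ a4) a5
  have hst' : liftR lam.rel s' t' := h.trans _ _ _ (h.symm _ _ b4) b5
  have hsy : liftR lam.rel s y := h.trans _ _ _ (h.symm _ _ a4) hXY
  rcases lam_prim hd lam hprim s t s' t' a2 (by linarith) b2 (by linarith) hst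
      (h.trans _ _ _ hsy b4) hst'
      (fun z z1 z2 hz => a8 z z1 z2 (h.trans _ _ _ a4 hz))
      (fun z z1 z2 hz => b8 z z1 z2 (h.trans _ _ _ (h.symm _ _ hsy) hz)) with hA | hA
  · exact a7 (rtrans _ _ _ a6 (rel_dir hd lam hprim F hF hFrat r hr hres hst hA))
  · exact b7 (rtrans _ _ _ b6 (rel_dir hd lam hprim F hF hFrat r hr hres hst' hA))
end
end
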